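/- Let Λ be a basic finite-dimensional algebra over an algebraically closed field, suppose d = Σ_{r=1}^s d^{(r)}, and let C_r be an irreducible component of Rep_{d^{(r)}}(Λ) for 1 ≤ r ≤ s. Then the Zariski closure of C_1 ⊕ ⋯ ⊕ C_s is an irreducible component of Rep_d(Λ) if and only if ext(C_i, C_j) = 0 for all i ≠ j. -/

import Mathlib

open Finset

/-! # Varieties of representations of a quiver with relations: basic setup -/

/-- The Zariski topology on the affine space `ι → K`: it is generated by the basic open
sets `D(p) = {x | p(x) ≠ 0}`, where `p` ranges over multivariate polynomials. -/
def zariskiTopology (ι K : Type) [CommSemiring K] : TopologicalSpace (ι → K) :=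
  TopologicalSpace.generateFrom
    {U | ∃ p : MvPolynomial ι K, U = {x | MvPolynomial.eval x p ≠ 0}}

/-- A finite quiver `Q`: vertices `Fin n`, arrows `Fin numArrows` with source and
target maps. -/
structure QuiverData where
  n : ℕ
  numArrows : ℕ
  src : Fin numArrows → Fin n
  tgt : Fin numArrows → Fin n

namespace QuiverData

variable (Q : QuiverData) (d : Fin Q.n → ℕ) (K : Type) [Field K]

/-- Index of the coordinates of the affine space of `d`-dimensional representations:
for each arrow `a` a matrix entry index in `Fin (d (tgt a)) × Fin (d (src a))`. -/
abbrev Coords := Σ a : Fin Q.numArrows, Fin (d (Q.tgt a)) × Fin (d (Q.src a))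

/-- The affine space of `d`-dimensional representations of `Q`:
a point `x` assigns to each arrow `a` a `d (tgt a) × d (src a)` matrix over `K`. -/
abbrev RepSpace := Coords Q d → K

/-- `RepSpace` carries the Zariski topology. -/
noncomputable instance instRepTop : TopologicalSpace (RepSpace Q d K) :=
  zariskiTopology (Coords Q d) K

/-- The underlying `K`-vector space `⊕ᵢ K^{dᵢ}` of any `d`-dimensional representation. -/
abbrev Carrier := (Σ i : Fin Q.n, Fin (d i)) → K

/-- The projection onto the component of the `i`-th vertex (action of the primitive
idempotent `eᵢ`). -/
def proj (i : Fin Q.n) : Carrier Q d K →ₗ[K] Carrier Q d K where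
  toFun m := fun jv => if jv.1 = i then m jv else 0
  map_add' u v := by
    funext jv; by_cases h : jv.1 = i <;> simp [h]
  map_smul' c u := by
    funext jv; by_cases h : jv.1 = i <;> simp [h]

/-- The action of the arrow `a` on the carrier space of the representation `x`. -/
noncomputable def arrowMap (x : RepSpace Q d K) (a : Fin Q.numArrows) :
    Carrier Q d K →ₗ[K] Carrier Q d K where
  toFun m := fun jv =>
    if h : jv.1 = Q.tgt a then
      ∑ w : Fin (d (Q.src a)), x ⟨a, (Fin.cast (congrArg d h) jv.2, w)⟩ * m ⟨Q.src a, w⟩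
    else 0
  map_add' u v := by
    funext jv
    by_cases h : jv.1 = Q.tgt a <;> simp [h, mul_add, Finset.sum_add_distrib]
  map_smul' c u := by
    funext jv
    by_cases h : jv.1 = Q.tgt a <;>
      simp [h, Finset.mul_sum, mul_comm, mul_left_comm, mul_assoc]

/-- The action of a word `w = [a_k, …, a_1]` of arrows on the representation `x`
(the arrow `a_1` acts first; non-composable words act as `0`). -/
noncomputable def wordMap (x : RepSpace Q d K) (w : List (Fin Q.numArrows)) :
    Module.End K (Carrier Q d K) :=
  (w.map fun a => (arrowMap Q d K x a : Module.End K (Carrier Q d K))).prod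

/-- The submodule `J^l · M_x` of the module `M_x`: the sum of the images of all words of
arrows of length `l` (for an admissible ideal, the radical acts through the arrows). -/
noncomputable def radPow (x : RepSpace Q d K) (l : ℕ) : Submodule K (Carrier Q d K) :=
  ⨆ w : {w : List (Fin Q.numArrows) // w.length = l},
    LinearMap.range (wordMap Q d K x w.1)

/-- The socle series of `M_x`: `socPow x l = soc_l(M_x)`. -/
noncomputable def socPow (x : RepSpace Q d K) : ℕ → Submodule K (Carrier Q d K)
  | 0 => ⨅ a, LinearMap.ker (arrowMap Q d K x a)
  | (l+1) => ⨅ a, (socPow x l).comap (arrowMap Q d K x a)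

/-- The dimension, at the vertex `i`, of a (vertex-graded) subspace `N`. -/
noncomputable def vdim (N : Submodule K (Carrier Q d K)) (i : Fin Q.n) : ℕ :=
  Module.finrank K (N.map (proj Q d K i))

/-- The radical layering `S(M_x) = (M/JM, JM/J²M, …, J^L M/J^{L+1} M)` of the module `M_x`,
recorded through the dimension vectors of its semisimple layers. -/
noncomputable def radLayering (L : ℕ) (x : RepSpace Q d K) :
    Fin (L+1) → Fin Q.n → ℕ :=
  fun l i => vdim Q d K (radPow Q d K x l) i - vdim Q d K (radPow Q d K x (l+1)) i

/-- The socle layering `S*(M_x) = (soc₀M, soc₁M/soc₀M, …)` of the module `M_x`, recorded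
through the dimension vectors of its semisimple layers. -/
noncomputable def socLayering (L : ℕ) (x : RepSpace Q d K) :
    Fin (L+1) → Fin Q.n → ℕ :=
  fun l i => vdim Q d K (socPow Q d K x l) i -
    (if (l : ℕ) = 0 then 0 else vdim Q d K (socPow Q d K x ((l : ℕ) - 1)) i)

end QuiverData

/-- The dominance order on semisimple sequences (recorded as sequences of dimension
vectors): `dominates S S'` means `S ≤ S'`, i.e. `⊕_{j≤l} S_j ⊆ ⊕_{j≤l} S'_j` for all `l`. -/
def dominates {n L : ℕ} (S S' : Fin (L+1) → Fin n → ℕ) : Prop :=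
  ∀ (l : Fin (L+1)) (i : Fin n),
    ∑ j ∈ Finset.univ.filter (fun j => j ≤ l), S j i ≤
      ∑ j ∈ Finset.univ.filter (fun j => j ≤ l), S' j i

/-- A semisimple sequence has dimension vector `d` if its layers' dimension vectors sum
to `d`. -/
def hasDimVec {n L : ℕ} (S : Fin (L+1) → Fin n → ℕ) (d : Fin n → ℕ) : Prop :=
  ∀ i, ∑ l, S l i = d i

namespace QuiverData

variable (Q : QuiverData) (d : Fin Q.n → ℕ) (K : Type) [Field K]

/-- Evaluation of a formal noncommutative polynomial in the vertices (`Sum.inl`) and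
arrows (`Sum.inr`) of `Q` on the representation `x`; an element of the path algebra `KQ`
is represented by such a polynomial. -/
noncomputable def evalRel (x : RepSpace Q d K) :
    FreeAlgebra K (Fin Q.n ⊕ Fin Q.numArrows) →ₐ[K] Module.End K (Carrier Q d K) :=
  FreeAlgebra.lift K
    (Sum.elim (fun i => (proj Q d K i : Module.End K (Carrier Q d K)))
      (fun a => (arrowMap Q d K x a : Module.End K (Carrier Q d K))))

/-- The affine variety `Rep_d(Λ)` for `Λ = KQ/I`, where the ideal `I` is generated by the
set `R` of relations: the set of points of `RepSpace` annihilating every relation. -/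
def RepVar (R : Set (FreeAlgebra K (Fin Q.n ⊕ Fin Q.numArrows))) :
    Set (RepSpace Q d K) :=
  {x | ∀ r ∈ R, evalRel Q d K x r = 0}

/-- The affine variety `Rep_d(Λ)` for the truncated path algebra
`Λ = KQ/⟨all paths of length L+1⟩`. -/
def TruncRepVar (L : ℕ) : Set (RepSpace Q d K) :=
  {x | ∀ w : List (Fin Q.numArrows), w.length = L + 1 → wordMap Q d K x w = 0}

/-- A submodule of `M_x`, i.e. a subspace stable under the arrows and the vertex
idempotents. -/
def Stable (x : RepSpace Q d K) (N : Submodule K (Carrier Q d K)) : Prop :=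
  (∀ a, N.map (arrowMap Q d K x a) ≤ N) ∧ ∀ i, N.map (proj Q d K i) ≤ N

/-- A submodule `N` of `M_x` is indecomposable (as a module). -/
def IndecompSub (x : RepSpace Q d K) (N : Submodule K (Carrier Q d K)) : Prop :=
  N ≠ ⊥ ∧ ∀ N₁ N₂ : Submodule K (Carrier Q d K),
    Stable Q d K x N₁ → Stable Q d K x N₂ → N₁ ≤ N → N₂ ≤ N →
    N₁ ⊔ N₂ = N → N₁ ⊓ N₂ = ⊥ → N₁ = ⊥ ∨ N₂ = ⊥

/-- The module `M_x` is indecomposable. -/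
def IndecompRep (x : RepSpace Q d K) : Prop :=
  IndecompSub Q d K x ⊤

/-- The module `M_x` is uniserial: its submodules form a chain. -/
def UniserialRep (x : RepSpace Q d K) : Prop :=
  ∀ N₁ N₂ : Submodule K (Carrier Q d K),
    Stable Q d K x N₁ → Stable Q d K x N₂ → N₁ ≤ N₂ ∨ N₂ ≤ N₁

/-- `M_x` decomposes as a direct sum of `s` indecomposable submodules whose dimension
vectors are `D 0, …, D (s-1)`. -/
def DecompWith (x : RepSpace Q d K) (s : ℕ) (D : Fin s → Fin Q.n → ℕ) : Prop :=
  ∃ N : Fin s → Submodule K (Carrier Q d K),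
    (∀ r, Stable Q d K x (N r)) ∧
    (∀ r, Disjoint (N r) (⨆ t, ⨆ (_ : t ≠ r), N t)) ∧
    (⨆ r, N r) = ⊤ ∧
    (∀ r, IndecompSub Q d K x (N r)) ∧
    ∀ r i, vdim Q d K (N r) i = D r i

/-- A homomorphism of representations `M_x → M_y` (for possibly different dimension
vectors): a linear map commuting with the arrow actions and the vertex projections. -/
def RepHom (dx dy : Fin Q.n → ℕ) (x : RepSpace Q dx K) (y : RepSpace Q dy K)
    (φ : Carrier Q dx K →ₗ[K] Carrier Q dy K) : Prop :=
  (∀ a, φ ∘ₗ arrowMap Q dx K x a = arrowMap Q dy K y a ∘ₗ φ) ∧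
  ∀ i, φ ∘ₗ proj Q dx K i = proj Q dy K i ∘ₗ φ

/-- The submodule `N` of `M_x` is isomorphic, as a representation, to `M_y`. -/
def SubrepIso (dy : Fin Q.n → ℕ) (x : RepSpace Q d K)
    (N : Submodule K (Carrier Q d K)) (y : RepSpace Q dy K) : Prop :=
  ∃ φ : Carrier Q d K →ₗ[K] Carrier Q dy K,
    N ⊓ LinearMap.ker φ = ⊥ ∧ N.map φ = ⊤ ∧
    (∀ a, ∀ m ∈ N, φ (arrowMap Q d K x a m) = arrowMap Q dy K y a (φ m)) ∧
    (∀ i, ∀ m ∈ N, φ (proj Q d K i m) = proj Q dy K i (φ m))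

/-- The representations `M_x` and `M_y` are isomorphic; the isomorphism classes are
exactly the orbits of the `GL(d)`-action. -/
def IsoRep (x y : RepSpace Q d K) : Prop :=
  ∃ φ : Carrier Q d K ≃ₗ[K] Carrier Q d K,
    (∀ a m, φ (arrowMap Q d K x a m) = arrowMap Q d K y a (φ m)) ∧
    ∀ i m, φ (proj Q d K i m) = proj Q d K i (φ m)

/-- The `GL(d)`-orbit of the point `x`, i.e. the set of points encoding modules
isomorphic to `M_x`. -/
def orbitSet (x : RepSpace Q d K) : Set (RepSpace Q d K) :=
  {y | IsoRep Q d K x y}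

/-- Given a family `P` of varieties `Rep_dv(Λ)` (one for every dimension vector `dv`),
`Ext¹_Λ(M_x, M_y) = 0`: every extension `0 → M_y → E → M_x → 0` of `Λ`-modules splits. -/
def Ext1Zero (P : ∀ dv : Fin Q.n → ℕ, Set (RepSpace Q dv K))
    (dx dy : Fin Q.n → ℕ) (x : RepSpace Q dx K) (y : RepSpace Q dy K) : Prop :=
  ∀ z ∈ P (fun i => dx i + dy i),
    ∀ (ι : Carrier Q dy K →ₗ[K] Carrier Q (fun i => dx i + dy i) K)
      (π : Carrier Q (fun i => dx i + dy i) K →ₗ[K] Carrier Q dx K),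
      RepHom Q K dy (fun i => dx i + dy i) y z ι →
      RepHom Q K (fun i => dx i + dy i) dx z x π →
      Function.Injective ι → Function.Surjective π →
      LinearMap.ker π = LinearMap.range ι →
      ∃ σ : Carrier Q dx K →ₗ[K] Carrier Q (fun i => dx i + dy i) K,
        RepHom Q K dx (fun i => dx i + dy i) x z σ ∧ π ∘ₗ σ = LinearMap.id

/-- The direct sum `C₁ ⊕ ⋯ ⊕ C_s` of subvarieties `C_r ⊆ Rep_{D r}(Λ)`: the set of
points `x ∈ Rep_d(Λ)` whose module decomposes as `M_x ≅ ⊕_r M^{(r)}` with `M^{(r)}`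
encoded by a point of `C_r`. -/
def DirectSumSet (s : ℕ) (D : Fin s → Fin Q.n → ℕ)
    (Cs : ∀ r : Fin s, Set (RepSpace Q (D r) K)) : Set (RepSpace Q d K) :=
  {x | ∃ N : Fin s → Submodule K (Carrier Q d K),
    (∀ r, Stable Q d K x (N r)) ∧
    (∀ r, Disjoint (N r) (⨆ t, ⨆ (_ : t ≠ r), N t)) ∧
    (⨆ r, N r) = ⊤ ∧
    ∀ r, ∃ y ∈ Cs r, SubrepIso Q d K (D r) x (N r) y}

/-- The endomorphism space `End_Λ(M_x)` of the module `M_x`. -/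
def endSpace (x : RepSpace Q d K) :
    Submodule K (Carrier Q d K →ₗ[K] Carrier Q d K) where
  carrier := {φ | RepHom Q K d d x x φ}
  add_mem' := by
    intro φ ψ hφ hψ
    exact ⟨fun a => by rw [LinearMap.add_comp, LinearMap.comp_add, hφ.1 a, hψ.1 a],
      fun i => by rw [LinearMap.add_comp, LinearMap.comp_add, hφ.2 i, hψ.2 i]⟩
  zero_mem' := by
    exact ⟨fun a => by simp, fun i => by simp⟩
  smul_mem' := by
    intro c φ hφ
    exact ⟨fun a => by rw [LinearMap.smul_comp, LinearMap.comp_smul, hφ.1 a],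
      fun i => by rw [LinearMap.smul_comp, LinearMap.comp_smul, hφ.2 i]⟩

/-- A word of arrows is a (composable) path when read in function-composition order. -/
def IsPathWord (w : List (Fin Q.numArrows)) : Prop :=
  List.Chain' (fun a b => Q.src a = Q.tgt b) w

/-- The quiver `Q` has no oriented cycles. -/
def Acyclic : Prop :=
  ∀ (a : Fin Q.numArrows) (w : List (Fin Q.numArrows)),
    IsPathWord Q (a :: w) →
      Q.tgt a ≠ Q.src ((a :: w).getLast (List.cons_ne_nil a w))

/-- A filtration `M_x = F 0 ⊇ F 1 ⊇ ⋯ ⊇ F (L+1) = 0` by submodules which is governed by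
the semisimple sequence `S`: each layer `F l / F (l+1)` is semisimple, isomorphic to `S l`. -/
def Governed (L : ℕ) (x : RepSpace Q d K) (S : Fin (L+1) → Fin Q.n → ℕ)
    (F : Fin (L+2) → Submodule K (Carrier Q d K)) : Prop :=
  F 0 = ⊤ ∧ F (Fin.last (L+1)) = ⊥ ∧
  (∀ l : Fin (L+1), F l.succ ≤ F l.castSucc) ∧
  (∀ (l : Fin (L+2)) (i : Fin Q.n), (F l).map (proj Q d K i) ≤ F l) ∧
  (∀ (l : Fin (L+1)) (a : Fin Q.numArrows),
      (F l.castSucc).map (arrowMap Q d K x a) ≤ F l.succ) ∧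
  ∀ (l : Fin (L+1)) (i : Fin Q.n),
      vdim Q d K (F l.castSucc) i = S l i + vdim Q d K (F l.succ) i

/-- `Filt S`: the set of points whose module has a filtration governed by `S`. -/
def FiltSet (L : ℕ) (S : Fin (L+1) → Fin Q.n → ℕ) : Set (RepSpace Q d K) :=
  {x | ∃ F, Governed Q d K L x S F}

/-- `Γ(M_x)`: the number of semisimple sequences which are realizable (i.e. occur as the
radical layering of a module in the variety `P`) and which govern some filtration of `M_x`. -/
noncomputable def gammaCount (L : ℕ) (P : Set (RepSpace Q d K))
    (x : RepSpace Q d K) : ℕ :=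
  Set.ncard {S : Fin (L+1) → Fin Q.n → ℕ |
    (∃ y ∈ P, radLayering Q d K L y = S) ∧ ∃ F, Governed Q d K L x S F}

/-- `Sstar` is the generic (= minimal, attained) socle layering of the modules in `W`. -/
def GenSoc (L : ℕ) (W : Set (RepSpace Q d K))
    (Sstar : Fin (L+1) → Fin Q.n → ℕ) : Prop :=
  (∀ x ∈ W, dominates Sstar (socLayering Q d K L x)) ∧
  ∃ x ∈ W, socLayering Q d K L x = Sstar

end QuiverData

namespace QuiverData

variable (Q : QuiverData)

/-- The `i`-th entry of the row vector `e·A` (over `ℤ`), where `A` is the adjacency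
matrix of `Q`: the sum of `e (src a)` over all arrows `a` ending at `i`. -/
def inflowZ (e : Fin Q.n → ℤ) (i : Fin Q.n) : ℤ :=
  ∑ a ∈ Finset.univ.filter (fun a => Q.tgt a = i), e (Q.src a)

/-- The `i`-th entry of the row vector `e·B` (over `ℤ`), where `B` is the transpose of
the adjacency matrix of `Q`. -/
def outflowZ (e : Fin Q.n → ℤ) (i : Fin Q.n) : ℤ :=
  ∑ a ∈ Finset.univ.filter (fun a => Q.src a = i), e (Q.tgt a)

/-- Partial sums `t⁽⁰⁾ + ⋯ + t⁽ˡ⁾` of the recursion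
`t⁽⁰⁾ = sup{0, d − d·A}`, `t⁽ˡ⁺¹⁾ = sup{0, (d − ∑_{k≤l} t⁽ᵏ⁾) − (d − ∑_{k≤l} t⁽ᵏ⁾)·A}`
(computed componentwise). -/
def cumLayer (dz : Fin Q.n → ℤ) : ℕ → Fin Q.n → ℤ
  | 0 => fun i => max 0 (dz i - inflowZ Q dz i)
  | (l+1) => fun i =>
      cumLayer dz l i +
        max 0 ((dz i - cumLayer dz l i) -
          inflowZ Q (fun j => dz j - cumLayer dz l j) i)

/-- The positive part `∑ᵢ eᵢ fᵢ` of the Euler form of `Q`. -/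
def eulerHomPart (e f : Fin Q.n → ℕ) : ℕ := ∑ i, e i * f i

/-- The negative part `∑_{α} e_{src α} f_{tgt α}` of the Euler form of `Q`, so that
`⟨e, f⟩ = eulerHomPart e f − eulerExtPart e f`. -/
def eulerExtPart (e f : Fin Q.n → ℕ) : ℕ :=
  ∑ a, e (Q.src a) * f (Q.tgt a)

end QuiverData

/-- The quiver with a single vertex and `r` loops. -/
def QuiverData.loopQuiver (r : ℕ) : QuiverData :=
  ⟨1, r, fun _ => 0, fun _ => 0⟩

namespace QuiverData

variable (Q : QuiverData) (d : Fin Q.n → ℕ) (K : Type) [Field K]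

/-- The variety `Rep_d(Λ)` for `Λ = KQ/⟨Rels⟩`, regarded as a topological space with the
(subspace) Zariski topology. -/
abbrev GenV (Rels : Set (FreeAlgebra K (Fin Q.n ⊕ Fin Q.numArrows))) :=
  {y : RepSpace Q d K // y ∈ RepVar Q d K Rels}

/-- The variety `Rep_d(Λ)` for the truncated path algebra
`Λ = KQ/⟨paths of length L+1⟩`, regarded as a topological space. -/
abbrev TruncV (L : ℕ) := {y : RepSpace Q d K // y ∈ TruncRepVar Q d K L}

end QuiverData

/-!
Necessity. A non-split extension has a strictly smaller endomorphism algebra than the direct sum of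
its end terms. If `Ext¹` never vanishes on `C r × C u`, then a point of the direct sum set can be
moved along the line spanned by a non-trivial cocycle, which strictly decreases the dimension of
its endomorphism algebra; starting from a point where this dimension is minimal, upper
semicontinuity shows that the closure of the direct sum set contains no nonempty open subset, so it
is not an irreducible component.

Sufficiency. Let `V` be irreducible and contain the direct sum set, and choose a sum `⊕ y r` of
generic points. Krull's intersection theorem detects the prime ideal of `V` on Artinian
thickenings of `⊕ y r` inside `V`. As `Ext¹(y r, y u) = 0` for `r ≠ u`, the off-diagonal blocks of
such a thickening can be removed one infinitesimal step at a time, so it splits into deformations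
of the `y r`. These need not lie on the reduced components `C r`, since the scheme of
representations may be non-reduced; but by the Nullstellensatz a polynomial `f` vanishing on the
direct sum set has a power, with an exponent independent of the thickening, that vanishes on all of
them. Hence `f` vanishes on `V`.
-/

namespace RepVariety

open QuiverData Topology

/-! ### Endomorphisms of non-split extensions -/

section ShortExactSequences

variable {K Λ : Type*} [Field K] [Ring Λ] [Algebra K Λ]
variable {E N X Y M : Type*}
  [AddCommGroup E] [Module K E] [Module Λ E] [IsScalarTower K Λ E]
  [AddCommGroup N] [Module K N] [Module Λ N] [IsScalarTower K Λ N]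
  [AddCommGroup X] [Module K X] [Module Λ X] [IsScalarTower K Λ X]
  [AddCommGroup Y] [Module K Y] [Module Λ Y] [IsScalarTower K Λ Y]
  [AddCommGroup M] [Module K M] [Module Λ M] [IsScalarTower K Λ M]

instance finite_linearMap_of_algebra [FiniteDimensional K Y] [FiniteDimensional K E] :
    Module.Finite K (Y →ₗ[Λ] E) :=
  Module.Finite.of_injective (LinearMap.restrictScalarsₗ K Λ Y E K)
    (LinearMap.restrictScalars_injective K)

instance finite_submodule_of_algebra [FiniteDimensional K E] (p : Submodule Λ E) :
    Module.Finite K p :=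
  Module.Finite.of_injective (p.subtype.restrictScalars K) p.injective_subtype

lemma finrank_end_eq_of_linearEquiv_prod (split : (N × X) ≃ₗ[Λ] M) :
    Module.finrank K (M →ₗ[Λ] M) = Module.finrank K (N × X →ₗ[Λ] N × X) :=
  LinearEquiv.finrank_eq
    { split.symm.arrowCongrAddEquiv split.symm with
      map_smul' := fun c f => LinearMap.ext fun v =>
        (split.symm : M →ₗ[Λ] N × X).map_smul_of_tower c (f (split v)) }

variable [FiniteDimensional K E] [FiniteDimensional K Y] {ι : N →ₗ[Λ] E} {π : E →ₗ[Λ] X}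

lemma finrank_hom_right_eq (hι : Function.Injective ι) (h : Function.Exact ι π) :
    Module.finrank K (Y →ₗ[Λ] E) = Module.finrank K (Y →ₗ[Λ] N) +
      Module.finrank K (LinearMap.range (LinearMap.compRight K π : (Y →ₗ[Λ] E) →ₗ[K] _)) := by
  have ker_eq : LinearMap.ker (LinearMap.compRight K π : (Y →ₗ[Λ] E) →ₗ[K] _) =
      LinearMap.range (LinearMap.compRight K ι : (Y →ₗ[Λ] N) →ₗ[K] _) := by
    ext f
    rw [LinearMap.mem_ker, LinearMap.mem_range]
    refine ⟨fun hf => ?_, ?_⟩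
    · have range_le : ∀ y, f y ∈ LinearMap.range ι := fun y =>
        (h (f y)).1 (LinearMap.congr_fun hf y)
      refine ⟨(LinearEquiv.ofInjective ι hι).symm.toLinearMap ∘ₗ f.codRestrict _ range_le, ?_⟩
      ext y
      exact congrArg Subtype.val ((LinearEquiv.ofInjective ι hι).apply_symm_apply ⟨f y, range_le y⟩)
    · rintro ⟨g, rfl⟩
      ext y
      exact h.apply_apply_eq_zero (g y)
  have injective : Function.Injective (LinearMap.compRight K ι : (Y →ₗ[Λ] N) →ₗ[K] _) :=
    fun f g hfg => LinearMap.ext fun y => hι (LinearMap.congr_fun hfg y)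
  rw [← LinearMap.finrank_range_of_inj injective, ← ker_eq, add_comm,
    LinearMap.finrank_range_add_finrank_ker]

variable [FiniteDimensional K X]

lemma finrank_hom_right_le (hι : Function.Injective ι) (h : Function.Exact ι π) :
    Module.finrank K (Y →ₗ[Λ] E) ≤
      Module.finrank K (Y →ₗ[Λ] N) + Module.finrank K (Y →ₗ[Λ] X) := by
  rw [finrank_hom_right_eq hι h]
  exact Nat.add_le_add_left (Submodule.finrank_le _) _

lemma finrank_hom_right_lt (hι : Function.Injective ι) (h : Function.Exact ι π)
    (nonsplit : ∀ s : X →ₗ[Λ] E, π ∘ₗ s ≠ LinearMap.id) :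
    Module.finrank K (X →ₗ[Λ] E) <
      Module.finrank K (X →ₗ[Λ] N) + Module.finrank K (X →ₗ[Λ] X) := by
  rw [finrank_hom_right_eq hι h]
  refine Nat.add_lt_add_left (Submodule.finrank_lt fun range_eq_top => ?_) _
  obtain ⟨s, hs⟩ := LinearMap.range_eq_top.1 range_eq_top LinearMap.id
  exact nonsplit s hs

variable [FiniteDimensional K N]

lemma finrank_hom_left_le (hπ : Function.Surjective π) (h : Function.Exact ι π) :
    Module.finrank K (E →ₗ[Λ] Y) ≤
      Module.finrank K (N →ₗ[Λ] Y) + Module.finrank K (X →ₗ[Λ] Y) := by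
  let restrict : (E →ₗ[Λ] Y) →ₗ[K] (N →ₗ[Λ] Y) :=
    { toFun := fun f => f ∘ₗ ι, map_add' := fun _ _ => rfl, map_smul' := fun _ _ => rfl }
  let inflate : (X →ₗ[Λ] Y) →ₗ[K] (E →ₗ[Λ] Y) :=
    { toFun := fun f => f ∘ₗ π, map_add' := fun _ _ => rfl, map_smul' := fun _ _ => rfl }
  have ker_le : LinearMap.ker restrict ≤ LinearMap.range inflate := by
    intro f hf
    have ker_π_le : LinearMap.ker π ≤ LinearMap.ker f := by
      intro m hm
      obtain ⟨n, rfl⟩ := (h m).1 hm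
      exact LinearMap.congr_fun hf n
    refine ⟨(LinearMap.ker π).liftQ f ker_π_le ∘ₗ
      (π.quotKerEquivOfSurjective hπ).symm.toLinearMap, LinearMap.ext fun m => ?_⟩
    change (LinearMap.ker π).liftQ f ker_π_le ((π.quotKerEquivOfSurjective hπ).symm (π m)) = f m
    rw [LinearMap.quotKerEquivOfSurjective_symm_apply, Submodule.liftQ_apply]
  rw [← LinearMap.finrank_range_add_finrank_ker restrict]
  exact Nat.add_le_add (Submodule.finrank_le _)
    ((Submodule.finrank_mono ker_le).trans (LinearMap.finrank_range_le _))

lemma finrank_hom_prod_left :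
    Module.finrank K (N × X →ₗ[Λ] Y) =
      Module.finrank K (N →ₗ[Λ] Y) + Module.finrank K (X →ₗ[Λ] Y) := by
  rw [← (LinearMap.coprodEquiv K).finrank_eq, Module.finrank_prod]

lemma finrank_hom_prod_right :
    Module.finrank K (Y →ₗ[Λ] N × X) =
      Module.finrank K (Y →ₗ[Λ] N) + Module.finrank K (Y →ₗ[Λ] X) := by
  rw [← (LinearMap.prodEquiv K).finrank_eq, Module.finrank_prod]

theorem finrank_end_lt_of_nonsplit (hι : Function.Injective ι) (hπ : Function.Surjective π)
    (h : Function.Exact ι π) (nonsplit : ∀ s : X →ₗ[Λ] E, π ∘ₗ s ≠ LinearMap.id)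
    (split : (N × X) ≃ₗ[Λ] M) :
    Module.finrank K (E →ₗ[Λ] E) < Module.finrank K (M →ₗ[Λ] M) := by
  calc Module.finrank K (E →ₗ[Λ] E)
      ≤ Module.finrank K (N →ₗ[Λ] E) + Module.finrank K (X →ₗ[Λ] E) := finrank_hom_left_le hπ h
    _ < (Module.finrank K (N →ₗ[Λ] N) + Module.finrank K (N →ₗ[Λ] X)) +
          (Module.finrank K (X →ₗ[Λ] N) + Module.finrank K (X →ₗ[Λ] X)) :=
        Nat.add_lt_add_of_le_of_lt (finrank_hom_right_le hι h) (finrank_hom_right_lt hι h nonsplit)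
    _ = Module.finrank K (N × X →ₗ[Λ] N × X) := by
        rw [finrank_hom_prod_left, finrank_hom_prod_right, finrank_hom_prod_right]
    _ = Module.finrank K (M →ₗ[Λ] M) := (finrank_end_eq_of_linearEquiv_prod split).symm

end ShortExactSequences

section MatrixRepresentations

variable {K Λ : Type*} [Field K] [Ring Λ] [Algebra K Λ]
variable {I J : Type*} [Fintype I] [DecidableEq I] [Fintype J] [DecidableEq J]

/-- The `Λ`-module with underlying space `K ^ I` on which `a : Λ` acts by the matrix `ρ a`. -/
def RepModule (_ρ : Λ →ₐ[K] Matrix I I K) : Type _ := I → K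

namespace RepModule

variable (ρ : Λ →ₐ[K] Matrix I I K) (σ : Λ →ₐ[K] Matrix J J K)

instance : AddCommGroup (RepModule ρ) := inferInstanceAs (AddCommGroup (I → K))

instance : Module K (RepModule ρ) := inferInstanceAs (Module K (I → K))

instance : FiniteDimensional K (RepModule ρ) := inferInstanceAs (FiniteDimensional K (I → K))

instance : Module Λ (RepModule ρ) :=
  Module.compHom (I → K) ((Matrix.toLinAlgEquiv' (R := K)).toAlgHom.comp ρ).toRingHom

variable {ρ}

instance : IsScalarTower K Λ (RepModule ρ) where
  smul_assoc c a v :=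
    (congrArg (Matrix.mulVec · v) (map_smul ρ c a)).trans (Matrix.smul_mulVec c (ρ a) v)

end RepModule

/-- The matrices `H` with `σ a * H = H * ρ a` for all `a : Λ`, that is, the homomorphisms from
`RepModule ρ` to `RepModule σ`. -/
def intertwiners (ρ : Λ →ₐ[K] Matrix I I K) (σ : Λ →ₐ[K] Matrix J J K) :
    Submodule K (Matrix J I K) where
  carrier := {H | ∀ a, σ a * H = H * ρ a}
  add_mem' hG hH a := by rw [Matrix.mul_add, Matrix.add_mul, hG a, hH a]
  zero_mem' a := by rw [Matrix.mul_zero, Matrix.zero_mul]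
  smul_mem' c H hH a := by rw [Matrix.mul_smul, Matrix.smul_mul, hH a]

variable {ρ : Λ →ₐ[K] Matrix I I K} {σ : Λ →ₐ[K] Matrix J J K}

/-- The homomorphism of modules given by an intertwining matrix. -/
def homOfIntertwiner (H : intertwiners ρ σ) : RepModule ρ →ₗ[Λ] RepModule σ where
  toFun := H.1.mulVec
  map_add' := Matrix.mulVec_add H.1
  map_smul' a v := (Matrix.mulVec_mulVec v H.1 (ρ a)).trans
    ((congrArg (Matrix.mulVec · v) (H.2 a).symm).trans (Matrix.mulVec_mulVec v (σ a) H.1).symm)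

/-- The matrix of a homomorphism of modules. -/
noncomputable def homMatrix (f : RepModule ρ →ₗ[Λ] RepModule σ) : Matrix J I K :=
  LinearMap.toMatrix' (f.restrictScalars K : (I → K) →ₗ[K] (J → K))

lemma homMatrix_mulVec (f : RepModule ρ →ₗ[Λ] RepModule σ) (v : RepModule ρ) :
    (homMatrix f).mulVec v = f v :=
  LinearMap.toMatrix'_mulVec (f.restrictScalars K : (I → K) →ₗ[K] (J → K)) v

lemma homMatrix_mem_intertwiners (f : RepModule ρ →ₗ[Λ] RepModule σ) :
    homMatrix f ∈ intertwiners ρ σ := fun a => by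
  refine Matrix.ext_of_mulVec_single fun i => ?_
  rw [← Matrix.mulVec_mulVec, ← Matrix.mulVec_mulVec]
  exact ((congrArg _ (homMatrix_mulVec f _)).trans (f.map_smul a _).symm).trans
    (homMatrix_mulVec f _).symm

/-- Homomorphisms between the modules of two matrix representations are the intertwiners. -/
noncomputable def homEquivIntertwiners :
    (RepModule ρ →ₗ[Λ] RepModule σ) ≃ₗ[K] intertwiners ρ σ where
  toFun f := ⟨homMatrix f, homMatrix_mem_intertwiners f⟩
  map_add' f g := Subtype.ext
    (map_add LinearMap.toMatrix' (f.restrictScalars K) (g.restrictScalars K))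
  map_smul' c f := Subtype.ext (map_smul LinearMap.toMatrix' c (f.restrictScalars K))
  invFun := homOfIntertwiner
  left_inv f := LinearMap.ext fun v => homMatrix_mulVec f v
  right_inv H := Subtype.ext (Matrix.ext_of_mulVec_single fun _ =>
    homMatrix_mulVec (homOfIntertwiner H) _)

end MatrixRepresentations

section Cocycles

variable {K Λ : Type*} [Field K] [Ring Λ] [Algebra K Λ]
variable {I J V : Type*} [Fintype I] [DecidableEq I] [Fintype J] [DecidableEq J]

/-- A Hochschild `1`-cocycle of `Λ` with values in `Hom(K ^ I, K ^ J)`; it encodes an extension of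
`RepModule ρ` by `RepModule σ`. -/
def IsCocycle (ρ : Λ →ₐ[K] Matrix I I K) (σ : Λ →ₐ[K] Matrix J J K)
    (δ : Λ →ₗ[K] Matrix J I K) : Prop :=
  ∀ a b, δ (a * b) = σ a * δ b + δ a * ρ b

/-- The vanishing of `Ext¹` from `RepModule ρ` to `RepModule σ`, expressed by cocycles: each one is
inner. Only cocycles that vanish on the vertex idempotents `e i` are considered; every extension is
given by such a cocycle. -/
def ExtVanishes (e : V → Λ) (ρ : Λ →ₐ[K] Matrix I I K) (σ : Λ →ₐ[K] Matrix J J K) : Prop :=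
  ∀ δ, IsCocycle ρ σ δ → (∀ i, δ (e i) = 0) → ∃ H : Matrix J I K, ∀ a, δ a = σ a * H - H * ρ a

variable {ρ : Λ →ₐ[K] Matrix I I K} {σ : Λ →ₐ[K] Matrix J J K} {δ : Λ →ₗ[K] Matrix J I K}

lemma IsCocycle.map_one (hδ : IsCocycle ρ σ δ) : δ 1 = 0 := by
  have h := hδ 1 1
  rwa [mul_one, _root_.map_one σ, _root_.map_one ρ, Matrix.one_mul, Matrix.mul_one,
    left_eq_add] at h

lemma IsCocycle.smul (hδ : IsCocycle ρ σ δ) (t : K) : IsCocycle ρ σ (t • δ) := fun a b => by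
  rw [LinearMap.smul_apply, LinearMap.smul_apply, LinearMap.smul_apply, hδ, Matrix.mul_smul,
    Matrix.smul_mul, smul_add]

/-- The extension of `ρ` by `σ` defined by a cocycle. -/
def extensionRep (hδ : IsCocycle ρ σ δ) : Λ →ₐ[K] Matrix (J ⊕ I) (J ⊕ I) K :=
  AlgHom.ofLinearMap
    { toFun := fun a => Matrix.fromBlocks (σ a) (δ a) 0 (ρ a)
      map_add' := fun a b => by simp [Matrix.fromBlocks_add]
      map_smul' := fun c a => by simp [Matrix.fromBlocks_smul] }
    (by simp [hδ.map_one])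
    fun a b => by simp [Matrix.fromBlocks_multiply, hδ a b]

lemma extensionRep_apply (hδ : IsCocycle ρ σ δ) (a : Λ) :
    extensionRep hδ a = Matrix.fromBlocks (σ a) (δ a) 0 (ρ a) := rfl

variable {δ : Λ →ₗ[K] Matrix I I K}

/-- The representation `ρ + δ`, for a cocycle `δ` of square zero. -/
def perturb (hδ : IsCocycle ρ ρ δ) (sq : ∀ a b, δ a * δ b = 0) : Λ →ₐ[K] Matrix I I K :=
  AlgHom.ofLinearMap (ρ.toLinearMap + δ) (by simp [hδ.map_one])
    fun a b => by simp [hδ a b, add_mul, mul_add, sq a b]; abel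

lemma perturb_apply (hδ : IsCocycle ρ ρ δ) (sq : ∀ a b, δ a * δ b = 0) (a : Λ) :
    perturb hδ sq a = ρ a + δ a := rfl

lemma eq_inner_of_mem_intertwiners_perturb (hδ : IsCocycle ρ ρ δ) (sq : ∀ a b, δ a * δ b = 0)
    {q G : Matrix I I K} (mul_q : ∀ a, δ a * q = δ a) (q_G : q * G = q)
    (hG : G ∈ intertwiners ρ (perturb hδ sq)) (a : Λ) : δ a = ρ a * -G - -G * ρ a := by
  have intertwine : (ρ a + δ a) * G = G * ρ a := hG a
  rw [add_mul, ← mul_q a, mul_assoc, q_G, mul_q] at intertwine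
  rw [mul_neg, neg_mul, ← intertwine]
  abel

/-- Here `δ` encodes an extension of the direct summand `im q` of `RepModule ρ` by the
complementary summand `ker q`. -/
theorem finrank_intertwiners_perturb_lt (hδ : IsCocycle ρ ρ δ) (sq : ∀ a b, δ a * δ b = 0)
    {q : Matrix I I K} (q_mem : q ∈ intertwiners ρ ρ) (q_idem : q * q = q)
    (mul_q : ∀ a, δ a * q = δ a) (q_mul : ∀ a, q * δ a = 0)
    (not_inner : ¬ ∃ H, ∀ a, δ a = ρ a * H - H * ρ a) :
    Module.finrank K (intertwiners (perturb hδ sq) (perturb hδ sq)) <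
      Module.finrank K (intertwiners ρ ρ) := by
  let f : RepModule ρ →ₗ[Λ] RepModule ρ := homOfIntertwiner ⟨q, q_mem⟩
  have f_idem : IsIdempotentElem f := LinearMap.ext fun v =>
    (Matrix.mulVec_mulVec v q q).trans (congrArg (Matrix.mulVec · v) q_idem)
  have q_comm : ∀ a (v : I → K), q.mulVec ((ρ a + δ a).mulVec v) = (ρ a).mulVec (q.mulVec v) :=
    fun a v => by
      rw [Matrix.mulVec_mulVec, Matrix.mulVec_mulVec, mul_add, q_mul, add_zero, q_mem a]
  have agree_on_ker : ∀ a (v : I → K), q.mulVec v = 0 →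
      (ρ a + δ a).mulVec v = (ρ a).mulVec v := fun a v hv => by
    rw [Matrix.add_mulVec, ← mul_q a, ← Matrix.mulVec_mulVec, hv, Matrix.mulVec_zero, add_zero]
  let π : RepModule (perturb hδ sq) →ₗ[Λ] LinearMap.range f :=
    { toFun := fun v => ⟨q.mulVec v, v, rfl⟩
      map_add' := fun v w => Subtype.ext (Matrix.mulVec_add q v w)
      map_smul' := fun a v => Subtype.ext (q_comm a v) }
  let ι : LinearMap.ker f →ₗ[Λ] RepModule (perturb hδ sq) :=
    { toFun := fun v => (v : RepModule ρ)
      map_add' := fun _ _ => rfl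
      map_smul' := fun a v => (agree_on_ker a v.1 v.2).symm }
  have exact : Function.Exact ι π := fun v =>
    ⟨fun hv => ⟨⟨v, congrArg Subtype.val hv⟩, rfl⟩, fun ⟨w, hw⟩ => Subtype.ext (hw ▸ w.2)⟩
  have nonsplit : ∀ s : LinearMap.range f →ₗ[Λ] RepModule (perturb hδ sq),
      π ∘ₗ s ≠ LinearMap.id := by
    intro s hs
    let g : RepModule ρ →ₗ[Λ] RepModule (perturb hδ sq) := s ∘ₗ f.rangeRestrict
    have q_g : q * homMatrix g = q := Matrix.ext_of_mulVec_single fun i => by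
      rw [← Matrix.mulVec_mulVec]
      exact (congrArg q.mulVec (homMatrix_mulVec g _)).trans
        (congrArg Subtype.val (LinearMap.congr_fun hs _))
    exact not_inner ⟨-homMatrix g, eq_inner_of_mem_intertwiners_perturb hδ sq mul_q q_g
      (homMatrix_mem_intertwiners g)⟩
  rw [← homEquivIntertwiners.finrank_eq, ← homEquivIntertwiners.finrank_eq]
  exact finrank_end_lt_of_nonsplit (fun v w h => Subtype.ext h)
    (fun ⟨_, v, hv⟩ => ⟨v, Subtype.ext hv⟩) exact nonsplit
    (Submodule.prodEquivOfIsCompl _ _ (LinearMap.IsIdempotentElem.isCompl f_idem).symm)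

end Cocycles

/-! ### Bound quiver algebras and their representation varieties -/

section BoundQuiverAlgebras

variable (Q : QuiverData) (K : Type) [Field K]
  (Rels : Set (FreeAlgebra K (Fin Q.n ⊕ Fin Q.numArrows)))

/-- The defining relations of `KQ/⟨Rels⟩` as a quotient of the free algebra on the vertices and the
arrows. No relations between the vertices are imposed: a graded representation sends them to
complementary orthogonal idempotents anyway. -/
inductive BoundRel : FreeAlgebra K (Fin Q.n ⊕ Fin Q.numArrows) →
    FreeAlgebra K (Fin Q.n ⊕ Fin Q.numArrows) → Prop
  | rel {r} (hr : r ∈ Rels) : BoundRel r 0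
  | tgt_mul (a : Fin Q.numArrows) : BoundRel
      (FreeAlgebra.ι K (.inl (Q.tgt a)) * FreeAlgebra.ι K (.inr a)) (FreeAlgebra.ι K (.inr a))
  | mul_src (a : Fin Q.numArrows) : BoundRel
      (FreeAlgebra.ι K (.inr a) * FreeAlgebra.ι K (.inl (Q.src a))) (FreeAlgebra.ι K (.inr a))

/-- The algebra `Λ` presented by the quiver `Q` with relations `Rels`. -/
abbrev BoundAlgebra : Type := RingQuot (BoundRel Q K Rels)

variable {Q K Rels}

/-- The class in `Λ` of a formal expression in the vertices and the arrows. -/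
abbrev BoundAlgebra.ofFree :
    FreeAlgebra K (Fin Q.n ⊕ Fin Q.numArrows) →ₐ[K] BoundAlgebra Q K Rels :=
  RingQuot.mkAlgHom K (BoundRel Q K Rels)

/-- The element of `Λ` given by a vertex. -/
def BoundAlgebra.vertex (i : Fin Q.n) : BoundAlgebra Q K Rels := ofFree (FreeAlgebra.ι K (.inl i))

/-- The element of `Λ` given by an arrow. -/
def BoundAlgebra.arrow (a : Fin Q.numArrows) : BoundAlgebra Q K Rels :=
  ofFree (FreeAlgebra.ι K (.inr a))

open BoundAlgebra

lemma vertex_mul_arrow (a : Fin Q.numArrows) :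
    (vertex (Q.tgt a) * arrow a : BoundAlgebra Q K Rels) = arrow a :=
  (map_mul ofFree _ _).symm.trans (RingQuot.mkAlgHom_rel K (.tgt_mul a))

lemma arrow_mul_vertex (a : Fin Q.numArrows) :
    (arrow a * vertex (Q.src a) : BoundAlgebra Q K Rels) = arrow a :=
  (map_mul ofFree _ _).symm.trans (RingQuot.mkAlgHom_rel K (.mul_src a))

end BoundQuiverAlgebras

section GradedRepresentations

/-- The projection onto the part of degree `i` of a free module whose basis is graded by `v`. -/
def vertexMatrix {I V : Type*} [DecidableEq I] [DecidableEq V] (A : Type*) [Zero A] [One A]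
    (v : I → V) (i : V) : Matrix I I A :=
  Matrix.diagonal fun k => if v k = i then 1 else 0

/-- The linear map with matrix `P` between free modules with bases graded by `v` and `w` maps each
homogeneous component to the component of the same degree. -/
def PreservesGrading {I L V A : Type*} [Fintype I] [DecidableEq I] [Fintype L] [DecidableEq L]
    [DecidableEq V] [CommRing A] (v : I → V) (w : L → V) (P : Matrix L I A) : Prop :=
  ∀ i, vertexMatrix A w i * P = P * vertexMatrix A v i

lemma vertexMatrix_map {K A B I V : Type*} [Field K] [CommRing A] [Algebra K A] [CommRing B]
    [Algebra K B] [Fintype I] [DecidableEq I] [DecidableEq V] (f : A →ₐ[K] B) (v : I → V) (i : V) :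
    f.mapMatrix (vertexMatrix A v i) = vertexMatrix B v i := by
  rw [vertexMatrix, AlgHom.mapMatrix_apply, Matrix.diagonal_map (map_zero f), vertexMatrix]
  exact congrArg Matrix.diagonal (funext fun k => by simp [apply_ite f])

variable {Q : QuiverData} {K : Type} [Field K]
  {Rels : Set (FreeAlgebra K (Fin Q.n ⊕ Fin Q.numArrows))}
variable {A : Type*} [CommRing A] [Algebra K A] {d : Fin Q.n → ℕ}
variable {I : Type*} [Fintype I] [DecidableEq I]

open BoundAlgebra

/-- The vertices act as the projections given by the grading `v` of the basis. -/
def IsGraded (v : I → Fin Q.n) (ρ : BoundAlgebra Q K Rels →ₐ[K] Matrix I I A) : Prop :=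
  ∀ i, ρ (vertex i) = vertexMatrix A v i

/-- The matrix by which an arrow acts on the representation over `A` with coordinates `z`. -/
def arrowMatrix (z : Coords Q d → A) (a : Fin Q.numArrows) :
    Matrix (Σ i, Fin (d i)) (Σ i, Fin (d i)) A :=
  fun j k => if h : j.1 = Q.tgt a ∧ k.1 = Q.src a then
    z ⟨a, Fin.cast (congrArg d h.1) j.2, Fin.cast (congrArg d h.2) k.2⟩ else 0

/-- The matrix by which a formal expression in the vertices and arrows acts on the representation
over `A` with coordinates `z`. -/
def evalMatrix (z : Coords Q d → A) :
    FreeAlgebra K (Fin Q.n ⊕ Fin Q.numArrows) →ₐ[K]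
      Matrix (Σ i, Fin (d i)) (Σ i, Fin (d i)) A :=
  FreeAlgebra.lift K (Sum.elim (vertexMatrix A Sigma.fst) (arrowMatrix z))

lemma arrowMatrix_map {B : Type*} [CommRing B] [Algebra K B] (f : A →ₐ[K] B) (z : Coords Q d → A)
    (a : Fin Q.numArrows) : f.mapMatrix (arrowMatrix z a) = arrowMatrix (f ∘ z) a := by
  ext j k
  by_cases h : j.1 = Q.tgt a ∧ k.1 = Q.src a <;> simp [arrowMatrix, h]

lemma evalMatrix_vertex (z : Coords Q d → A) (i : Fin Q.n) :
    evalMatrix z (FreeAlgebra.ι K (.inl i)) = vertexMatrix A Sigma.fst i := by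
  rw [evalMatrix, FreeAlgebra.lift_ι_apply, Sum.elim_inl]

lemma evalMatrix_arrow (z : Coords Q d → A) (a : Fin Q.numArrows) :
    evalMatrix z (FreeAlgebra.ι K (.inr a)) = arrowMatrix z a := by
  rw [evalMatrix, FreeAlgebra.lift_ι_apply, Sum.elim_inr]

lemma evalMatrix_map {B : Type*} [CommRing B] [Algebra K B] (f : A →ₐ[K] B) (z : Coords Q d → A)
    (w : FreeAlgebra K (Fin Q.n ⊕ Fin Q.numArrows)) :
    (evalMatrix z w).map f = evalMatrix (f ∘ z) w := by
  suffices f.mapMatrix.comp (evalMatrix z) = evalMatrix (f ∘ z) from AlgHom.congr_fun this w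
  refine FreeAlgebra.hom_ext (funext fun g => ?_)
  rcases g with i | a
  · simp only [Function.comp_apply, AlgHom.comp_apply, evalMatrix_vertex, vertexMatrix_map]
  · simp only [Function.comp_apply, AlgHom.comp_apply, evalMatrix_arrow, arrowMatrix_map]

lemma vertexMatrix_mul_arrowMatrix (z : Coords Q d → A) (a : Fin Q.numArrows) :
    vertexMatrix A Sigma.fst (Q.tgt a) * arrowMatrix z a = arrowMatrix z a := by
  ext j k
  by_cases h : j.1 = Q.tgt a <;> simp [vertexMatrix, arrowMatrix, h]

lemma arrowMatrix_mul_vertexMatrix (z : Coords Q d → A) (a : Fin Q.numArrows) :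
    arrowMatrix z a * vertexMatrix A Sigma.fst (Q.src a) = arrowMatrix z a := by
  ext j k
  by_cases h : k.1 = Q.src a <;> simp [vertexMatrix, arrowMatrix, h]

/-- The representation of `Λ` over `A` with coordinates `z`. -/
def repOfCoords (z : Coords Q d → A) (hz : ∀ r ∈ Rels, evalMatrix z r = 0) :
    BoundAlgebra Q K Rels →ₐ[K] Matrix (Σ i, Fin (d i)) (Σ i, Fin (d i)) A :=
  RingQuot.liftAlgHom K ⟨evalMatrix z, fun _ _ h => by
    cases h with
    | rel hr => rw [hz _ hr, map_zero]
    | tgt_mul a => simp [evalMatrix_vertex, evalMatrix_arrow, vertexMatrix_mul_arrowMatrix]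
    | mul_src a => simp [evalMatrix_vertex, evalMatrix_arrow, arrowMatrix_mul_vertexMatrix]⟩

lemma repOfCoords_ofFree (z : Coords Q d → A) (hz : ∀ r ∈ Rels, evalMatrix z r = 0)
    (w : FreeAlgebra K (Fin Q.n ⊕ Fin Q.numArrows)) :
    repOfCoords z hz (ofFree w) = evalMatrix z w := by
  simp [repOfCoords]

lemma isGraded_repOfCoords (z : Coords Q d → A) (hz : ∀ r ∈ Rels, evalMatrix z r = 0) :
    IsGraded Sigma.fst (repOfCoords z hz) := fun i => by
  rw [vertex, repOfCoords_ofFree, evalMatrix_vertex]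

lemma repOfCoords_arrow (z : Coords Q d → A) (hz : ∀ r ∈ Rels, evalMatrix z r = 0)
    (a : Fin Q.numArrows) : repOfCoords z hz (arrow a) = arrowMatrix z a := by
  rw [arrow, repOfCoords_ofFree, evalMatrix_arrow]

/-- The coordinates of a representation over `A`. -/
def coordsOfRep (ρ : BoundAlgebra Q K Rels →ₐ[K] Matrix (Σ i, Fin (d i)) (Σ i, Fin (d i)) A) :
    Coords Q d → A :=
  fun c => ρ (arrow c.1) ⟨_, c.2.1⟩ ⟨_, c.2.2⟩

lemma coordsOfRep_repOfCoords (z : Coords Q d → A) (hz : ∀ r ∈ Rels, evalMatrix z r = 0) :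
    coordsOfRep (repOfCoords z hz) = z := by
  ext ⟨a, p, q⟩
  simp [coordsOfRep, repOfCoords_arrow, arrowMatrix]

variable {ρ : BoundAlgebra Q K Rels →ₐ[K] Matrix (Σ i, Fin (d i)) (Σ i, Fin (d i)) A}

lemma IsGraded.arrow_apply_eq_zero {v : I → Fin Q.n}
    {ρ : BoundAlgebra Q K Rels →ₐ[K] Matrix I I A} (h : IsGraded v ρ) (a : Fin Q.numArrows)
    {j k : I} (hjk : ¬ (v j = Q.tgt a ∧ v k = Q.src a)) : ρ (arrow a) j k = 0 := by
  rw [not_and_or] at hjk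
  rcases hjk with hj | hk
  · rw [← vertex_mul_arrow, map_mul, h, vertexMatrix, Matrix.diagonal_mul, if_neg hj, zero_mul]
  · rw [← arrow_mul_vertex, map_mul, h, vertexMatrix, Matrix.mul_diagonal, if_neg hk, mul_zero]

lemma arrowMatrix_coordsOfRep (h : IsGraded Sigma.fst ρ) (a : Fin Q.numArrows) :
    arrowMatrix (coordsOfRep ρ) a = ρ (arrow a) := by
  ext j k
  by_cases hjk : j.1 = Q.tgt a ∧ k.1 = Q.src a
  · obtain ⟨i, p⟩ := j
    obtain ⟨l, q⟩ := k
    obtain ⟨rfl, rfl⟩ := hjk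
    simp [arrowMatrix, coordsOfRep]
  · rw [h.arrow_apply_eq_zero a hjk, arrowMatrix, dif_neg hjk]

lemma evalMatrix_coordsOfRep (h : IsGraded Sigma.fst ρ) :
    evalMatrix (coordsOfRep ρ) = ρ.comp ofFree := by
  refine FreeAlgebra.hom_ext (funext fun g => ?_)
  rcases g with i | a
  · exact (evalMatrix_vertex _ i).trans (h i).symm
  · exact (evalMatrix_arrow _ a).trans (arrowMatrix_coordsOfRep h a)

lemma evalMatrix_coordsOfRep_eq_zero (h : IsGraded Sigma.fst ρ)
    {r : FreeAlgebra K (Fin Q.n ⊕ Fin Q.numArrows)} (hr : r ∈ Rels) :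
    evalMatrix (coordsOfRep ρ) r = 0 := by
  rw [evalMatrix_coordsOfRep h, AlgHom.comp_apply, RingQuot.mkAlgHom_rel K (.rel hr), map_zero,
    map_zero]

lemma repOfCoords_coordsOfRep (h : IsGraded Sigma.fst ρ) :
    repOfCoords (coordsOfRep ρ) (fun _ => evalMatrix_coordsOfRep_eq_zero h) = ρ :=
  RingQuot.ringQuot_ext' K _ _ <| AlgHom.ext fun w => by
    rw [AlgHom.comp_apply, repOfCoords_ofFree, evalMatrix_coordsOfRep h]

end GradedRepresentations

open BoundAlgebra

section Points

variable {Q : QuiverData} {K : Type} [Field K]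
  {Rels : Set (FreeAlgebra K (Fin Q.n ⊕ Fin Q.numArrows))} {d : Fin Q.n → ℕ}

lemma proj_eq_toLin' (i : Fin Q.n) :
    proj Q d K i = Matrix.toLin' (vertexMatrix K Sigma.fst i) := by
  refine LinearMap.ext fun m => funext fun j => ?_
  simp [proj, vertexMatrix, Matrix.mulVec_diagonal]

lemma arrowMap_eq_toLin' (x : RepSpace Q d K) (a : Fin Q.numArrows) :
    arrowMap Q d K x a = Matrix.toLin' (arrowMatrix x a) := by
  refine LinearMap.ext fun m => funext fun j => ?_
  by_cases hj : j.1 = Q.tgt a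
  · rw [Matrix.toLin'_apply, Matrix.mulVec, dotProduct, Fintype.sum_sigma,
      Finset.sum_eq_single (Q.src a) (fun i _ hi => by simp [arrowMatrix, hi]) (by simp)]
    simp [arrowMap, arrowMatrix, hj]
  · simp [arrowMap, arrowMatrix, hj, Matrix.mulVec, dotProduct]

lemma evalRel_eq_toLin' (x : RepSpace Q d K) (w : FreeAlgebra K (Fin Q.n ⊕ Fin Q.numArrows)) :
    evalRel Q d K x w = Matrix.toLin' (evalMatrix x w) := by
  have hom_eq : evalRel Q d K x =
      (Matrix.toLinAlgEquiv' (R := K)).toAlgHom.comp (evalMatrix x) := by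
    refine FreeAlgebra.hom_ext (funext fun g => ?_)
    rcases g with i | a
    · exact (FreeAlgebra.lift_ι_apply _ _).trans ((proj_eq_toLin' i).trans
        (congrArg Matrix.toLin' (evalMatrix_vertex x i).symm))
    · exact (FreeAlgebra.lift_ι_apply _ _).trans ((arrowMap_eq_toLin' x a).trans
        (congrArg Matrix.toLin' (evalMatrix_arrow x a).symm))
  exact AlgHom.congr_fun hom_eq w

lemma mem_repVar_iff {x : RepSpace Q d K} :
    x ∈ RepVar Q d K Rels ↔ ∀ r ∈ Rels, evalMatrix x r = 0 := by
  simp only [RepVar, Set.mem_ofPred_eq, evalRel_eq_toLin', LinearEquiv.map_eq_zero_iff]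

/-- The representation of `Λ` encoded by a point of `Rep_d(Λ)`. -/
def toRep (x : GenV Q d K Rels) :
    BoundAlgebra Q K Rels →ₐ[K] Matrix (Σ i, Fin (d i)) (Σ i, Fin (d i)) K :=
  repOfCoords x.1 (mem_repVar_iff.1 x.2)

lemma isGraded_toRep (x : GenV Q d K Rels) : IsGraded Sigma.fst (toRep x) :=
  isGraded_repOfCoords _ _

lemma toRep_vertex (x : GenV Q d K Rels) (i : Fin Q.n) :
    toRep x (vertex i) = vertexMatrix K Sigma.fst i :=
  isGraded_toRep x i

lemma toRep_ofFree (x : GenV Q d K Rels) (w : FreeAlgebra K (Fin Q.n ⊕ Fin Q.numArrows)) :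
    toRep x (ofFree w) = evalMatrix x.1 w :=
  repOfCoords_ofFree _ _ _

lemma toRep_arrow (x : GenV Q d K Rels) (a : Fin Q.numArrows) :
    toRep x (arrow a) = arrowMatrix x.1 a :=
  repOfCoords_arrow _ _ _

lemma toRep_injective : Function.Injective (toRep : GenV Q d K Rels → _) := fun x y h => by
  rw [← Subtype.val_inj, ← coordsOfRep_repOfCoords x.1 (mem_repVar_iff.1 x.2),
    ← coordsOfRep_repOfCoords y.1 (mem_repVar_iff.1 y.2)]
  exact congrArg coordsOfRep h

/-- The point of `Rep_d(Λ)` that encodes a graded representation. -/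
def ofRep (ρ : BoundAlgebra Q K Rels →ₐ[K] Matrix (Σ i, Fin (d i)) (Σ i, Fin (d i)) K)
    (h : IsGraded Sigma.fst ρ) : GenV Q d K Rels :=
  ⟨coordsOfRep ρ, mem_repVar_iff.2 fun _ => evalMatrix_coordsOfRep_eq_zero h⟩

lemma toRep_ofRep {ρ : BoundAlgebra Q K Rels →ₐ[K] Matrix (Σ i, Fin (d i)) (Σ i, Fin (d i)) K}
    (h : IsGraded Sigma.fst ρ) : toRep (ofRep ρ h) = ρ :=
  repOfCoords_coordsOfRep h

lemma mem_intertwiners_of_generators {I J : Type*} [Fintype I] [DecidableEq I] [Fintype J]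
    [DecidableEq J] {ρ : BoundAlgebra Q K Rels →ₐ[K] Matrix I I K}
    {σ : BoundAlgebra Q K Rels →ₐ[K] Matrix J J K} {H : Matrix J I K}
    (hv : ∀ i, σ (vertex i) * H = H * ρ (vertex i)) (ha : ∀ a, σ (arrow a) * H = H * ρ (arrow a)) :
    H ∈ intertwiners ρ σ := fun b => by
  obtain ⟨w, rfl⟩ := RingQuot.mkAlgHom_surjective K _ b
  induction w using FreeAlgebra.induction with
  | grade0 c => simp [Algebra.algebraMap_eq_smul_one]
  | grade1 g => exact g.rec hv ha
  | mul w₁ w₂ h₁ h₂ =>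
    rw [map_mul, map_mul, map_mul, Matrix.mul_assoc, h₂, ← Matrix.mul_assoc, h₁, Matrix.mul_assoc]
  | add w₁ w₂ h₁ h₂ => rw [map_add, map_add, map_add, Matrix.add_mul, Matrix.mul_add, h₁, h₂]

lemma repHom_toLin'_iff {dx dy : Fin Q.n → ℕ} (x : GenV Q dx K Rels) (y : GenV Q dy K Rels)
    (H : Matrix (Σ i, Fin (dy i)) (Σ i, Fin (dx i)) K) :
    RepHom Q K dx dy x.1 y.1 (Matrix.toLin' H) ↔ H ∈ intertwiners (toRep x) (toRep y) := by
  simp only [RepHom, arrowMap_eq_toLin', proj_eq_toLin', ← Matrix.toLin'_mul,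
    EmbeddingLike.apply_eq_iff_eq, ← toRep_arrow]
  refine ⟨fun h => mem_intertwiners_of_generators (fun i => ?_) fun a => (h.1 a).symm,
    fun h => ⟨fun a => (h _).symm, fun i => ?_⟩⟩
  · rw [toRep_vertex, toRep_vertex, h.2 i]
  · rw [← toRep_vertex x, ← toRep_vertex y, h]

end Points

section SplitExtensions

variable {K Λ : Type*} [Field K] [Ring Λ] [Algebra K Λ]
variable {I J L V : Type*} [Fintype I] [DecidableEq I] [Fintype J] [DecidableEq J]
  [Fintype L] [DecidableEq L]
variable {ρ : Λ →ₐ[K] Matrix I I K} {σ : Λ →ₐ[K] Matrix J J K} {τ : Λ →ₐ[K] Matrix L L K}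

/-- A short exact sequence of vector spaces, given by matrices together with a splitting. -/
structure IsSplitPair (ι : Matrix L J K) (π : Matrix I L K)
    (r : Matrix J L K) (s : Matrix L I K) : Prop where
  comp_eq_zero : π * ι = 0
  left_inv : r * ι = 1
  right_inv : π * s = 1
  add_eq_one : ι * r + s * π = 1

variable {ι : Matrix L J K} {π : Matrix I L K}

lemma exists_isSplitPair (hι : Function.Injective (Matrix.toLin' ι))
    (hπ : Function.Surjective (Matrix.toLin' π))
    (exact : LinearMap.ker (Matrix.toLin' π) = LinearMap.range (Matrix.toLin' ι)) :
    ∃ r s, IsSplitPair ι π r s := by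
  obtain ⟨r, r_ι⟩ := (Matrix.toLin' ι).exists_leftInverse_of_injective (LinearMap.ker_eq_bot.2 hι)
  obtain ⟨s, π_s⟩ :=
    (Matrix.toLin' π).exists_rightInverse_of_surjective (LinearMap.range_eq_top.2 hπ)
  obtain ⟨r, rfl⟩ := Matrix.toLin'.surjective r
  obtain ⟨s, rfl⟩ := Matrix.toLin'.surjective s
  rw [← Matrix.toLin'_mul, ← Matrix.toLin'_one, EmbeddingLike.apply_eq_iff_eq] at r_ι π_s
  have π_ι : π * ι = 0 := Matrix.toLin'.injective <| by
    rw [Matrix.toLin'_mul, map_zero, ← LinearMap.range_le_ker_iff]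
    exact exact.ge
  refine ⟨r - r * s * π, s, π_ι, ?_, π_s, ?_⟩
  · rw [Matrix.sub_mul, Matrix.mul_assoc, π_ι, Matrix.mul_zero, sub_zero, r_ι]
  · refine Matrix.toLin'.injective <| LinearMap.ext fun w => ?_
    obtain ⟨u, hu⟩ : w - s.mulVec (π.mulVec w) ∈ LinearMap.range (Matrix.toLin' ι) := by
      rw [← exact, LinearMap.mem_ker, map_sub, sub_eq_zero, Matrix.toLin'_apply,
        Matrix.toLin'_apply, Matrix.mulVec_mulVec, π_s, Matrix.one_mulVec]
    have r_hu := congrArg r.mulVec hu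
    rw [Matrix.toLin'_apply] at hu
    rw [Matrix.toLin'_apply, Matrix.mulVec_mulVec, r_ι, Matrix.one_mulVec, Matrix.mulVec_sub]
      at r_hu
    simp only [Matrix.toLin'_apply, Matrix.add_mulVec, Matrix.sub_mulVec, Matrix.mul_sub,
      ← Matrix.mulVec_mulVec, ← Matrix.mul_assoc, Matrix.one_mulVec]
    rw [← Matrix.mulVec_sub, ← r_hu, hu, sub_add_cancel]

variable {r : Matrix J L K} {s : Matrix L I K}

lemma IsSplitPair.toLin'_injective (h : IsSplitPair ι π r s) :
    Function.Injective (Matrix.toLin' ι) :=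
  Function.LeftInverse.injective (g := r.mulVec) fun u => by
    rw [Matrix.toLin'_apply, Matrix.mulVec_mulVec, h.left_inv, Matrix.one_mulVec]

lemma IsSplitPair.toLin'_surjective (h : IsSplitPair ι π r s) :
    Function.Surjective (Matrix.toLin' π) :=
  Function.RightInverse.surjective (g := s.mulVec) fun u => by
    rw [Matrix.toLin'_apply, Matrix.mulVec_mulVec, h.right_inv, Matrix.one_mulVec]

lemma IsSplitPair.ker_eq_range (h : IsSplitPair ι π r s) :
    LinearMap.ker (Matrix.toLin' π) = LinearMap.range (Matrix.toLin' ι) := by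
  refine le_antisymm (fun w hw => ?_) ?_
  · refine ⟨r.mulVec w, ?_⟩
    have hsum := congrArg (Matrix.mulVec · w) h.add_eq_one
    rwa [Matrix.add_mulVec, ← Matrix.mulVec_mulVec, ← Matrix.mulVec_mulVec,
      show π.mulVec w = 0 from hw, Matrix.mulVec_zero, add_zero, Matrix.one_mulVec] at hsum
  · rw [LinearMap.range_le_ker_iff, ← Matrix.toLin'_mul, h.comp_eq_zero, map_zero]

lemma isSplitPair_fromRows_fromCols :
    IsSplitPair (Matrix.fromRows (1 : Matrix J J K) (0 : Matrix I J K))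
      (Matrix.fromCols (0 : Matrix I J K) (1 : Matrix I I K))
      (Matrix.fromCols (1 : Matrix J J K) (0 : Matrix J I K))
      (Matrix.fromRows (0 : Matrix J I K) (1 : Matrix I I K)) where
  comp_eq_zero := by simp [Matrix.fromCols_mul_fromRows]
  left_inv := by simp [Matrix.fromCols_mul_fromRows]
  right_inv := by simp [Matrix.fromCols_mul_fromRows]
  add_eq_one := by
    rw [Matrix.fromRows_mul_fromCols, Matrix.fromRows_mul_fromCols, Matrix.fromBlocks_add]
    simp

lemma IsSplitPair.submatrix {L' : Type*} [Fintype L'] [DecidableEq L'] (h : IsSplitPair ι π r s)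
    (e : L' ≃ L) :
    IsSplitPair (ι.submatrix e id) (π.submatrix id e) (r.submatrix id e) (s.submatrix e id) where
  comp_eq_zero := by rw [Matrix.submatrix_mul_equiv, h.comp_eq_zero]; rfl
  left_inv := by rw [Matrix.submatrix_mul_equiv, h.left_inv, Matrix.submatrix_id_id]
  right_inv := by rw [Matrix.submatrix_mul_equiv, h.right_inv, Matrix.submatrix_id_id]
  add_eq_one := by
    rw [← Matrix.submatrix_mul _ _ _ id _ Function.bijective_id,
      ← Matrix.submatrix_mul _ _ _ id _ Function.bijective_id, ← Matrix.submatrix_one_equiv e,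
      ← h.add_eq_one, Matrix.submatrix_add]
    rfl

lemma exists_inner_of_section {δ : Λ →ₗ[K] Matrix J I K} (hδ : IsCocycle ρ σ δ)
    {S : Matrix (J ⊕ I) I K} (hS : S ∈ intertwiners ρ (extensionRep hδ))
    (right_inv : Matrix.fromCols (0 : Matrix I J K) (1 : Matrix I I K) * S = 1) :
    ∃ H : Matrix J I K, ∀ a, δ a = σ a * H - H * ρ a := by
  obtain ⟨H, H', rfl⟩ : ∃ H H', S = Matrix.fromRows H H' :=
    ⟨S.toRows₁, S.toRows₂, (Matrix.fromRows_toRows S).symm⟩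
  obtain rfl : H' = 1 := by
    rwa [Matrix.fromCols_mul_fromRows, Matrix.zero_mul, Matrix.one_mul, zero_add] at right_inv
  refine ⟨-H, fun a => ?_⟩
  have upper := congrArg Matrix.toRows₁ (hS a)
  rw [extensionRep_apply, Matrix.fromBlocks_mul_fromRows, Matrix.fromRows_mul,
    Matrix.toRows₁_fromRows, Matrix.toRows₁_fromRows, Matrix.mul_one] at upper
  rw [Matrix.mul_neg, Matrix.neg_mul, ← upper]
  abel

/-- The failure of a vector space section `s` to be a homomorphism is a cocycle, and correcting `s`
by a matrix that makes the cocycle inner gives a splitting. -/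
lemma exists_section_of_extVanishes {s₀ : Matrix L I K} {e : V → Λ} (ext : ExtVanishes e ρ σ)
    (split : IsSplitPair ι π r s₀) (hι : ι ∈ intertwiners σ τ) (hπ : π ∈ intertwiners τ ρ)
    {s : Matrix L I K} (π_s : π * s = 1) (s_graded : ∀ i, τ (e i) * s = s * ρ (e i)) :
    ∃ S ∈ intertwiners ρ τ, π * S = 1 := by
  let defect : Λ →ₗ[K] Matrix L I K :=
    { toFun := fun a => τ a * s - s * ρ a
      map_add' := fun a b => by
        rw [map_add, map_add, Matrix.add_mul, Matrix.mul_add, add_sub_add_comm]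
      map_smul' := fun c a => by
        rw [map_smul, map_smul, Matrix.smul_mul, Matrix.mul_smul, smul_sub, RingHom.id_apply] }
  let δ : Λ →ₗ[K] Matrix J I K :=
    { toFun := fun a => r * defect a
      map_add' := fun a b => by rw [map_add, Matrix.mul_add]
      map_smul' := fun c a => by rw [map_smul, Matrix.mul_smul, RingHom.id_apply] }
  have exact : ∀ M : Matrix L I K, π * M = 0 → ι * (r * M) = M := fun M hM => by
    have hsum := congrArg (· * M) split.add_eq_one
    simpa only [Matrix.add_mul, Matrix.mul_assoc, hM, Matrix.mul_zero, add_zero, Matrix.one_mul]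
      using hsum
  have ι_δ : ∀ a, ι * δ a = τ a * s - s * ρ a := fun a => exact _ <| by
    change π * (τ a * s - s * ρ a) = 0
    rw [Matrix.mul_sub, ← Matrix.mul_assoc, ← hπ, Matrix.mul_assoc, π_s, ← Matrix.mul_assoc, π_s,
      Matrix.mul_one, Matrix.one_mul, sub_self]
  have ι_injective : ∀ M N : Matrix J I K, ι * M = ι * N → M = N := fun M N h => by
    rw [← Matrix.one_mul M, ← split.left_inv, Matrix.mul_assoc, h, ← Matrix.mul_assoc,
      split.left_inv, Matrix.one_mul]
  have cocycle : IsCocycle ρ σ δ := fun a b => ι_injective _ _ <| by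
    rw [Matrix.mul_add, ← Matrix.mul_assoc, ← hι, Matrix.mul_assoc, ← Matrix.mul_assoc ι, ι_δ, ι_δ,
      ι_δ, map_mul, map_mul, Matrix.mul_sub, Matrix.sub_mul]
    simp only [Matrix.mul_assoc, sub_add_sub_cancel]
  obtain ⟨H, hH⟩ := ext δ cocycle fun i => ι_injective _ _ <| by
    rw [ι_δ, s_graded, sub_self, Matrix.mul_zero]
  refine ⟨s - ι * H, fun a => ?_, by
    rw [Matrix.mul_sub, π_s, ← Matrix.mul_assoc, split.comp_eq_zero, Matrix.zero_mul, sub_zero]⟩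
  have h := ι_δ a
  rw [hH a, Matrix.mul_sub, ← Matrix.mul_assoc, ← hι] at h
  rw [Matrix.mul_sub, Matrix.sub_mul, ← Matrix.mul_assoc, Matrix.mul_assoc ι,
    sub_eq_sub_iff_sub_eq_sub, h]

end SplitExtensions

section Reindexing

variable {I : Type*} [Fintype I] {n : ℕ} {d : Fin n → ℕ}

lemma exists_equiv_sigma_of_card_fiber (v : I → Fin n)
    (h : ∀ i, Fintype.card {k // v k = i} = d i) :
    ∃ e : I ≃ Σ i, Fin (d i), ∀ k, (e k).1 = v k :=
  ⟨(Equiv.sigmaFiberEquiv v).symm.trans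
    (Equiv.sigmaCongrRight fun i => Fintype.equivFinOfCardEq (h i)), fun _ => rfl⟩

lemma card_fiber_sigma_fst (d : Fin n → ℕ) (i : Fin n) :
    Fintype.card {k : Σ i, Fin (d i) // k.1 = i} = d i :=
  (Fintype.card_congr (Equiv.sigmaSubtype i)).trans (Fintype.card_fin _)

end Reindexing

section ReindexingRepresentations

variable {Q : QuiverData} {K : Type} [Field K]
  {Rels : Set (FreeAlgebra K (Fin Q.n ⊕ Fin Q.numArrows))}
variable {A : Type*} [CommRing A] [Algebra K A] {I J : Type*} [Fintype I] [DecidableEq I]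
  [Fintype J] [DecidableEq J]

/-- The representation with the basis renamed along a bijection. -/
def reindexRep (e : I ≃ J) (ρ : BoundAlgebra Q K Rels →ₐ[K] Matrix I I A) :
    BoundAlgebra Q K Rels →ₐ[K] Matrix J J A :=
  (Matrix.reindexAlgEquiv K A e).toAlgHom.comp ρ

lemma reindexRep_apply (e : I ≃ J) (ρ : BoundAlgebra Q K Rels →ₐ[K] Matrix I I A)
    (a : BoundAlgebra Q K Rels) : reindexRep e ρ a = (ρ a).submatrix e.symm e.symm := rfl

lemma isGraded_reindexRep {e : I ≃ J} {v : I → Fin Q.n} {w : J → Fin Q.n}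
    (hvw : ∀ k, w (e k) = v k) {ρ : BoundAlgebra Q K Rels →ₐ[K] Matrix I I A}
    (h : IsGraded v ρ) : IsGraded w (reindexRep e ρ) := fun i => by
  rw [reindexRep_apply, h, vertexMatrix, Matrix.submatrix_diagonal_equiv, vertexMatrix]
  congr 1
  ext k
  simp [← hvw]

variable {I' J' : Type*} [Fintype I'] [DecidableEq I'] [Fintype J'] [DecidableEq J']

lemma submatrix_mem_intertwiners_reindexRep {ρ : BoundAlgebra Q K Rels →ₐ[K] Matrix I I K}
    {σ : BoundAlgebra Q K Rels →ₐ[K] Matrix J J K} (e : I ≃ I') (f : J ≃ J') {H : Matrix J I K}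
    (hH : H ∈ intertwiners ρ σ) :
    H.submatrix f.symm e.symm ∈ intertwiners (reindexRep e ρ) (reindexRep f σ) := fun a => by
  rw [reindexRep_apply, reindexRep_apply, Matrix.submatrix_mul_equiv, Matrix.submatrix_mul_equiv,
    hH a]

end ReindexingRepresentations

section Extensions

section

variable {K Λ : Type*} [Field K] [Ring Λ] [Algebra K Λ]
variable {I J : Type*} [Fintype I] [DecidableEq I] [Fintype J] [DecidableEq J]
variable {ρ : Λ →ₐ[K] Matrix I I K} {σ : Λ →ₐ[K] Matrix J J K} {δ : Λ →ₗ[K] Matrix J I K}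

lemma sum_vertexMatrix {I V A : Type*} [DecidableEq I] [Fintype V] [DecidableEq V] [CommRing A]
    (v : I → V) : ∑ i, vertexMatrix A v i = 1 := by
  ext k l
  by_cases hkl : k = l
  · simp [vertexMatrix, Matrix.sum_apply, hkl, Matrix.one_apply]
  · simp [vertexMatrix, Matrix.sum_apply, hkl]

lemma vertexMatrix_mul_vertexMatrix {I V A : Type*} [Fintype I] [DecidableEq I] [DecidableEq V]
    [CommRing A] (v : I → V) (i j : V) :
    vertexMatrix A v i * vertexMatrix A v j = if i = j then vertexMatrix A v i else 0 := by
  rw [vertexMatrix, vertexMatrix, Matrix.diagonal_mul_diagonal]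
  split_ifs with hij
  · exact congrArg Matrix.diagonal (funext fun k => by by_cases hk : v k = j <;> simp [hij, hk])
  · refine (congrArg Matrix.diagonal (funext fun k => ?_)).trans Matrix.diagonal_zero
    by_cases hk : v k = i
    · rw [if_neg fun h => hij (hk.symm.trans h), mul_zero]
    · rw [if_neg hk, zero_mul]

lemma exists_graded_right_inverse {I L V A : Type*} [Fintype I] [DecidableEq I] [Fintype L]
    [DecidableEq L] [Finite V] [DecidableEq V] [CommRing A] {v : I → V} {w : L → V}
    {π : Matrix I L A} {s : Matrix L I A}
    (π_graded : PreservesGrading w v π) (π_s : π * s = 1) :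
    ∃ s' : Matrix L I A, PreservesGrading v w s' ∧ π * s' = 1 := by
  cases nonempty_fintype V
  refine ⟨∑ i, vertexMatrix A w i * s * vertexMatrix A v i, fun i => ?_, ?_⟩
  · simp_rw [Matrix.mul_sum, Matrix.sum_mul, ← Matrix.mul_assoc, vertexMatrix_mul_vertexMatrix,
      Matrix.mul_assoc, vertexMatrix_mul_vertexMatrix]
    rw [Finset.sum_eq_single i (by simp +contextual [eq_comm]) (by simp),
      Finset.sum_eq_single i (by simp +contextual) (by simp), if_pos rfl, if_pos rfl]
  · simp_rw [Matrix.mul_sum, ← Matrix.mul_assoc, ← π_graded _, Matrix.mul_assoc,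
      ← Matrix.mul_assoc π, π_s, Matrix.one_mul, vertexMatrix_mul_vertexMatrix]
    simp [sum_vertexMatrix]

lemma inclusion_mem_intertwiners (hδ : IsCocycle ρ σ δ) :
    Matrix.fromRows (1 : Matrix J J K) (0 : Matrix I J K) ∈ intertwiners σ (extensionRep hδ) :=
  fun a => by
    rw [extensionRep_apply, Matrix.fromBlocks_mul_fromRows, Matrix.fromRows_mul]
    simp only [Matrix.mul_one, Matrix.mul_zero, Matrix.zero_mul, Matrix.one_mul, add_zero]

lemma projection_mem_intertwiners (hδ : IsCocycle ρ σ δ) :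
    Matrix.fromCols (0 : Matrix I J K) (1 : Matrix I I K) ∈ intertwiners (extensionRep hδ) ρ :=
  fun a => by
    rw [extensionRep_apply, Matrix.fromCols_mul_fromBlocks, Matrix.mul_fromCols]
    simp only [Matrix.mul_one, Matrix.mul_zero, Matrix.zero_mul, Matrix.one_mul, zero_add]

end

variable {Q : QuiverData} {K : Type} [Field K]
  {Rels : Set (FreeAlgebra K (Fin Q.n ⊕ Fin Q.numArrows))} {dx dy : Fin Q.n → ℕ}
  {x : GenV Q dx K Rels} {y : GenV Q dy K Rels}

lemma isGraded_extensionRep {δ : BoundAlgebra Q K Rels →ₗ[K] _}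
    (hδ : IsCocycle (toRep x) (toRep y) δ) (δ_vertex : ∀ i, δ (vertex i) = 0) :
    IsGraded (Sum.elim Sigma.fst Sigma.fst) (extensionRep hδ) := fun i => by
  rw [extensionRep_apply, δ_vertex, toRep_vertex, toRep_vertex, vertexMatrix, vertexMatrix,
    Matrix.fromBlocks_diagonal, vertexMatrix]
  congr 1
  ext (k | k) <;> rfl

lemma extVanishes_of_ext1Zero
    (h : Ext1Zero Q K (fun dv => RepVar Q dv K Rels) dx dy x.1 y.1) :
    ExtVanishes vertex (toRep x) (toRep y) := fun δ hδ δ_vertex => by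
  obtain ⟨e, he⟩ := exists_equiv_sigma_of_card_fiber (d := fun i => dx i + dy i)
    (Sum.elim Sigma.fst Sigma.fst : (Σ i, Fin (dy i)) ⊕ (Σ i, Fin (dx i)) → Fin Q.n) fun i => by
      exact (Fintype.card_congr Equiv.subtypeSum).trans <| Fintype.card_sum.trans <|
        (congrArg₂ _ (card_fiber_sigma_fst dy i) (card_fiber_sigma_fst dx i)).trans (add_comm _ _)
  let z := ofRep _ (isGraded_reindexRep he (isGraded_extensionRep hδ δ_vertex))
  have hz : toRep z = reindexRep e (extensionRep hδ) := toRep_ofRep _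
  have split := (isSplitPair_fromRows_fromCols (K := K) (I := Σ i, Fin (dx i))
    (J := Σ i, Fin (dy i))).submatrix e.symm
  obtain ⟨S, hS, π_S⟩ := h z.1 z.2 _ _
    ((repHom_toLin'_iff y z _).2 (hz ▸
      submatrix_mem_intertwiners_reindexRep (.refl _) e (inclusion_mem_intertwiners hδ)))
    ((repHom_toLin'_iff z x _).2 (hz ▸
      submatrix_mem_intertwiners_reindexRep e (.refl _) (projection_mem_intertwiners hδ)))
    split.toLin'_injective split.toLin'_surjective split.ker_eq_range
  obtain ⟨S, rfl⟩ := Matrix.toLin'.surjective S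
  rw [repHom_toLin'_iff x z, hz] at hS
  rw [← Matrix.toLin'_mul, ← Matrix.toLin'_one, EmbeddingLike.apply_eq_iff_eq] at π_S
  have hS' : S.submatrix e id ∈ intertwiners (toRep x) (extensionRep hδ) := fun a => by
    have h := congrArg (Matrix.submatrix · e id) (hS a)
    rwa [← Matrix.submatrix_mul_equiv _ _ e e id, ← Matrix.submatrix_mul_equiv _ _ e (.refl _) id,
      reindexRep_apply, Matrix.submatrix_submatrix, e.symm_comp_self, Matrix.submatrix_id_id] at h
  refine exists_inner_of_section hδ hS' ?_
  refine Eq.trans ?_ π_S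
  rw [← Matrix.submatrix_id_id (_ * S), ← Matrix.submatrix_mul_equiv _ _ id e id,
    Matrix.submatrix_submatrix, e.symm_comp_self, Function.comp_id, Matrix.submatrix_id_id]

lemma ext1Zero_of_extVanishes (h : ExtVanishes vertex (toRep x) (toRep y)) :
    Ext1Zero Q K (fun dv => RepVar Q dv K Rels) dx dy x.1 y.1 := by
  intro z hz ι π hι hπ ι_injective π_surjective exact
  obtain ⟨ι, rfl⟩ := Matrix.toLin'.surjective ι
  obtain ⟨π, rfl⟩ := Matrix.toLin'.surjective π
  obtain ⟨z, rfl⟩ : ∃ z' : GenV Q (fun i => dx i + dy i) K Rels, z = z'.1 := ⟨⟨z, hz⟩, rfl⟩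
  rw [repHom_toLin'_iff] at hι hπ
  obtain ⟨r, s, split⟩ := exists_isSplitPair ι_injective π_surjective exact
  obtain ⟨s', s'_graded, π_s'⟩ := exists_graded_right_inverse
    (fun i => by rw [← toRep_vertex x, hπ, toRep_vertex z]) split.right_inv
  obtain ⟨S, hS, π_S⟩ := exists_section_of_extVanishes h split hι hπ π_s' fun i => by
    rw [toRep_vertex x, toRep_vertex z, s'_graded]
  refine ⟨Matrix.toLin' S, (repHom_toLin'_iff x z S).2 hS, ?_⟩
  rw [← Matrix.toLin'_mul, π_S, Matrix.toLin'_one]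

end Extensions

/-! ### Direct sums -/

section RepEquiv

variable {K Λ : Type*} [Field K] [Ring Λ] [Algebra K Λ]
variable {I J L : Type*} [Fintype I] [DecidableEq I] [Fintype J] [DecidableEq J]
  [Fintype L] [DecidableEq L]
variable {ρ : Λ →ₐ[K] Matrix I I K} {σ : Λ →ₐ[K] Matrix J J K} {τ : Λ →ₐ[K] Matrix L L K}

/-- The isomorphism of the modules of two matrix representations, in terms of matrices. -/
def RepEquiv (ρ : Λ →ₐ[K] Matrix I I K) (σ : Λ →ₐ[K] Matrix J J K) : Prop :=
  ∃ (P : Matrix J I K) (P' : Matrix I J K), P * P' = 1 ∧ P' * P = 1 ∧ P ∈ intertwiners ρ σ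

lemma mul_mem_intertwiners {P : Matrix J I K} {R : Matrix L J K} (hP : P ∈ intertwiners ρ σ)
    (hR : R ∈ intertwiners σ τ) : R * P ∈ intertwiners ρ τ := fun a => by
  rw [← Matrix.mul_assoc, hR, Matrix.mul_assoc, hP, Matrix.mul_assoc]

lemma mem_intertwiners_of_inverse {P : Matrix J I K} {P' : Matrix I J K} (hPP' : P * P' = 1)
    (hP'P : P' * P = 1) (hP : P ∈ intertwiners ρ σ) : P' ∈ intertwiners σ ρ := fun a =>
  calc ρ a * P' = P' * P * (ρ a * P') := by rw [hP'P, Matrix.one_mul]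
    _ = P' * (σ a * P) * P' := by rw [hP]; simp only [Matrix.mul_assoc]
    _ = P' * σ a * (P * P') := by simp only [Matrix.mul_assoc]
    _ = P' * σ a := by rw [hPP', Matrix.mul_one]

end RepEquiv

section BlockSums

variable {K Λ : Type*} [Field K] [Ring Λ] [Algebra K Λ]
variable {R : Type*} [Fintype R] [DecidableEq R] {X : R → Type*} [∀ r, Fintype (X r)]
  [∀ r, DecidableEq (X r)]

variable (K X) in
/-- The inclusion of a summand into a direct sum of free modules. -/
def blockIncl (r : R) : Matrix (Σ r, X r) (X r) K :=
  (1 : Matrix (Σ r, X r) (Σ r, X r) K).submatrix id (Sigma.mk r)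

variable (K X) in
/-- The projection of a direct sum of free modules onto a summand. -/
def blockProj (r : R) : Matrix (X r) (Σ r, X r) K :=
  (1 : Matrix (Σ r, X r) (Σ r, X r) K).submatrix (Sigma.mk r) id

lemma mul_blockIncl {L : Type*} (M : Matrix L (Σ r, X r) K) (r : R) :
    M * blockIncl K X r = M.submatrix id (Sigma.mk r) := by
  ext k j
  simp [blockIncl, Matrix.mul_apply, Matrix.one_apply]

lemma blockProj_mul {L : Type*} (M : Matrix (Σ r, X r) L K) (r : R) :
    blockProj K X r * M = M.submatrix (Sigma.mk r) id := by
  ext k j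
  simp [blockProj, Matrix.mul_apply, Matrix.one_apply]

lemma blockProj_mul_blockIncl_self (r : R) : blockProj K X r * blockIncl K X r = 1 := by
  ext k j
  simp [mul_blockIncl, blockProj, Matrix.one_apply]

lemma blockProj_mul_blockIncl_of_ne {r u : R} (h : u ≠ r) :
    blockProj K X u * blockIncl K X r = 0 := by
  ext k j
  simp [mul_blockIncl, blockProj, h]

lemma eq_of_mul_blockIncl_eq {L : Type*} {M N : Matrix L (Σ r, X r) K}
    (h : ∀ r, M * blockIncl K X r = N * blockIncl K X r) : M = N := by
  ext k ⟨r, j⟩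
  simpa only [mul_blockIncl, Matrix.submatrix_apply, id] using congrFun (congrFun (h r) k) j

variable (K X) in
lemma sum_blockIncl_mul_blockProj : ∑ r, blockIncl K X r * blockProj K X r = 1 :=
  eq_of_mul_blockIncl_eq fun u => by
    simp_rw [Matrix.sum_mul, Matrix.mul_assoc]
    rw [Finset.sum_eq_single u (fun r _ hr => by
      rw [blockProj_mul_blockIncl_of_ne hr, Matrix.mul_zero]) (by simp),
      blockProj_mul_blockIncl_self, Matrix.mul_one, Matrix.one_mul]

/-- The direct sum of a family of matrix representations. -/
def blockSum {A : Type*} [CommRing A] [Algebra K A] (ρ : ∀ r, Λ →ₐ[K] Matrix (X r) (X r) A) :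
    Λ →ₐ[K] Matrix (Σ r, X r) (Σ r, X r) A :=
  { (Matrix.blockDiagonal'RingHom X A).comp (AlgHom.pi ρ).toRingHom with
    commutes' := fun c => by
      change Matrix.blockDiagonal' (fun r => ρ r (algebraMap K Λ c)) = _
      simp_rw [AlgHom.commutes, Algebra.algebraMap_eq_smul_one]
      exact (Matrix.blockDiagonal'_smul c 1).trans (congrArg _ Matrix.blockDiagonal'_one) }

lemma blockSum_apply {A : Type*} [CommRing A] [Algebra K A]
    (ρ : ∀ r, Λ →ₐ[K] Matrix (X r) (X r) A) (a : Λ) :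
    blockSum ρ a = Matrix.blockDiagonal' fun r => ρ r a := rfl

lemma blockSum_apply_of_ne {A : Type*} [CommRing A] [Algebra K A]
    (ρ : ∀ r, Λ →ₐ[K] Matrix (X r) (X r) A) (a : Λ) {p q : Σ r, X r} (h : p.1 ≠ q.1) :
    blockSum ρ a p q = 0 :=
  Matrix.blockDiagonal'_apply_ne _ _ _ h

variable (ρ : ∀ r, Λ →ₐ[K] Matrix (X r) (X r) K)

lemma blockIncl_mem_intertwiners (r : R) : blockIncl K X r ∈ intertwiners (ρ r) (blockSum ρ) :=
  fun a => by
    ext ⟨u, k⟩ j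
    by_cases h : u = r
    · subst h
      simp [blockSum_apply, blockIncl, Matrix.mul_apply, Matrix.one_apply]
    · simp [blockSum_apply, blockIncl, Matrix.mul_apply, Matrix.one_apply, h,
        Matrix.blockDiagonal'_apply_ne]

lemma blockProj_mem_intertwiners (r : R) : blockProj K X r ∈ intertwiners (blockSum ρ) (ρ r) :=
  fun a => by
    ext k ⟨u, j⟩
    by_cases h : r = u
    · subst h
      simp [blockSum_apply, blockProj, Matrix.mul_apply, Matrix.one_apply]
    · simp [blockSum_apply, blockProj, Matrix.mul_apply, Matrix.one_apply, h,
        Matrix.blockDiagonal'_apply_ne]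

variable {ρ} {L : Type*} [Fintype L] [DecidableEq L] {σ : Λ →ₐ[K] Matrix L L K}

lemma mem_intertwiners_blockSum {P : Matrix L (Σ r, X r) K}
    (h : ∀ r, P * blockIncl K X r ∈ intertwiners (ρ r) σ) : P ∈ intertwiners (blockSum ρ) σ :=
  fun a => eq_of_mul_blockIncl_eq fun r => by
    rw [Matrix.mul_assoc, h, Matrix.mul_assoc, ← blockIncl_mem_intertwiners, Matrix.mul_assoc]

end BlockSums

section InternalDirectSums

variable {K : Type*} [Field K] {L : Type*}
variable {R : Type*} [Fintype R] [DecidableEq R] {X : R → Type*} [∀ r, Fintype (X r)]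
  [∀ r, DecidableEq (X r)] 

lemma exists_inverse_of_iSupIndep_range [Fintype L] [DecidableEq L]
    {ι : ∀ r, Matrix L (X r) K} (inj : ∀ r, Function.Injective (Matrix.toLin' (ι r)))
    (indep : iSupIndep fun r => LinearMap.range (Matrix.toLin' (ι r)))
    (sup : ⨆ r, LinearMap.range (Matrix.toLin' (ι r)) = ⊤) :
    ∃ (P : Matrix L (Σ r, X r) K) (P' : Matrix (Σ r, X r) L K),
      P * P' = 1 ∧ P' * P = 1 ∧ ∀ r, P * blockIncl K X r = ι r := by
  have internal := (DirectSum.isInternal_submodule_iff_iSupIndep_and_iSup_eq_top _).2 ⟨indep, sup⟩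
  let b := internal.collectedBasis fun r =>
    (Pi.basisFun K (X r)).map (LinearEquiv.ofInjective _ (inj r))
  refine ⟨(Pi.basisFun K L).toMatrix b, b.toMatrix (Pi.basisFun K L),
    Module.Basis.toMatrix_mul_toMatrix_flip _ _, Module.Basis.toMatrix_mul_toMatrix_flip _ _,
    fun r => ?_⟩
  ext k j
  simp [mul_blockIncl, Module.Basis.toMatrix_apply, b]

lemma iSupIndep_range_of_inverse [Fintype L] {P : Matrix L (Σ r, X r) K}
    {P' : Matrix (Σ r, X r) L K} (hP'P : P' * P = 1) :
    iSupIndep fun r => LinearMap.range (Matrix.toLin' (P * blockIncl K X r)) := fun r => by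
  classical
  have retract (u : R) : blockProj K X r * P' * (P * blockIncl K X u) =
      blockProj K X r * blockIncl K X u := by
    rw [Matrix.mul_assoc, ← Matrix.mul_assoc P', hP'P, Matrix.one_mul]
  have others_le : ⨆ (u) (_ : u ≠ r), LinearMap.range (Matrix.toLin' (P * blockIncl K X u)) ≤
      LinearMap.ker (Matrix.toLin' (blockProj K X r * P')) :=
    iSup₂_le fun u hu => LinearMap.range_le_ker_iff.2 <| by
      rw [← Matrix.toLin'_mul, retract, blockProj_mul_blockIncl_of_ne hu.symm, map_zero]
  refine Disjoint.mono_right others_le (Submodule.disjoint_def.2 ?_)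
  rintro _ ⟨v, rfl⟩ hv
  have hv' : v = 0 := by
    rwa [LinearMap.mem_ker, ← Matrix.toLin'_mul_apply, retract, blockProj_mul_blockIncl_self,
      Matrix.toLin'_one, LinearMap.id_apply] at hv
  rw [hv', map_zero]

lemma injective_mul_blockIncl_of_inverse [Fintype L] {P : Matrix L (Σ r, X r) K}
    {P' : Matrix (Σ r, X r) L K} (hP'P : P' * P = 1) (r : R) :
    Function.Injective (Matrix.toLin' (P * blockIncl K X r)) :=
  Function.LeftInverse.injective (g := (blockProj K X r * P').mulVec) fun v => by
    rw [Matrix.toLin'_apply, Matrix.mulVec_mulVec, Matrix.mul_assoc, ← Matrix.mul_assoc P', hP'P,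
      Matrix.one_mul, blockProj_mul_blockIncl_self, Matrix.one_mulVec]

lemma iSup_range_eq_top_of_inverse [Finite L] [DecidableEq L] {P : Matrix L (Σ r, X r) K}
    {P' : Matrix (Σ r, X r) L K}
    (hPP' : P * P' = 1) : ⨆ r, LinearMap.range (Matrix.toLin' (P * blockIncl K X r)) = ⊤ := by
  cases nonempty_fintype L
  refine eq_top_iff.2 fun w _ => ?_
  have expand : w = ∑ r, Matrix.toLin' (P * blockIncl K X r) ((blockProj K X r * P').mulVec w) := by
    simp_rw [Matrix.toLin'_apply, Matrix.mulVec_mulVec, Matrix.mul_assoc,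
      ← Matrix.mul_assoc (blockIncl K X _), ← Matrix.sum_mulVec, ← Matrix.mul_sum,
      ← Matrix.sum_mul, sum_blockIncl_mul_blockProj, Matrix.one_mul, hPP', Matrix.one_mulVec]
  rw [expand]
  exact Submodule.sum_mem _ fun r _ => Submodule.mem_iSup_of_mem r ⟨_, rfl⟩

end InternalDirectSums

section DirectSumSet

variable {Q : QuiverData} {K : Type} [Field K]
  {Rels : Set (FreeAlgebra K (Fin Q.n ⊕ Fin Q.numArrows))} {d : Fin Q.n → ℕ}

lemma exists_intertwiner_of_subrepIso {dy : Fin Q.n → ℕ} {x : GenV Q d K Rels}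
    {y : GenV Q dy K Rels} {N : Submodule K (Carrier Q d K)} (stable : Stable Q d K x.1 N)
    (iso : SubrepIso Q d K dy x.1 N y.1) :
    ∃ ι ∈ intertwiners (toRep y) (toRep x), Function.Injective (Matrix.toLin' ι) ∧
      LinearMap.range (Matrix.toLin' ι) = N := by
  obtain ⟨φ, φ_ker, φ_map, φ_arrow, φ_proj⟩ := iso
  have bijective : Function.Bijective (φ.domRestrict N) := by
    refine ⟨LinearMap.ker_eq_bot.1 (LinearMap.ker_eq_bot'.2 fun n hn => ?_), fun w => ?_⟩
    · exact Subtype.ext (φ_ker.le ⟨n.2, hn⟩)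
    · obtain ⟨n, hn, rfl⟩ := φ_map.ge (Submodule.mem_top (x := w))
      exact ⟨⟨n, hn⟩, rfl⟩
  let e : N ≃ₗ[K] Carrier Q dy K := LinearEquiv.ofBijective _ bijective
  have e_symm_comm {f : Carrier Q d K →ₗ[K] Carrier Q d K}
      {g : Carrier Q dy K →ₗ[K] Carrier Q dy K} (hf : N.map f ≤ N)
      (comm : ∀ m ∈ N, φ (f m) = g (φ m)) :
      (N.subtype ∘ₗ e.symm.toLinearMap) ∘ₗ g = f ∘ₗ N.subtype ∘ₗ e.symm.toLinearMap := by
    refine LinearMap.ext fun w => ?_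
    obtain ⟨n, rfl⟩ := e.surjective w
    have hn : g (e n) = e ⟨f n, hf ⟨n, n.2, rfl⟩⟩ := (comm n n.2).symm
    simp [hn]
  obtain ⟨ι, hι⟩ := Matrix.toLin'.surjective (N.subtype ∘ₗ e.symm.toLinearMap)
  refine ⟨ι, (repHom_toLin'_iff y x ι).1 ?_, ?_, ?_⟩ <;> rw [hι]
  · exact ⟨fun a => e_symm_comm (stable.1 a) (φ_arrow a),
      fun i => e_symm_comm (stable.2 i) (φ_proj i)⟩
  · exact N.injective_subtype.comp e.symm.injective
  · rw [LinearMap.range_comp, LinearEquiv.range, Submodule.map_top, Submodule.range_subtype]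

variable {dy : Fin Q.n → ℕ} {x : GenV Q d K Rels} {y : GenV Q dy K Rels}
  {ι : Matrix (Σ i, Fin (d i)) (Σ i, Fin (dy i)) K}

lemma stable_range_of_mem_intertwiners (hι : ι ∈ intertwiners (toRep y) (toRep x)) :
    Stable Q d K x.1 (LinearMap.range (Matrix.toLin' ι)) := by
  obtain ⟨ι_arrow, ι_proj⟩ := (repHom_toLin'_iff y x ι).2 hι
  constructor <;> intro k <;> rw [← LinearMap.range_comp]
  · exact (ι_arrow k).symm ▸ LinearMap.range_comp_le_range _ _
  · exact (ι_proj k).symm ▸ LinearMap.range_comp_le_range _ _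

lemma subrepIso_of_mem_intertwiners (hι : ι ∈ intertwiners (toRep y) (toRep x))
    (inj : Function.Injective (Matrix.toLin' ι)) :
    SubrepIso Q d K dy x.1 (LinearMap.range (Matrix.toLin' ι)) y.1 := by
  obtain ⟨φ, φ_ι⟩ :=
    (Matrix.toLin' ι).exists_leftInverse_of_injective (LinearMap.ker_eq_bot.2 inj)
  obtain ⟨ι_arrow, ι_proj⟩ := (repHom_toLin'_iff y x ι).2 hι
  have φ_ι_apply (v) : φ (Matrix.toLin' ι v) = v := LinearMap.congr_fun φ_ι v
  refine ⟨φ, ?_, ?_, ?_, ?_⟩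
  · refine eq_bot_iff.2 ?_
    rintro _ ⟨⟨v, rfl⟩, hv⟩
    rw [Submodule.mem_bot, (φ_ι_apply v).symm.trans hv, map_zero]
  · rw [← LinearMap.range_comp, φ_ι, LinearMap.range_id]
  · rintro a _ ⟨v, rfl⟩
    rw [← LinearMap.comp_apply (arrowMap ..), ← ι_arrow]
    exact (φ_ι_apply _).trans (congrArg (arrowMap ..) (φ_ι_apply v).symm)
  · rintro i _ ⟨v, rfl⟩
    rw [← LinearMap.comp_apply (proj ..), ← ι_proj]
    exact (φ_ι_apply _).trans (congrArg (proj ..) (φ_ι_apply v).symm)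

lemma mem_directSumSet_iff {s : ℕ} {D : Fin s → Fin Q.n → ℕ}
    {C : ∀ r, Set (GenV Q (D r) K Rels)} :
    x.1 ∈ DirectSumSet Q d K s D (fun r => Subtype.val '' C r) ↔
      ∃ y ∈ Set.univ.pi C, RepEquiv (blockSum fun r => toRep (y r)) (toRep x) := by
  constructor
  · rintro ⟨N, stable, indep, sup, iso⟩
    choose y' hy' iso using iso
    choose y hyC hy using hy'
    obtain rfl : (fun r => (y r).1) = y' := funext hy
    choose ι hι inj range_ι using fun r => exists_intertwiner_of_subrepIso (stable r) (iso r)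
    obtain rfl : (fun r => LinearMap.range (Matrix.toLin' (ι r))) = N := funext range_ι
    obtain ⟨P, P', hPP', hP'P, hP⟩ := exists_inverse_of_iSupIndep_range inj indep sup
    exact ⟨y, fun r _ => hyC r, P, P', hPP', hP'P,
      mem_intertwiners_blockSum fun r => (hP r).symm ▸ hι r⟩
  · rintro ⟨y, hyC, P, P', hPP', hP'P, hP⟩
    have mem (r) : P * blockIncl K _ r ∈ intertwiners (toRep (y r)) (toRep x) :=
      mul_mem_intertwiners (blockIncl_mem_intertwiners (fun r => toRep (y r)) r) hP
    exact ⟨fun r => LinearMap.range (Matrix.toLin' (P * blockIncl K _ r)),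
      fun r => stable_range_of_mem_intertwiners (mem r), iSupIndep_range_of_inverse hP'P,
      iSup_range_eq_top_of_inverse hPP', fun r => ⟨y r, ⟨y r, hyC r trivial, rfl⟩,
        subrepIso_of_mem_intertwiners (mem r) (injective_mul_blockIncl_of_inverse hP'P r)⟩⟩

end DirectSumSet

/-! ### Zariski topology and families of representations -/

section Zariski

variable {ι K : Type} [Field K]

lemma exists_eval_ne_zero_of_isOpen {U : Set (ι → K)} (hU : IsOpen[zariskiTopology ι K] U)
    {x : ι → K} (hx : x ∈ U) :
    ∃ p : MvPolynomial ι K, MvPolynomial.eval x p ≠ 0 ∧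
      ∀ y, MvPolynomial.eval y p ≠ 0 → y ∈ U := by
  induction hU with
  | basic U hU =>
    obtain ⟨p, rfl⟩ := hU
    exact ⟨p, hx, fun _ => id⟩
  | univ => exact ⟨1, by simp⟩
  | inter U V _ _ hU hV =>
    obtain ⟨p, hpx, hp⟩ := hU hx.1
    obtain ⟨q, hqx, hq⟩ := hV hx.2
    refine ⟨p * q, by simp [hpx, hqx], fun y hy => ?_⟩
    rw [map_mul] at hy
    exact ⟨hp y (left_ne_zero_of_mul hy), hq y (right_ne_zero_of_mul hy)⟩
  | sUnion S _ hS =>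
    obtain ⟨U, hUS, hxU⟩ := hx
    obtain ⟨p, hpx, hp⟩ := hS U hUS hxU
    exact ⟨p, hpx, fun y hy => ⟨U, hUS, hp y hy⟩⟩

lemma noetherianSpace_zariskiTopology [Finite ι] :
    @TopologicalSpace.NoetherianSpace (ι → K) (zariskiTopology ι K) := by
  let _ : TopologicalSpace (ι → K) := zariskiTopology ι K
  let toSpectrum (x : ι → K) : PrimeSpectrum (MvPolynomial ι K) :=
    ⟨RingHom.ker (MvPolynomial.eval x), RingHom.ker_isPrime _⟩
  refine Topology.IsInducing.noetherianSpace (i := toSpectrum) ⟨?_⟩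
  rw [PrimeSpectrum.isTopologicalBasis_basic_opens.eq_generateFrom, induced_generateFrom_eq]
  refine congrArg TopologicalSpace.generateFrom (Set.ext fun U => ?_)
  simp only [Set.mem_ofPred_eq, Set.mem_image, Set.mem_range, exists_exists_eq_and]
  exact ⟨fun ⟨p, hp⟩ => ⟨p, hp.symm⟩, fun ⟨p, hp⟩ => ⟨p, hp.symm⟩⟩

lemma exists_eval_rational_curve (q : Polynomial K) (p : ι → Polynomial K)
    (g : MvPolynomial ι K) : ∃ (N : ℕ) (G : Polynomial K), ∀ t, q.eval t ≠ 0 →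
      G.eval t = q.eval t ^ N * MvPolynomial.eval (fun i => (p i).eval t / q.eval t) g := by
  induction g using MvPolynomial.induction_on with
  | C c => exact ⟨0, .C c, fun t _ => by simp⟩
  | add g₁ g₂ h₁ h₂ =>
    obtain ⟨N₁, G₁, h₁⟩ := h₁
    obtain ⟨N₂, G₂, h₂⟩ := h₂
    refine ⟨N₁ + N₂, q ^ N₂ * G₁ + q ^ N₁ * G₂, fun t ht => ?_⟩
    simp only [Polynomial.eval_add, Polynomial.eval_mul, Polynomial.eval_pow, h₁ t ht, h₂ t ht,
      map_add]
    ring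
  | mul_X g i h =>
    obtain ⟨N, G, h⟩ := h
    refine ⟨N + 1, G * p i, fun t ht => ?_⟩
    simp only [Polynomial.eval_mul, h t ht, map_mul, MvPolynomial.eval_X]
    field_simp
    ring

lemma finite_rational_curve_notMem {q : Polynomial K} {p : ι → Polynomial K} {U : Set (ι → K)}
    (hU : IsOpen[zariskiTopology ι K] U) {t₀ : K} (hq : q.eval t₀ ≠ 0)
    (hp : (fun i => (p i).eval t₀ / q.eval t₀) ∈ U) :
    {t | ¬ (q.eval t ≠ 0 ∧ (fun i => (p i).eval t / q.eval t) ∈ U)}.Finite := by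
  obtain ⟨g, hg₀, hg⟩ := exists_eval_ne_zero_of_isOpen hU hp
  obtain ⟨N, G, hG⟩ := exists_eval_rational_curve q p g
  have product_ne_zero : q * G ≠ 0 := fun h => by
    have h₀ := congrArg (Polynomial.eval t₀) h
    rw [Polynomial.eval_mul, hG t₀ hq, Polynomial.eval_zero] at h₀
    exact mul_ne_zero hq (mul_ne_zero (pow_ne_zero N hq) hg₀) h₀
  refine (Polynomial.finite_setOfPred_isRoot product_ne_zero).subset fun t ht => ?_
  by_contra hroot
  rw [Set.mem_ofPred_eq, Polynomial.IsRoot, Polynomial.eval_mul, mul_eq_zero, not_or] at hroot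
  exact ht ⟨hroot.1, hg _ (right_ne_zero_of_mul (hG t hroot.1 ▸ hroot.2))⟩

end Zariski

section CrossTopology

variable {R : Type*} [DecidableEq R] {X : R → Type*} [∀ r, TopologicalSpace (X r)]

variable (X) in
/-- The topology on a product in which a set is open if it is open in each coordinate separately.
It is finer than the Zariski topology of a product of varieties, and products of irreducible sets
are still irreducible for it. -/
@[reducible] def crossTopology : TopologicalSpace (∀ r, X r) where
  IsOpen U := ∀ y r, IsOpen (Function.update y r ⁻¹' U)
  isOpen_univ _ _ := isOpen_univ
  isOpen_inter _ _ hU hV y r := (hU y r).inter (hV y r)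
  isOpen_sUnion S hS y r := by
    rw [Set.preimage_sUnion]
    exact isOpen_biUnion fun U hU => hS U hU y r

lemma continuous_crossTopology_iff {Y : Type*} [TopologicalSpace Y] {f : (∀ r, X r) → Y} :
    Continuous[crossTopology X, _] f ↔ ∀ y r, Continuous fun x => f (Function.update y r x) := by
  simp only [continuous_def]
  exact ⟨fun hf y r U hU => hf U hU y r, fun hf U hU y r => hf y r U hU⟩

lemma isIrreducible_crossTopology [Finite R] {C : ∀ r, Set (X r)} (hC : ∀ r, IsIrreducible (C r)) :
    @IsIrreducible _ (crossTopology X) (Set.univ.pi C) := by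
  cases nonempty_fintype R
  refine ⟨Set.univ_pi_nonempty_iff.2 fun r => (hC r).nonempty, ?_⟩
  rintro U V hU hV ⟨x, hxC, hxU⟩ ⟨y, hyC, hyV⟩
  suffices ∀ T : Finset R, ∃ x ∈ Set.univ.pi C ∩ U, ∃ y ∈ Set.univ.pi C ∩ V,
      ∀ r ∈ T, x r = y r by
    obtain ⟨x, hx, y, hy, hxy⟩ := this Finset.univ
    obtain rfl : x = y := funext fun r => hxy r (Finset.mem_univ r)
    exact ⟨x, hx.1, hx.2, hy.2⟩
  intro T
  induction T using Finset.induction_on with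
  | empty => exact ⟨x, ⟨hxC, hxU⟩, y, ⟨hyC, hyV⟩, by simp⟩
  | insert r T _ ih =>
    obtain ⟨x, ⟨hxC, hxU⟩, y, ⟨hyC, hyV⟩, hxy⟩ := ih
    obtain ⟨z, hzC, hzU, hzV⟩ := (hC r).2 _ _ (hU x r) (hV y r)
      ⟨x r, hxC r trivial, by rwa [Set.mem_preimage, Function.update_eq_self]⟩
      ⟨y r, hyC r trivial, by rwa [Set.mem_preimage, Function.update_eq_self]⟩
    have update_mem {w : ∀ r, X r} (hw : w ∈ Set.univ.pi C) :
        Function.update w r z ∈ Set.univ.pi C := fun u _ => by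
      rcases eq_or_ne u r with rfl | hu
      · rwa [Function.update_self]
      · rw [Function.update_of_ne hu]
        exact hw u trivial
    refine ⟨Function.update x r z, ⟨update_mem hxC, hzU⟩, Function.update y r z,
      ⟨update_mem hyC, hzV⟩, fun u hu => ?_⟩
    rcases eq_or_ne u r with rfl | hur
    · rw [Function.update_self, Function.update_self]
    · rw [Function.update_of_ne hur, Function.update_of_ne hur,
        hxy u ((Finset.mem_insert.1 hu).resolve_left hur)]

end CrossTopology

section GradedIso

variable {I L M V A : Type*} [Fintype I] [DecidableEq I] [Fintype L] [DecidableEq L] [Fintype M]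
  [DecidableEq M] [DecidableEq V] [CommRing A] {v : I → V} {w : L → V} {u : M → V}

/-- The matrices `P` and `P'` are mutually inverse isomorphisms between the free modules whose bases
are graded by `v` and `w`. -/
structure IsGradedIso (v : I → V) (w : L → V) (P : Matrix L I A) (P' : Matrix I L A) : Prop where
  mul_inv : P * P' = 1
  inv_mul : P' * P = 1
  graded : PreservesGrading v w P

variable {P : Matrix L I A} {P' : Matrix I L A}

lemma IsGradedIso.symm (hP : IsGradedIso v w P P') : IsGradedIso w v P' P where
  mul_inv := hP.inv_mul
  inv_mul := hP.mul_inv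
  graded i := by
    calc vertexMatrix A v i * P' = P' * (P * vertexMatrix A v i) * P' := by
          rw [← Matrix.mul_assoc, hP.inv_mul, Matrix.one_mul]
      _ = P' * vertexMatrix A w i * (P * P') := by rw [← hP.graded]; simp only [Matrix.mul_assoc]
      _ = P' * vertexMatrix A w i := by rw [hP.mul_inv, Matrix.mul_one]

lemma IsGradedIso.trans {R : Matrix M L A} {R' : Matrix L M A} (hR : IsGradedIso w u R R')
    (hP : IsGradedIso v w P P') : IsGradedIso v u (R * P) (P' * R') where
  mul_inv := by
    rw [Matrix.mul_assoc, ← Matrix.mul_assoc P, hP.mul_inv, Matrix.one_mul, hR.mul_inv]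
  inv_mul := by
    rw [Matrix.mul_assoc, ← Matrix.mul_assoc R', hR.inv_mul, Matrix.one_mul, hP.inv_mul]
  graded i := by
    rw [← Matrix.mul_assoc, hR.graded, Matrix.mul_assoc, hP.graded, Matrix.mul_assoc]

lemma IsGradedIso.map {K B : Type*} [Field K] [Algebra K A] [CommRing B] [Algebra K B]
    (hP : IsGradedIso v w P P') (f : A →ₐ[K] B) : IsGradedIso v w (P.map f) (P'.map f) where
  mul_inv := by rw [← Matrix.map_mul, hP.mul_inv, Matrix.map_one _ (map_zero f) (map_one f)]
  inv_mul := by rw [← Matrix.map_mul, hP.inv_mul, Matrix.map_one _ (map_zero f) (map_one f)]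
  graded i := by
    rw [← vertexMatrix_map f v, ← vertexMatrix_map f w, AlgHom.mapMatrix_apply,
      AlgHom.mapMatrix_apply, ← Matrix.map_mul, ← Matrix.map_mul, hP.graded]

variable {K Λ : Type*} [Field K] [Ring Λ] [Algebra K Λ] [Algebra K A]

/-- The representation obtained from `ρ` by transport along an isomorphism. -/
def conjRep (hP : IsGradedIso v w P P') (ρ : Λ →ₐ[K] Matrix I I A) : Λ →ₐ[K] Matrix L L A :=
  AlgHom.ofLinearMap
    { toFun := fun a => P * ρ a * P'
      map_add' := fun a b => by simp [Matrix.mul_add, Matrix.add_mul]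
      map_smul' := fun c a => by simp }
    (by simp [hP.mul_inv])
    fun a b => by
      change P * ρ (a * b) * P' = P * ρ a * P' * (P * ρ b * P')
      rw [map_mul, Matrix.mul_assoc (P * _), ← Matrix.mul_assoc P', ← Matrix.mul_assoc P',
        hP.inv_mul, Matrix.one_mul]
      simp only [Matrix.mul_assoc]

lemma conjRep_apply (hP : IsGradedIso v w P P') (ρ : Λ →ₐ[K] Matrix I I A) (a : Λ) :
    conjRep hP ρ a = P * ρ a * P' := rfl

lemma conjRep_conjRep {R : Matrix M L A} {R' : Matrix L M A} (hR : IsGradedIso w u R R')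
    (hP : IsGradedIso v w P P') (ρ : Λ →ₐ[K] Matrix I I A) :
    conjRep hR (conjRep hP ρ) = conjRep (hR.trans hP) ρ :=
  AlgHom.ext fun a => by simp only [conjRep_apply, Matrix.mul_assoc]

lemma conjRep_symm_conjRep (hP : IsGradedIso v w P P') (ρ : Λ →ₐ[K] Matrix I I A) :
    conjRep hP.symm (conjRep hP ρ) = ρ := AlgHom.ext fun a => by
  rw [conjRep_conjRep, conjRep_apply, hP.inv_mul, Matrix.one_mul, Matrix.mul_one]

end GradedIso

section SumPoints

variable {Q : QuiverData} {K : Type} [Field K]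
  {Rels : Set (FreeAlgebra K (Fin Q.n ⊕ Fin Q.numArrows))}

lemma isGraded_conjRep {I L A : Type*} [Fintype I] [DecidableEq I] [Fintype L] [DecidableEq L]
    [CommRing A] [Algebra K A] {v : I → Fin Q.n} {w : L → Fin Q.n} {P : Matrix L I A}
    {P' : Matrix I L A} (hP : IsGradedIso v w P P') {ρ : BoundAlgebra Q K Rels →ₐ[K] Matrix I I A}
    (h : IsGraded v ρ) : IsGraded w (conjRep hP ρ) := fun i => by
  rw [conjRep_apply, h, ← hP.graded, Matrix.mul_assoc, hP.mul_inv, Matrix.mul_one]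

lemma repEquiv_conjRep {K Λ I L V : Type*} [Field K] [Ring Λ] [Algebra K Λ] [Fintype I]
    [DecidableEq I] [Fintype L] [DecidableEq L] [DecidableEq V] {v : I → V} {w : L → V}
    {P : Matrix L I K} {P' : Matrix I L K} (hP : IsGradedIso v w P P')
    (ρ : Λ →ₐ[K] Matrix I I K) : RepEquiv ρ (conjRep hP ρ) :=
  ⟨P, P', hP.mul_inv, hP.inv_mul, fun a => by
    rw [conjRep_apply, Matrix.mul_assoc, hP.inv_mul, Matrix.mul_one]⟩

lemma isGraded_blockSum {R A : Type*} [Fintype R] [DecidableEq R] [CommRing A] [Algebra K A]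
    {X : R → Type*} [∀ r, Fintype (X r)] [∀ r, DecidableEq (X r)] {v : ∀ r, X r → Fin Q.n}
    {ρ : ∀ r, BoundAlgebra Q K Rels →ₐ[K] Matrix (X r) (X r) A} (h : ∀ r, IsGraded (v r) (ρ r)) :
    IsGraded (fun k : Σ r, X r => v k.1 k.2) (blockSum ρ) := fun i => by
  rw [blockSum_apply]
  simp_rw [h _ i, vertexMatrix]
  exact Matrix.blockDiagonal'_diagonal _

variable {d : Fin Q.n → ℕ} {s : ℕ}

/-- The vertex of a basis vector of the direct sum of representations of dimensions `D r`. -/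
abbrev sumGrading (D : Fin s → Fin Q.n → ℕ) (k : Σ r, Σ i, Fin (D r i)) : Fin Q.n := k.2.1

variable {D : Fin s → Fin Q.n → ℕ}
  {P : Matrix (Σ i, Fin (d i)) (Σ r, Σ i, Fin (D r i)) K}
  {P' : Matrix (Σ r, Σ i, Fin (D r i)) (Σ i, Fin (d i)) K}

/-- The point of `Rep_d(Λ)` that encodes the direct sum of the modules `M_{y r}` in the basis given
by `P`. -/
def sumPoint (hP : IsGradedIso (sumGrading D) Sigma.fst P P') (y : ∀ r, GenV Q (D r) K Rels) :
    GenV Q d K Rels :=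
  ofRep (conjRep hP (blockSum fun r => toRep (y r)))
    (isGraded_conjRep hP (isGraded_blockSum fun r => isGraded_toRep (y r)))

lemma toRep_sumPoint (hP : IsGradedIso (sumGrading D) Sigma.fst P P')
    (y : ∀ r, GenV Q (D r) K Rels) :
    toRep (sumPoint hP y) = conjRep hP (blockSum fun r => toRep (y r)) :=
  toRep_ofRep _

lemma repEquiv_sumPoint (hP : IsGradedIso (sumGrading D) Sigma.fst P P')
    (y : ∀ r, GenV Q (D r) K Rels) :
    RepEquiv (blockSum fun r => toRep (y r)) (toRep (sumPoint hP y)) :=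
  toRep_sumPoint hP y ▸ repEquiv_conjRep hP _

lemma mem_directSumSet_iff_exists_sumPoint {x : GenV Q d K Rels}
    {C : ∀ r, Set (GenV Q (D r) K Rels)} :
    x.1 ∈ DirectSumSet Q d K s D (fun r => Subtype.val '' C r) ↔
      ∃ (P : _) (P' : _) (hP : IsGradedIso (sumGrading D) Sigma.fst P P'),
        ∃ y ∈ Set.univ.pi C, x = sumPoint hP y := by
  rw [mem_directSumSet_iff]
  constructor
  · rintro ⟨y, hy, P, P', hPP', hP'P, hP⟩
    have graded := isGraded_blockSum fun r => isGraded_toRep (y r)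
    refine ⟨P, P', ⟨hPP', hP'P, fun i => ?_⟩, y, hy, toRep_injective ?_⟩
    · rw [← toRep_vertex x, hP, graded]
    · rw [toRep_sumPoint]
      refine AlgHom.ext fun a => ?_
      rw [conjRep_apply, ← hP, Matrix.mul_assoc, hPP', Matrix.mul_one]
  · rintro ⟨P, P', hP, y, hy, rfl⟩
    exact ⟨y, hy, repEquiv_sumPoint hP y⟩

lemma exists_isGradedIso_sigma (hsum : ∀ i, d i = ∑ r, D r i) :
    ∃ (P : Matrix (Σ i, Fin (d i)) (Σ r, Σ i, Fin (D r i)) K) (P' : _),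
      IsGradedIso (sumGrading D) Sigma.fst P P' := by
  obtain ⟨e, he⟩ := exists_equiv_sigma_of_card_fiber (d := d)
    (sumGrading D) fun i => by
      have fiber_equiv : {k // sumGrading D k = i} ≃ Σ r, {k : Σ i, Fin (D r i) // k.1 = i} :=
        ⟨fun k => ⟨k.1.1, k.1.2, k.2⟩, fun k => ⟨⟨k.1, k.2.1⟩, k.2.2⟩, fun _ => rfl, fun _ => rfl⟩
      rw [hsum, Fintype.card_congr fiber_equiv, Fintype.card_sigma]
      exact Finset.sum_congr rfl fun r _ => card_fiber_sigma_fst (D r) i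
  refine ⟨(1 : Matrix _ _ K).submatrix e.symm id, (1 : Matrix _ _ K).submatrix id e.symm, ?_, ?_,
    fun i => ?_⟩
  · rw [← Matrix.submatrix_mul _ _ _ _ _ Function.bijective_id, Matrix.one_mul,
      Matrix.submatrix_one_equiv]
  · rw [Matrix.submatrix_mul_equiv, Matrix.one_mul, Matrix.submatrix_id_id]
  · ext j k
    by_cases hjk : e.symm j = k
    · subst hjk
      simp [vertexMatrix, ← he]
    · simp [vertexMatrix, hjk]

end SumPoints

section FunctionSubalgebras

variable {K X : Type*} [Field K] {𝓡 : Subalgebra K (X → K)}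

lemma const_mem_subalgebra (c : K) : (fun _ => c) ∈ 𝓡 := 𝓡.algebraMap_mem c

lemma mul_apply_mem_subalgebra {I J L : Type*} [Fintype J] {M : X → Matrix I J K}
    {N : X → Matrix J L K} (hM : ∀ i j, (fun x => M x i j) ∈ 𝓡)
    (hN : ∀ j l, (fun x => N x j l) ∈ 𝓡) (i : I) (l : L) : (fun x => (M x * N x) i l) ∈ 𝓡 := by
  convert 𝓡.sum_mem fun j (_ : j ∈ Finset.univ) => 𝓡.mul_mem (hM i j) (hN j l) using 1
  exact funext fun x => by simp [Matrix.mul_apply]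

lemma det_mem_subalgebra {n : Type*} [Fintype n] [DecidableEq n] {M : X → Matrix n n K}
    (hM : ∀ i j, (fun x => M x i j) ∈ 𝓡) : (fun x => (M x).det) ∈ 𝓡 := by
  let entries : Matrix n n 𝓡 := Matrix.of fun i j => ⟨_, hM i j⟩
  convert entries.det.2 using 2 with x
  exact (((Pi.evalAlgHom K (fun _ => K) x).comp 𝓡.val).map_det entries).symm

lemma mul_sub_mul_apply_mem_subalgebra {I J : Type*} [Fintype I] [Fintype J]
    {M : X → Matrix I I K} {N : X → Matrix J J K} (hM : ∀ i j, (fun x => M x i j) ∈ 𝓡)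
    (hN : ∀ i j, (fun x => N x i j) ∈ 𝓡) (H : Matrix J I K) (j : J) (i : I) :
    (fun x => (N x * H - H * M x) j i) ∈ 𝓡 := by
  have const_mem (k l) : (fun _ : X => H k l) ∈ 𝓡 := const_mem_subalgebra (H k l)
  exact 𝓡.sub_mem (mul_apply_mem_subalgebra hN const_mem j i)
    (mul_apply_mem_subalgebra const_mem hM j i)

end FunctionSubalgebras

section RegularFunctions

variable {Q : QuiverData} {K : Type} [Field K]
  {Rels : Set (FreeAlgebra K (Fin Q.n ⊕ Fin Q.numArrows))} {d : Fin Q.n → ℕ}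

lemma noetherianSpace_genV : TopologicalSpace.NoetherianSpace (GenV Q d K Rels) :=
  have := noetherianSpace_zariskiTopology (ι := Coords Q d) (K := K)
  Topology.IsInducing.subtypeVal.noetherianSpace

lemma aeval_pi_apply {ι X : Type*} (z : ι → X → K) (p : MvPolynomial ι K) (x : X) :
    MvPolynomial.aeval z p x = MvPolynomial.eval (fun i => z i x) p := by
  rw [← MvPolynomial.coe_aeval_eq_eval]
  exact congrArg (· p) (MvPolynomial.comp_aeval z (Pi.evalAlgHom K (fun _ => K) x))

variable (Q K Rels d) in
/-- The algebra of polynomial functions on `Rep_d(Λ)`. -/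
noncomputable def regularFunctions : Subalgebra K (GenV Q d K Rels → K) :=
  (MvPolynomial.aeval fun c (x : GenV Q d K Rels) => x.1 c).range

lemma coord_mem_regularFunctions (c : Coords Q d) :
    (fun x => x.1 c) ∈ regularFunctions Q K Rels d :=
  ⟨MvPolynomial.X c, MvPolynomial.aeval_X _ c⟩

lemma isOpen_support_of_mem_regularFunctions {f : GenV Q d K Rels → K}
    (hf : f ∈ regularFunctions Q K Rels d) : IsOpen (Function.support f) := by
  obtain ⟨p, rfl⟩ := hf
  refine ⟨{x | MvPolynomial.eval x p ≠ 0}, .basic _ ⟨p, rfl⟩, Set.ext fun x => ?_⟩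
  rw [AlgHom.toRingHom_eq_coe, RingHom.coe_coe, Function.mem_support, aeval_pi_apply]
  rfl

lemma toRep_apply_mem_regularFunctions (a : BoundAlgebra Q K Rels) (j k : Σ i, Fin (d i)) :
    (fun x : GenV Q d K Rels => toRep x a j k) ∈ regularFunctions Q K Rels d := by
  obtain ⟨w, rfl⟩ := RingQuot.mkAlgHom_surjective K _ a
  let generic (c : Coords Q d) : regularFunctions Q K Rels d := ⟨_, coord_mem_regularFunctions c⟩
  convert (evalMatrix generic w j k).2 using 2 with x
  let evalAt := (Pi.evalAlgHom K (fun _ => K) x).comp (regularFunctions Q K Rels d).val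
  exact (congrFun (congrFun ((toRep_ofFree x w).trans (evalMatrix_map evalAt generic w).symm) j) k)

variable {X : Type*} {𝓡 : Subalgebra K (X → K)} [TopologicalSpace X]

lemma continuous_of_coord_mem_subalgebra (h𝓡 : ∀ f ∈ 𝓡, IsOpen (Function.support f))
    {φ : X → GenV Q d K Rels} (hφ : ∀ c, (fun x => (φ x).1 c) ∈ 𝓡) : Continuous φ := by
  refine continuous_induced_rng.2 (continuous_generateFrom_iff.2 ?_)
  rintro _ ⟨p, rfl⟩
  convert h𝓡 (MvPolynomial.aeval (fun c x => (φ x).1 c) p) ?_ using 1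
  · refine Set.ext fun x => ?_
    rw [Function.mem_support, aeval_pi_apply]
    rfl
  · refine Algebra.adjoin_le (S := 𝓡) (Set.range_subset_iff.2 hφ) ?_
    rw [Algebra.adjoin_range_eq_range_aeval]
    exact ⟨p, rfl⟩

variable {s : ℕ} {D : Fin s → Fin Q.n → ℕ}

lemma toRep_update_mem_regularFunctions (y : ∀ r, GenV Q (D r) K Rels) (r u : Fin s)
    (a : BoundAlgebra Q K Rels) (j k : Σ i, Fin (D u i)) :
    (fun x => toRep (Function.update y r x u) a j k) ∈ regularFunctions Q K Rels (D r) := by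
  rcases eq_or_ne u r with rfl | h
  · simp_rw [Function.update_self]
    exact toRep_apply_mem_regularFunctions a j k
  · simp_rw [Function.update_of_ne h]
    exact const_mem_subalgebra _

lemma continuous_sumPoint {P : Matrix (Σ i, Fin (d i)) (Σ r, Σ i, Fin (D r i)) K}
    {P' : Matrix (Σ r, Σ i, Fin (D r i)) (Σ i, Fin (d i)) K}
    (hP : IsGradedIso (sumGrading D) Sigma.fst P P') :
    Continuous[crossTopology _, _] fun y : ∀ r, GenV Q (D r) K Rels => sumPoint hP y := by
  refine continuous_crossTopology_iff.2 fun y r =>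
    continuous_of_coord_mem_subalgebra (fun f => isOpen_support_of_mem_regularFunctions) fun c => ?_
  refine mul_apply_mem_subalgebra (J := Σ r, Σ i, Fin (D r i)) (mul_apply_mem_subalgebra
    (J := Σ r, Σ i, Fin (D r i)) (fun j k => const_mem_subalgebra (P j k)) fun j k => ?_)
    (fun j k => const_mem_subalgebra (P' j k)) _ _
  obtain ⟨u, j⟩ := j
  obtain ⟨u', k⟩ := k
  rcases eq_or_ne u u' with rfl | h
  · simp_rw [blockSum_apply, Matrix.blockDiagonal'_apply_eq]
    exact toRep_update_mem_regularFunctions y r u _ j k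
  · simp_rw [blockSum_apply, Matrix.blockDiagonal'_apply_ne _ _ _ h]
    exact const_mem_subalgebra 0

end RegularFunctions

section Lines

variable {I L V K : Type*} [Field K]

lemma map_C_map_evalRingHom (M : Matrix L I K) (t : K) :
    (M.map Polynomial.C).map (Polynomial.evalRingHom t) = M := by
  ext
  simp

variable [Fintype I] [DecidableEq I] [Fintype L]

lemma exists_polynomial_of_line (P S : Matrix L I K) (P' : Matrix I L K) :
    ∃ q : Polynomial K, (∀ t, q.eval t = (P' * (P + t • S)).det) ∧
      ∀ (N : Matrix I I K) j k, ∃ p : Polynomial K, ∀ t, p.eval t =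
        ((P + t • S) * N * ((P' * (P + t • S)).adjugate * P')) j k := by
  let line : Matrix L I (Polynomial K) :=
    P.map Polynomial.C + (Polynomial.X : Polynomial K) • S.map Polynomial.C
  let square : Matrix I I (Polynomial K) := P'.map Polynomial.C * line
  have line_map (t : K) : line.map (Polynomial.evalRingHom t) = P + t • S := by
    ext j k
    simp [line]
    ring
  have square_map (t : K) : square.map (Polynomial.evalRingHom t) = P' * (P + t • S) := by
    rw [Matrix.map_mul, line_map, map_C_map_evalRingHom]
  refine ⟨square.det, fun t => ?_, fun N j k =>
    ⟨(line * N.map Polynomial.C * (square.adjugate * P'.map Polynomial.C)) j k, fun t => ?_⟩⟩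
  · rw [← Polynomial.coe_evalRingHom, RingHom.map_det, RingHom.mapMatrix_apply, square_map]
  · rw [← Polynomial.coe_evalRingHom, ← Matrix.map_apply (f := Polynomial.evalRingHom t),
      Matrix.map_mul, Matrix.map_mul, Matrix.map_mul, line_map, map_C_map_evalRingHom,
      map_C_map_evalRingHom, ← RingHom.mapMatrix_apply _ square.adjugate, RingHom.map_adjugate,
      RingHom.mapMatrix_apply, square_map]

variable [DecidableEq L] [DecidableEq V] {v : I → V} {w : L → V} {P R : Matrix L I K}
  {P' P'' : Matrix I L K}

lemma IsGradedIso.inv_unique (hP : IsGradedIso v w P P') (hP' : IsGradedIso v w P P'') :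
    P' = P'' := by
  rw [← Matrix.mul_one P', ← hP'.mul_inv, ← Matrix.mul_assoc, hP.inv_mul, Matrix.one_mul]

lemma IsGradedIso.of_det_ne_zero (hP : IsGradedIso v w P P')
    (hR : PreservesGrading v w R) (det_ne : (P' * R).det ≠ 0) :
    IsGradedIso v w R ((P' * R).det⁻¹ • ((P' * R).adjugate * P')) where
  mul_inv := by
    have R_eq : R = P * (P' * R) := by rw [← Matrix.mul_assoc, hP.mul_inv, Matrix.one_mul]
    calc R * ((P' * R).det⁻¹ • ((P' * R).adjugate * P'))
        = (P' * R).det⁻¹ • (P * (P' * R * (P' * R).adjugate) * P') := by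
          rw [Matrix.mul_smul, ← Matrix.mul_assoc, ← Matrix.mul_assoc P, ← R_eq]
      _ = 1 := by
          rw [Matrix.mul_adjugate, Matrix.mul_smul, Matrix.mul_one, Matrix.smul_mul, hP.mul_inv,
            smul_smul, inv_mul_cancel₀ det_ne, one_smul]
  inv_mul := by
    rw [Matrix.smul_mul, Matrix.mul_assoc, Matrix.adjugate_mul, smul_smul,
      inv_mul_cancel₀ det_ne, one_smul]
  graded := hR

lemma PreservesGrading.add_smul {S : Matrix L I K} (hP : PreservesGrading v w P)
    (hS : PreservesGrading v w S) (t : K) : PreservesGrading v w (P + t • S) := fun i => by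
  rw [Matrix.mul_add, Matrix.add_mul, Matrix.mul_smul, Matrix.smul_mul, hP, hS]

end Lines

section Irreducibility

variable {Q : QuiverData} {K : Type} [Field K]
  {Rels : Set (FreeAlgebra K (Fin Q.n ⊕ Fin Q.numArrows))}
variable {d : Fin Q.n → ℕ} {s : ℕ} {D : Fin s → Fin Q.n → ℕ}
  {P S P₁ P₂ : Matrix (Σ i, Fin (d i)) (Σ r, Σ i, Fin (D r i)) K}
  {P' P₁' P₂' : Matrix (Σ r, Σ i, Fin (D r i)) (Σ i, Fin (d i)) K}

lemma finite_sumPoint_line_notMem {U : Set (GenV Q d K Rels)} (hU : IsOpen U)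
    (hP : IsGradedIso (sumGrading D) Sigma.fst P P')
    (hS : PreservesGrading (sumGrading D) Sigma.fst S) (y : ∀ r, GenV Q (D r) K Rels)
    {t₀ : K} {R' : Matrix _ _ K}
    (hR : IsGradedIso (sumGrading D) Sigma.fst (P + t₀ • S) R') (hyU : sumPoint hR y ∈ U) :
    {t | ¬ ∃ h : (P' * (P + t • S)).det ≠ 0,
      sumPoint (hP.of_det_ne_zero (hP.graded.add_smul hS t) h) y ∈ U}.Finite := by
  obtain ⟨U, hU, rfl⟩ := hU
  obtain ⟨q, q_eval, entries⟩ := exists_polynomial_of_line P S P'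
  choose p p_eval using entries
  let curve (c : Coords Q d) : Polynomial K :=
    p (blockSum (fun r => toRep (y r)) (arrow c.1)) ⟨_, c.2.1⟩ ⟨_, c.2.2⟩
  have curve_eval (t : K) (h : (P' * (P + t • S)).det ≠ 0) :
      (fun c => (curve c).eval t / q.eval t) =
        (sumPoint (hP.of_det_ne_zero (hP.graded.add_smul hS t) h) y).1 := by
    funext c
    change _ = ((P + t • S) * blockSum (fun r => toRep (y r)) (arrow c.1) *
      ((P' * (P + t • S)).det⁻¹ • ((P' * (P + t • S)).adjugate * P')) :
        Matrix (Σ i, Fin (d i)) (Σ i, Fin (d i)) K) ⟨_, c.2.1⟩ ⟨_, c.2.2⟩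
    rw [p_eval, q_eval, Matrix.mul_smul, Matrix.smul_apply, smul_eq_mul, div_eq_inv_mul]
  have det_ne : (P' * (P + t₀ • S)).det ≠ 0 := by
    have inverse : P' * (P + t₀ • S) * (R' * P) = 1 := by
      rw [Matrix.mul_assoc, ← Matrix.mul_assoc _ R', hR.mul_inv, Matrix.one_mul, hP.inv_mul]
    exact Matrix.det_ne_zero_of_right_inverse inverse
  refine (finite_rational_curve_notMem hU (t₀ := t₀) (q := q) (p := curve) ?_ ?_).subset ?_
  · rwa [q_eval]
  · rw [curve_eval t₀ det_ne]
    obtain rfl := hR.inv_unique (hP.of_det_ne_zero (hP.graded.add_smul hS t₀) det_ne)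
    exact hyU
  · rintro t ht ⟨h, ht'⟩
    rw [q_eval] at h
    exact ht ⟨h, by rwa [curve_eval t h] at ht'⟩

lemma exists_sumPoint_mem_inter [Infinite K] {U V : Set (GenV Q d K Rels)} (hU : IsOpen U)
    (hV : IsOpen V) (hP₁ : IsGradedIso (sumGrading D) Sigma.fst P₁ P₁')
    (hP₂ : IsGradedIso (sumGrading D) Sigma.fst P₂ P₂') {y : ∀ r, GenV Q (D r) K Rels}
    (hyU : sumPoint hP₁ y ∈ U) (hyV : sumPoint hP₂ y ∈ V) :
    ∃ (P : _) (P' : _) (hP : IsGradedIso (sumGrading D) Sigma.fst P P'), sumPoint hP y ∈ U ∩ V := by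
  have hS : PreservesGrading (sumGrading D) Sigma.fst (P₂ - P₁) := fun i => by
    rw [Matrix.mul_sub, Matrix.sub_mul, hP₁.graded, hP₂.graded]
  have badU := finite_sumPoint_line_notMem hU hP₁ hS y (t₀ := 0) (R' := P₁')
    (by simpa using hP₁) (by simpa using hyU)
  have badV := finite_sumPoint_line_notMem hV hP₁ hS y (t₀ := 1) (R' := P₂')
    (by simpa using hP₂) (by simpa using hyV)
  obtain ⟨t, ht⟩ := (badU.union badV).exists_notMem
  rw [Set.mem_union, not_or, Set.mem_ofPred_eq, Set.mem_ofPred_eq, not_not, not_not] at ht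
  obtain ⟨⟨h, htU⟩, _, htV⟩ := ht
  exact ⟨_, _, _, htU, htV⟩

lemma isIrreducible_directSumSet [Infinite K] (hsum : ∀ i, d i = ∑ r, D r i)
    {C : ∀ r, Set (GenV Q (D r) K Rels)} (hC : ∀ r, IsIrreducible (C r)) :
    IsIrreducible {x : GenV Q d K Rels |
      x.1 ∈ DirectSumSet Q d K s D (fun r => Subtype.val '' C r)} := by
  have hpi := isIrreducible_crossTopology hC
  simp_rw [mem_directSumSet_iff_exists_sumPoint]
  constructor
  · obtain ⟨P, P', hP⟩ := exists_isGradedIso_sigma (K := K) hsum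
    obtain ⟨y, hy⟩ := hpi.1
    exact ⟨_, P, P', hP, y, hy, rfl⟩
  · rintro U V hU hV ⟨_, ⟨P₁, P₁', hP₁, y₁, hy₁, rfl⟩, hU₁⟩ ⟨_, ⟨P₂, P₂', hP₂, y₂, hy₂, rfl⟩, hV₂⟩
    obtain ⟨y, hy, hyU, hyV⟩ := hpi.2 _ _
      ((continuous_def.1 (continuous_sumPoint hP₁)) U hU)
      ((continuous_def.1 (continuous_sumPoint hP₂)) V hV) ⟨y₁, hy₁, hU₁⟩ ⟨y₂, hy₂, hV₂⟩
    obtain ⟨P, P', hP, hPy⟩ := exists_sumPoint_mem_inter hU hV hP₁ hP₂ hyU hyV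
    exact ⟨_, ⟨P, P', hP, y, hy, rfl⟩, hPy⟩

end Irreducibility

/-! ### Semicontinuity -/

section Semicontinuity

variable {K X ι : Type*} [Field K] {𝓡 : Subalgebra K (X → K)}
  {W : Type*} [AddCommGroup W] [Module K W]

lemma dual_apply_mem_subalgebra [Finite ι] (b : Module.Basis ι K W) {w : X → W}
    (hw : ∀ i, (fun x => b.repr (w x) i) ∈ 𝓡) (φ : Module.Dual K W) :
    (fun x => φ (w x)) ∈ 𝓡 := by
  cases nonempty_fintype ι
  convert 𝓡.sum_mem fun i (_ : i ∈ Finset.univ) =>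
    𝓡.mul_mem (hw i) (const_mem_subalgebra (φ (b i))) using 1
  funext x
  conv_lhs => rw [← b.sum_repr (w x), map_sum]
  simp

variable [FiniteDimensional K W] [TopologicalSpace X]

lemma isOpen_le_finrank_span (h𝓡 : ∀ f ∈ 𝓡, IsOpen (Function.support f)) {w : ι → X → W}
    (hw : ∀ (φ : Module.Dual K W) i, (fun x => φ (w i x)) ∈ 𝓡) (k : ℕ) :
    IsOpen {x | k ≤ Module.finrank K (Submodule.span K (Set.range (w · x)))} := by
  refine isOpen_iff_forall_mem_open.2 fun x₀ hx₀ => ?_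
  obtain ⟨v, v_mem, -, v_indep⟩ :=
    Submodule.exists_fun_fin_finrank_span_eq K (Set.range (w · x₀))
  choose i hi using v_mem
  obtain ⟨g, hg⟩ := (Fintype.linearCombination K v).exists_leftInverse_of_injective
    (LinearMap.ker_eq_bot.2 v_indep.fintypeLinearCombination_injective)
  let minor (x : X) : Matrix _ _ K := Matrix.of fun l j => g (w (i l) x) j
  refine ⟨Function.support fun x => (minor x).det, fun x hx => le_trans (Set.mem_ofPred.1 hx₀) ?_,
    h𝓡 _ (det_mem_subalgebra fun l j => hw (LinearMap.proj j ∘ₗ g) (i l)), ?_⟩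
  · have indep : LinearIndependent K fun l => w (i l) x :=
      .of_comp g (Matrix.linearIndependent_rows_of_det_ne_zero hx)
    rw [← Fintype.card_fin (Module.finrank K _), ← finrank_span_eq_card indep]
    exact Submodule.finrank_mono (Submodule.span_mono (Set.range_comp_subset_range i (w · x)))
  · have minor_eq_one : minor x₀ = 1 := by
      ext l j
      have := congrFun (LinearMap.congr_fun hg (Pi.single l 1)) j
      simpa [minor, hi, Matrix.one_apply, Pi.single_apply, eq_comm] using this
    simp [minor_eq_one]

lemma isOpen_finrank_iInf_ker_le (h𝓡 : ∀ f ∈ 𝓡, IsOpen (Function.support f))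
    {ℓ : ι → X → Module.Dual K W}
    (hℓ : ∀ v i, (fun x => ℓ i x v) ∈ 𝓡) (k : ℕ) :
    IsOpen {x | Module.finrank K (⨅ i, LinearMap.ker (ℓ i x) : Submodule K W) ≤ k} := by
  convert isOpen_le_finrank_span h𝓡 (w := ℓ) (fun φ i => ?_) (Module.finrank K W - k) using 3 with x
  · have coannihilator : (Submodule.span K (Set.range (ℓ · x))).dualCoannihilator =
        ⨅ i, LinearMap.ker (ℓ i x) := by
      ext v
      rw [← SetLike.mem_coe, Submodule.coe_dualCoannihilator_span]
      simp
    have := Subspace.finrank_add_finrank_dualCoannihilator_eq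
      (Submodule.span K (Set.range (ℓ · x)))
    rw [coannihilator] at this
    lia
  · obtain ⟨v, rfl⟩ := (Module.evalEquiv K W).surjective φ
    exact hℓ v i

lemma isOpen_iInf_ker_le_span (h𝓡 : ∀ f ∈ 𝓡, IsOpen (Function.support f))
    {ι' : Type*} {w : ι → X → W} {ℓ : ι' → X → Module.Dual K W}
    (hw : ∀ (φ : Module.Dual K W) i, (fun x => φ (w i x)) ∈ 𝓡)
    (hℓ : ∀ v i, (fun x => ℓ i x v) ∈ 𝓡) (vanish : ∀ x i j, ℓ j x (w i x) = 0) :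
    IsOpen {x | ⨅ j, LinearMap.ker (ℓ j x) ≤ Submodule.span K (Set.range (w · x))} := by
  refine isOpen_iff_forall_mem_open.2 fun x₀ hx₀ => ⟨_, fun x hx => ?_,
    (isOpen_le_finrank_span h𝓡 hw _).inter (isOpen_finrank_iInf_ker_le h𝓡 hℓ _),
    Submodule.finrank_mono hx₀, Set.mem_ofPred.2 le_rfl⟩
  refine (Submodule.eq_of_le_of_finrank_le ?_ (hx.2.trans hx.1)).ge
  rw [Submodule.span_le, Set.range_subset_iff]
  exact fun i => (Submodule.mem_iInf _).2 fun j => vanish x i j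

end Semicontinuity

section EndomorphismDimension

variable {Q : QuiverData} {K : Type} [Field K]
  {Rels : Set (FreeAlgebra K (Fin Q.n ⊕ Fin Q.numArrows))} {d : Fin Q.n → ℕ}

lemma isOpen_finrank_intertwiners_le (k : ℕ) :
    IsOpen {x : GenV Q d K Rels |
      Module.finrank K (intertwiners (toRep x) (toRep x)) ≤ k} := by
  let commutator (c : BoundAlgebra Q K Rels × (Σ i, Fin (d i)) × (Σ i, Fin (d i)))
      (x : GenV Q d K Rels) : Module.Dual K (Matrix (Σ i, Fin (d i)) (Σ i, Fin (d i)) K) :=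
    Matrix.entryLinearMap K K c.2.1 c.2.2 ∘ₗ
      (LinearMap.mulLeft K (toRep x c.1) - LinearMap.mulRight K (toRep x c.1))
  have eq_iInf (x : GenV Q d K Rels) :
      intertwiners (toRep x) (toRep x) = ⨅ c, LinearMap.ker (commutator c x) := by
    ext H
    rw [Submodule.mem_iInf]
    refine ⟨fun hH c => ?_, fun hH a => Matrix.ext fun i j => sub_eq_zero.1 (hH ⟨a, i, j⟩)⟩
    simp [commutator, hH c.1]
  convert isOpen_finrank_iInf_ker_le (fun f => isOpen_support_of_mem_regularFunctions)
    (ℓ := commutator) (fun H c =>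
    mul_sub_mul_apply_mem_subalgebra (toRep_apply_mem_regularFunctions c.1)
      (toRep_apply_mem_regularFunctions c.1) H c.2.1 c.2.2) k
    using 3 with x
  rw [eq_iInf]

end EndomorphismDimension

section FreeDerivations

variable {Q : QuiverData} {K : Type} [Field K]
  {Rels : Set (FreeAlgebra K (Fin Q.n ⊕ Fin Q.numArrows))}
variable {I J : Type*} [Fintype I] [DecidableEq I] [Fintype J] [DecidableEq J]
variable (ρ : BoundAlgebra Q K Rels →ₐ[K] Matrix I I K)
  (σ : BoundAlgebra Q K Rels →ₐ[K] Matrix J J K)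

/-- The representation of the free algebra on the vertices and arrows in which `c` is the
off-diagonal part of the action of the arrows and the vertices act diagonally. -/
def freeExtension (c : Fin Q.numArrows → Matrix J I K) :
    FreeAlgebra K (Fin Q.n ⊕ Fin Q.numArrows) →ₐ[K] Matrix (J ⊕ I) (J ⊕ I) K :=
  FreeAlgebra.lift K <| Sum.elim
    (fun i => Matrix.fromBlocks (σ (vertex i)) 0 0 (ρ (vertex i)))
    fun a => Matrix.fromBlocks (σ (arrow a)) (c a) 0 (ρ (arrow a))

/-- The derivation of the free algebra on the vertices and arrows that takes the values `c` on the
arrows and vanishes on the vertices; a cocycle of `Λ` is one that respects the relations. -/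
def freeDerivation (c : Fin Q.numArrows → Matrix J I K) :
    FreeAlgebra K (Fin Q.n ⊕ Fin Q.numArrows) →ₗ[K] Matrix J I K where
  toFun w := (freeExtension ρ σ c w).toBlocks₁₂
  map_add' _ _ := by rw [map_add]; rfl
  map_smul' _ _ := by rw [map_smul]; rfl

variable (c : Fin Q.numArrows → Matrix J I K)

lemma freeExtension_apply (w : FreeAlgebra K (Fin Q.n ⊕ Fin Q.numArrows)) :
    freeExtension ρ σ c w =
      Matrix.fromBlocks (σ (ofFree w)) (freeDerivation ρ σ c w) 0 (ρ (ofFree w)) := by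
  suffices ∃ δ, freeExtension ρ σ c w =
      Matrix.fromBlocks (σ (ofFree w)) δ 0 (ρ (ofFree w)) by
    obtain ⟨δ, hδ⟩ := this
    rw [freeDerivation, LinearMap.coe_mk, AddHom.coe_mk, hδ, Matrix.toBlocks_fromBlocks₁₂]
  induction w using FreeAlgebra.induction with
  | grade0 t =>
    exact ⟨0, by simp [Algebra.algebraMap_eq_smul_one, Matrix.fromBlocks_smul,
      ← Matrix.fromBlocks_one]⟩
  | grade1 g =>
    rcases g with i | a
    · exact ⟨0, FreeAlgebra.lift_ι_apply _ _⟩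
    · exact ⟨c a, FreeAlgebra.lift_ι_apply _ _⟩
  | mul w₁ w₂ h₁ h₂ =>
    obtain ⟨δ₁, h₁⟩ := h₁
    obtain ⟨δ₂, h₂⟩ := h₂
    exact ⟨σ (ofFree w₁) * δ₂ + δ₁ * ρ (ofFree w₂), by simp [h₁, h₂, Matrix.fromBlocks_multiply]⟩
  | add w₁ w₂ h₁ h₂ =>
    obtain ⟨δ₁, h₁⟩ := h₁
    obtain ⟨δ₂, h₂⟩ := h₂
    exact ⟨δ₁ + δ₂, by simp [h₁, h₂, Matrix.fromBlocks_add]⟩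

variable {ρ σ} in
lemma freeDerivation_mul (w₁ w₂ : FreeAlgebra K (Fin Q.n ⊕ Fin Q.numArrows)) :
    freeDerivation ρ σ c (w₁ * w₂) =
      σ (ofFree w₁) * freeDerivation ρ σ c w₂ + freeDerivation ρ σ c w₁ * ρ (ofFree w₂) := by
  have h := congrArg Matrix.toBlocks₁₂ (map_mul (freeExtension ρ σ c) w₁ w₂)
  rwa [freeExtension_apply, freeExtension_apply, freeExtension_apply, Matrix.fromBlocks_multiply,
    Matrix.toBlocks_fromBlocks₁₂, Matrix.toBlocks_fromBlocks₁₂] at h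

lemma freeDerivation_vertex (i : Fin Q.n) :
    freeDerivation ρ σ c (FreeAlgebra.ι K (.inl i)) = 0 :=
  congrArg Matrix.toBlocks₁₂ (FreeAlgebra.lift_ι_apply _ (Sum.inl i))

lemma freeDerivation_arrow (a : Fin Q.numArrows) :
    freeDerivation ρ σ c (FreeAlgebra.ι K (.inr a)) = c a :=
  congrArg Matrix.toBlocks₁₂ (FreeAlgebra.lift_ι_apply _ (Sum.inr a))

variable {ρ σ c}

lemma freeDerivation_unique {δ : FreeAlgebra K (Fin Q.n ⊕ Fin Q.numArrows) →ₗ[K] Matrix J I K}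
    (δ_mul : ∀ w₁ w₂, δ (w₁ * w₂) = σ (ofFree w₁) * δ w₂ + δ w₁ * ρ (ofFree w₂))
    (δ_vertex : ∀ i, δ (FreeAlgebra.ι K (.inl i)) = 0)
    (δ_arrow : ∀ a, δ (FreeAlgebra.ι K (.inr a)) = c a) : δ = freeDerivation ρ σ c := by
  have map_one_eq_zero {δ : FreeAlgebra K (Fin Q.n ⊕ Fin Q.numArrows) →ₗ[K] Matrix J I K}
      (h : δ (1 * 1) = σ (ofFree 1) * δ 1 + δ 1 * ρ (ofFree 1)) : δ 1 = 0 := by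
    simpa using h
  ext1 w
  induction w using FreeAlgebra.induction with
  | grade0 t =>
    rw [Algebra.algebraMap_eq_smul_one, map_smul, map_smul, map_one_eq_zero (δ_mul 1 1),
      map_one_eq_zero (freeDerivation_mul c 1 1)]
  | grade1 g =>
    rcases g with i | a
    · rw [δ_vertex, freeDerivation_vertex]
    · rw [δ_arrow, freeDerivation_arrow]
  | mul w₁ w₂ h₁ h₂ => rw [δ_mul, freeDerivation_mul, h₁, h₂]
  | add w₁ w₂ h₁ h₂ => rw [map_add, map_add, h₁, h₂]

lemma freeDerivation_add (c c' : Fin Q.numArrows → Matrix J I K) :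
    freeDerivation ρ σ (c + c') = freeDerivation ρ σ c + freeDerivation ρ σ c' :=
  (freeDerivation_unique (fun w₁ w₂ => by
      simp only [LinearMap.add_apply, freeDerivation_mul, Matrix.mul_add, Matrix.add_mul]
      abel)
    (fun i => by simp [freeDerivation_vertex]) fun a => by simp [freeDerivation_arrow]).symm

lemma freeDerivation_smul (t : K) (c : Fin Q.numArrows → Matrix J I K) :
    freeDerivation ρ σ (t • c) = t • freeDerivation ρ σ c :=
  (freeDerivation_unique (fun w₁ w₂ => by
      simp only [LinearMap.smul_apply, freeDerivation_mul, Matrix.mul_smul, Matrix.smul_mul,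
        smul_add])
    (fun i => by simp [freeDerivation_vertex]) fun a => by simp [freeDerivation_arrow]).symm

lemma exists_isCocycle_of_freeDerivation
    (hc : ∀ w w', BoundRel Q K Rels w w' → freeDerivation ρ σ c w = freeDerivation ρ σ c w') :
    ∃ δ, IsCocycle ρ σ δ ∧ ∀ w, δ (ofFree w) = freeDerivation ρ σ c w := by
  let E : BoundAlgebra Q K Rels →ₐ[K] Matrix (J ⊕ I) (J ⊕ I) K :=
    RingQuot.liftAlgHom K ⟨freeExtension ρ σ c, fun w w' h => by
      rw [freeExtension_apply, freeExtension_apply, hc w w' h, RingQuot.mkAlgHom_rel K h]⟩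
  let δ : BoundAlgebra Q K Rels →ₗ[K] Matrix J I K :=
    { toFun := fun b => (E b).toBlocks₁₂
      map_add' := fun _ _ => by rw [map_add]; rfl
      map_smul' := fun _ _ => by rw [map_smul]; rfl }
  have δ_ofFree (w) : δ (ofFree w) = freeDerivation ρ σ c w :=
    congrArg Matrix.toBlocks₁₂ (RingQuot.liftAlgHom_mkAlgHom_apply ..)
  refine ⟨δ, fun b b' => ?_, δ_ofFree⟩
  obtain ⟨w, rfl⟩ := RingQuot.mkAlgHom_surjective K _ b
  obtain ⟨w', rfl⟩ := RingQuot.mkAlgHom_surjective K _ b'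
  rw [← map_mul, δ_ofFree, δ_ofFree, δ_ofFree, freeDerivation_mul]

end FreeDerivations

section ExtOpenness

variable {Q : QuiverData} {K : Type} [Field K]
  {Rels : Set (FreeAlgebra K (Fin Q.n ⊕ Fin Q.numArrows))}
variable {I J : Type*} [Fintype I] [DecidableEq I] [Fintype J] [DecidableEq J]

/-- The entries of `freeDerivation ρ σ c b` as linear functions of the values `c` on the arrows. -/
def freeDerivationEntry (ρ : BoundAlgebra Q K Rels →ₐ[K] Matrix I I K)
    (σ : BoundAlgebra Q K Rels →ₐ[K] Matrix J J K)
    (b : FreeAlgebra K (Fin Q.n ⊕ Fin Q.numArrows)) (j : J) (i : I) :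
    Module.Dual K (Fin Q.numArrows → Matrix J I K) where
  toFun c := freeDerivation ρ σ c b j i
  map_add' c c' := by rw [freeDerivation_add]; rfl
  map_smul' t c := by rw [freeDerivation_smul]; rfl

/-- The map sending `H` to the values on the arrows of the inner derivation defined by `H`. -/
def innerOnArrows (ρ : BoundAlgebra Q K Rels →ₐ[K] Matrix I I K)
    (σ : BoundAlgebra Q K Rels →ₐ[K] Matrix J J K) :
    Matrix J I K →ₗ[K] Fin Q.numArrows → Matrix J I K where
  toFun H a := σ (arrow a) * H - H * ρ (arrow a)
  map_add' H H' := funext fun a => by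
    simp only [Pi.add_apply, Matrix.mul_add, Matrix.add_mul]
    abel
  map_smul' t H := funext fun a => by
    simp only [Pi.smul_apply, Matrix.mul_smul, Matrix.smul_mul, smul_sub, RingHom.id_apply]

lemma innerOnArrows_apply (ρ : BoundAlgebra Q K Rels →ₐ[K] Matrix I I K)
    (σ : BoundAlgebra Q K Rels →ₐ[K] Matrix J J K) (H : Matrix J I K) (a : Fin Q.numArrows) :
    innerOnArrows ρ σ H a = σ (arrow a) * H - H * ρ (arrow a) := rfl

variable {ρ : BoundAlgebra Q K Rels →ₐ[K] Matrix I I K}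
  {σ : BoundAlgebra Q K Rels →ₐ[K] Matrix J J K} {v : I → Fin Q.n} {w : J → Fin Q.n}

lemma freeDerivation_innerOnArrows (hρ : IsGraded v ρ) (hσ : IsGraded w σ) {H : Matrix J I K}
    (hH : PreservesGrading v w H) (b : FreeAlgebra K (Fin Q.n ⊕ Fin Q.numArrows)) :
    freeDerivation ρ σ (innerOnArrows ρ σ H) b = σ (ofFree b) * H - H * ρ (ofFree b) := by
  let inner : FreeAlgebra K (Fin Q.n ⊕ Fin Q.numArrows) →ₗ[K] Matrix J I K :=
    { toFun := fun b => σ (ofFree b) * H - H * ρ (ofFree b)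
      map_add' := fun b b' => by simp only [map_add, Matrix.mul_add, Matrix.add_mul]; abel
      map_smul' := fun t b => by
        simp only [map_smul, Matrix.mul_smul, Matrix.smul_mul, smul_sub, RingHom.id_apply] }
  refine (LinearMap.congr_fun (freeDerivation_unique (δ := inner) (fun b b' => ?_) (fun i => ?_)
    fun a => rfl) b).symm
  · simp only [inner, LinearMap.coe_mk, AddHom.coe_mk, map_mul, Matrix.mul_sub, Matrix.sub_mul,
      Matrix.mul_assoc, sub_add_sub_cancel]
  · exact sub_eq_zero.2 ((congrArg (· * H) (hσ i)).trans
      ((hH i).trans (congrArg (H * ·) (hρ i)).symm))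

lemma extVanishes_iff (hρ : IsGraded v ρ) (hσ : IsGraded w σ) :
    ExtVanishes vertex ρ σ ↔ ∀ c : Fin Q.numArrows → Matrix J I K,
      (∀ b b', BoundRel Q K Rels b b' → freeDerivation ρ σ c b = freeDerivation ρ σ c b') →
      ∃ H, PreservesGrading v w H ∧ innerOnArrows ρ σ H = c := by
  constructor
  · intro h c hc
    obtain ⟨δ, δ_cocycle, δ_ofFree⟩ := exists_isCocycle_of_freeDerivation hc
    have δ_vertex (i) : δ (vertex i) = 0 :=
      (δ_ofFree _).trans (freeDerivation_vertex ρ σ c i)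
    obtain ⟨H, hH⟩ := h δ δ_cocycle δ_vertex
    refine ⟨H, fun i => ?_, funext fun a => ?_⟩
    · rw [← hρ, ← hσ, ← sub_eq_zero, ← hH, δ_vertex]
    · rw [innerOnArrows_apply, ← hH, arrow, δ_ofFree, freeDerivation_arrow]
  · intro h δ δ_cocycle δ_vertex
    have δ_ofFree : δ ∘ₗ ofFree.toLinearMap = freeDerivation ρ σ fun a => δ (arrow a) :=
      freeDerivation_unique (fun b b' => by simp [δ_cocycle (ofFree b)]) δ_vertex fun a => rfl
    obtain ⟨H, H_graded, hH⟩ := h (fun a => δ (arrow a)) fun b b' hb => by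
      simp only [← δ_ofFree, LinearMap.comp_apply, AlgHom.toLinearMap_apply,
        RingQuot.mkAlgHom_rel K hb]
    refine ⟨H, fun b => ?_⟩
    obtain ⟨b, rfl⟩ := RingQuot.mkAlgHom_surjective K _ b
    rw [← freeDerivation_innerOnArrows hρ hσ H_graded, hH, ← δ_ofFree]
    rfl

variable {X : Type*} {𝓡 : Subalgebra K (X → K)}
  {ρ : X → BoundAlgebra Q K Rels →ₐ[K] Matrix I I K}
  {σ : X → BoundAlgebra Q K Rels →ₐ[K] Matrix J J K}

lemma freeDerivation_apply_mem_subalgebra (hρ : ∀ a i j, (fun x => ρ x a i j) ∈ 𝓡)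
    (hσ : ∀ a i j, (fun x => σ x a i j) ∈ 𝓡) (c : Fin Q.numArrows → Matrix J I K)
    (b : FreeAlgebra K (Fin Q.n ⊕ Fin Q.numArrows)) (j : J) (i : I) :
    (fun x => freeDerivation (ρ x) (σ x) c b j i) ∈ 𝓡 := by
  induction b using FreeAlgebra.induction generalizing i j with
  | grade0 t =>
    have map_one (x) : freeDerivation (ρ x) (σ x) c 1 = 0 := by
      simpa using freeDerivation_mul (ρ := ρ x) (σ := σ x) c 1 1
    simp_rw [Algebra.algebraMap_eq_smul_one, map_smul, map_one, smul_zero, Matrix.zero_apply]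
    exact const_mem_subalgebra 0
  | grade1 g =>
    rcases g with k | a
    · simp_rw [freeDerivation_vertex]
      exact const_mem_subalgebra 0
    · simp_rw [freeDerivation_arrow]
      exact const_mem_subalgebra _
  | mul b b' h h' =>
    simp_rw [freeDerivation_mul]
    exact 𝓡.add_mem (mul_apply_mem_subalgebra (hσ _) h' j i)
      (mul_apply_mem_subalgebra h (hρ _) j i)
  | add b b' h h' =>
    simp_rw [map_add]
    exact 𝓡.add_mem (h j i) (h' j i)

variable [TopologicalSpace X]

lemma isOpen_extVanishes (h𝓡 : ∀ f ∈ 𝓡, IsOpen (Function.support f))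
    (hρ : ∀ a i j, (fun x => ρ x a i j) ∈ 𝓡) (hσ : ∀ a i j, (fun x => σ x a i j) ∈ 𝓡)
    (hv : ∀ x, IsGraded v (ρ x)) (hw : ∀ x, IsGraded w (σ x)) :
    IsOpen {x | ExtVanishes vertex (ρ x) (σ x)} := by
  let graded : Submodule K (Matrix J I K) :=
    { carrier := {H | PreservesGrading v w H}
      add_mem' := fun h h' i => by rw [Matrix.mul_add, Matrix.add_mul, h i, h' i]
      zero_mem' := fun i => by rw [Matrix.mul_zero, Matrix.zero_mul]
      smul_mem' := fun t H h i => by rw [Matrix.mul_smul, Matrix.smul_mul, h i] }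
  let obstruction (k : {p : _ × _ // BoundRel Q K Rels p.1 p.2} × J × I) (x : X) :
      Module.Dual K (Fin Q.numArrows → Matrix J I K) :=
    freeDerivationEntry (ρ x) (σ x) k.1.1.1 k.2.1 k.2.2 -
      freeDerivationEntry (ρ x) (σ x) k.1.1.2 k.2.1 k.2.2
  have mem_ker_iff (x) (c) : c ∈ ⨅ k, LinearMap.ker (obstruction k x) ↔
      ∀ b b', BoundRel Q K Rels b b' →
        freeDerivation (ρ x) (σ x) c b = freeDerivation (ρ x) (σ x) c b' := by
    rw [Submodule.mem_iInf]
    exact ⟨fun h b b' hb => Matrix.ext fun j i => sub_eq_zero.1 (h ⟨⟨(b, b'), hb⟩, j, i⟩),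
      fun h k => sub_eq_zero.2 (congrFun₂ (h _ _ k.1.2) _ _)⟩
  have span_eq (x) : Submodule.span K (Set.range fun H : graded => innerOnArrows (ρ x) (σ x) H) =
      graded.map (innerOnArrows (ρ x) (σ x)) := by
    rw [Set.range_comp' (innerOnArrows (ρ x) (σ x)) Subtype.val, Submodule.span_image,
      Subtype.range_coe, Submodule.span_eq]
  convert isOpen_iInf_ker_le_span h𝓡 (w := fun (H : graded) x => innerOnArrows (ρ x) (σ x) H)
    (ℓ := obstruction) (fun φ H => ?_) (fun c k => ?_) (fun x H k => ?_) using 3 with x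
  · simp_rw [extVanishes_iff (hv x) (hw x), span_eq, SetLike.le_def, mem_ker_iff]
    rfl
  · refine dual_apply_mem_subalgebra (Pi.basis fun _ => Matrix.stdBasis K J I) (fun k => ?_) φ
    exact mul_sub_mul_apply_mem_subalgebra (hρ _) (hσ _) H.1 k.2.1 k.2.2
  · exact 𝓡.sub_mem (freeDerivation_apply_mem_subalgebra hρ hσ c _ _ _)
      (freeDerivation_apply_mem_subalgebra hρ hσ c _ _ _)
  · have inner_eq (b) := freeDerivation_innerOnArrows (hv x) (hw x) H.2 b
    have eq_of_rel := congrArg (fun a => σ x a * H.1 - H.1 * ρ x a)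
      (RingQuot.mkAlgHom_rel K k.1.2)
    exact sub_eq_zero.2 (congrFun₂ ((inner_eq _).trans (eq_of_rel.trans (inner_eq _).symm)) _ _)

end ExtOpenness

section ExtOpennessOnTuples

variable {Q : QuiverData} {K : Type} [Field K]
  {Rels : Set (FreeAlgebra K (Fin Q.n ⊕ Fin Q.numArrows))} {s : ℕ} {D : Fin s → Fin Q.n → ℕ}

lemma isOpen_crossTopology_extVanishes (r u : Fin s) :
    IsOpen[crossTopology fun r => GenV Q (D r) K Rels]
      {y | ExtVanishes vertex (toRep (y r)) (toRep (y u))} := fun y t =>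
  isOpen_extVanishes (fun _ => isOpen_support_of_mem_regularFunctions)
    (toRep_update_mem_regularFunctions y t r) (toRep_update_mem_regularFunctions y t u)
    (fun _ => isGraded_toRep _) fun _ => isGraded_toRep _

end ExtOpennessOnTuples

/-! ### Necessity of vanishing extensions -/

section SandwichedCocycles

variable {K Λ I J L M : Type*} [Field K] [Ring Λ] [Algebra K Λ] [Fintype I] [Fintype J]

/-- The linear map `a ↦ ι * δ a * π`. If `ι` and `π` are intertwiners and `δ` is a cocycle, this
represents the image of the class of `δ` under `Ext¹(π, ι)`. -/
def sandwich (ι : Matrix L J K) (π : Matrix I M K) (δ : Λ →ₗ[K] Matrix J I K) :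
    Λ →ₗ[K] Matrix L M K where
  toFun a := ι * δ a * π
  map_add' a b := by simp only [map_add, Matrix.mul_add, Matrix.add_mul]
  map_smul' t a := by simp only [map_smul, Matrix.mul_smul, Matrix.smul_mul, RingHom.id_apply]

lemma sandwich_apply (ι : Matrix L J K) (π : Matrix I M K) (δ : Λ →ₗ[K] Matrix J I K) (a : Λ) :
    sandwich ι π δ a = ι * δ a * π := rfl

variable [Fintype M] {δ : Λ →ₗ[K] Matrix J I K}

lemma sandwich_mul_sandwich {ι : Matrix M J K} {π : Matrix I M K} (hπι : π * ι = 0) (a b : Λ) :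
    sandwich ι π δ a * sandwich ι π δ b = 0 := by
  rw [sandwich_apply, sandwich_apply, Matrix.mul_assoc, ← Matrix.mul_assoc π, ← Matrix.mul_assoc π,
    hπι, Matrix.zero_mul, Matrix.zero_mul, Matrix.mul_zero]

variable [DecidableEq I] [DecidableEq J] [DecidableEq M] {ρ : Λ →ₐ[K] Matrix I I K}
  {σ : Λ →ₐ[K] Matrix J J K} {τ : Λ →ₐ[K] Matrix M M K}

lemma isCocycle_sandwich [Fintype L] [DecidableEq L] {θ : Λ →ₐ[K] Matrix L L K}
    {ι : Matrix L J K} {π : Matrix I M K} (hδ : IsCocycle ρ σ δ) (hι : ι ∈ intertwiners σ θ)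
    (hπ : π ∈ intertwiners τ ρ) : IsCocycle τ θ (sandwich ι π δ) := fun a b => by
  rw [sandwich_apply, hδ, Matrix.mul_add, Matrix.add_mul, ← Matrix.mul_assoc, ← hι a,
    ← Matrix.mul_assoc ι, Matrix.mul_assoc _ (ρ b), hπ b]
  simp only [sandwich_apply, Matrix.mul_assoc]

lemma inner_of_sandwich_inner {ι : Matrix M J K} {π : Matrix I M K} {ι' : Matrix M I K}
    {π' : Matrix J M K} (hι' : ι' ∈ intertwiners ρ τ) (hπ' : π' ∈ intertwiners τ σ)
    (πι' : π * ι' = 1) (π'ι : π' * ι = 1) (inner : ∃ H, ∀ a, sandwich ι π δ a = τ a * H - H * τ a) :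
    ∃ H : Matrix J I K, ∀ a, δ a = σ a * H - H * ρ a := by
  obtain ⟨H, hH⟩ := inner
  refine ⟨π' * H * ι', fun a => ?_⟩
  calc δ a = (π' * ι) * δ a * (π * ι') := by rw [πι', π'ι, Matrix.one_mul, Matrix.mul_one]
    _ = π' * sandwich ι π δ a * ι' := by
        rw [sandwich_apply]
        simp only [Matrix.mul_assoc]
    _ = π' * τ a * H * ι' - π' * H * (τ a * ι') := by
        rw [hH, Matrix.mul_sub, Matrix.sub_mul]
        simp only [Matrix.mul_assoc]
    _ = σ a * (π' * H * ι') - π' * H * ι' * ρ a := by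
        rw [← hπ', hι']
        simp only [Matrix.mul_assoc]

variable {R : Type*} [Fintype R] [DecidableEq R] {X : R → Type*} [∀ r, Fintype (X r)]
  [∀ r, DecidableEq (X r)] {ρ : ∀ r, Λ →ₐ[K] Matrix (X r) (X r) K}

lemma exists_intertwiners_of_repEquiv_blockSum (hτ : RepEquiv (blockSum ρ) τ) :
    ∃ (ι : ∀ r, Matrix M (X r) K) (π : ∀ r, Matrix (X r) M K),
      (∀ r, ι r ∈ intertwiners (ρ r) τ) ∧ (∀ r, π r ∈ intertwiners τ (ρ r)) ∧
        (∀ r, π r * ι r = 1) ∧ ∀ r u, r ≠ u → π r * ι u = 0 := by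
  obtain ⟨P, P', hPP', hP'P, hP⟩ := hτ
  have hP' := mem_intertwiners_of_inverse hPP' hP'P hP
  have cancel (r u) : blockProj K X r * P' * (P * blockIncl K X u) =
      blockProj K X r * blockIncl K X u := by
    rw [Matrix.mul_assoc, ← Matrix.mul_assoc P', hP'P, Matrix.one_mul]
  exact ⟨fun r => P * blockIncl K X r, fun r => blockProj K X r * P',
    fun r => mul_mem_intertwiners (blockIncl_mem_intertwiners _ r) hP,
    fun r => mul_mem_intertwiners hP' (blockProj_mem_intertwiners _ r),
    fun r => (cancel r r).trans (blockProj_mul_blockIncl_self r),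
    fun r u hru => (cancel r u).trans (blockProj_mul_blockIncl_of_ne hru)⟩

lemma exists_isCocycle_finrank_lt_of_not_extVanishes {S : Type*} {e : S → Λ}
    (hτ : RepEquiv (blockSum ρ) τ) {r u : R} (hru : r ≠ u)
    (nonsplit : ¬ ExtVanishes e (ρ r) (ρ u)) :
    ∃ δ : Λ →ₗ[K] Matrix M M K, IsCocycle τ τ δ ∧ (∀ a b, δ a * δ b = 0) ∧ (∀ i, δ (e i) = 0) ∧
      ∀ (t : K) (σ : Λ →ₐ[K] Matrix M M K), t ≠ 0 → (∀ a, σ a = τ a + t • δ a) →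
        Module.finrank K (intertwiners σ σ) < Module.finrank K (intertwiners τ τ) := by
  obtain ⟨ι, π, hι, hπ, πι_one, πι_zero⟩ := exists_intertwiners_of_repEquiv_blockSum hτ
  simp only [ExtVanishes, not_forall] at nonsplit
  obtain ⟨δ, hδ, δ_vertex, not_inner⟩ := nonsplit
  have cocycle := isCocycle_sandwich hδ (hι u) (hπ r)
  have sq := sandwich_mul_sandwich (δ := δ) (πι_zero r u hru)
  refine ⟨sandwich (ι u) (π r) δ, cocycle, sq, fun i => by simp [sandwich_apply, δ_vertex], ?_⟩
  intro t σ ht hσ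
  obtain rfl : σ = perturb (cocycle.smul t) (by simp [sq]) := AlgHom.ext hσ
  refine finrank_intertwiners_perturb_lt _ _ (mul_mem_intertwiners (hπ r) (hι r)) ?_
    (fun a => ?_) (fun a => ?_) ?_
  · rw [Matrix.mul_assoc, ← Matrix.mul_assoc (π r), πι_one, Matrix.one_mul]
  · rw [LinearMap.smul_apply, Matrix.smul_mul, sandwich_apply, Matrix.mul_assoc,
      ← Matrix.mul_assoc (π r), πι_one, Matrix.one_mul]
  · rw [LinearMap.smul_apply, Matrix.mul_smul, sandwich_apply, Matrix.mul_assoc (ι r),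
      ← Matrix.mul_assoc (π r), ← Matrix.mul_assoc (π r), πι_zero r u hru, Matrix.zero_mul,
      Matrix.zero_mul, Matrix.mul_zero, smul_zero]
  · rintro ⟨H, hH⟩
    refine not_inner (inner_of_sandwich_inner (hι r) (hπ u) (πι_one r) (πι_one u)
      ⟨t⁻¹ • H, fun a => ?_⟩)
    rw [Matrix.mul_smul, Matrix.smul_mul, ← smul_sub, ← hH, LinearMap.smul_apply,
      inv_smul_smul₀ ht]

end SandwichedCocycles

section GenericExtensions

variable {Q : QuiverData} {K : Type} [Field K]
  {Rels : Set (FreeAlgebra K (Fin Q.n ⊕ Fin Q.numArrows))} {d : Fin Q.n → ℕ}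

variable [Infinite K]

lemma exists_add_smul_mem_of_isOpen {O : Set (GenV Q d K Rels)} (hO : IsOpen O)
    {x : GenV Q d K Rels} (hx : x ∈ O)
    {δ : BoundAlgebra Q K Rels →ₗ[K] Matrix (Σ i, Fin (d i)) (Σ i, Fin (d i)) K}
    (hδ : IsCocycle (toRep x) (toRep x) δ) (sq : ∀ a b, δ a * δ b = 0)
    (δ_vertex : ∀ i, δ (vertex i) = 0) :
    ∃ t : K, t ≠ 0 ∧ ∃ z ∈ O, ∀ a, toRep z a = toRep x a + t • δ a := by
  obtain ⟨U, hU, rfl⟩ := hO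
  let ρ (t : K) := perturb (hδ.smul t) (by simp [sq])
  have graded (t) : IsGraded Sigma.fst (ρ t) := fun i => by
    rw [perturb_apply, LinearMap.smul_apply, δ_vertex, smul_zero, add_zero, isGraded_toRep]
  let line (c : Coords Q d) : Polynomial K :=
    .C (x.1 c) + .C (δ (arrow c.1) ⟨_, c.2.1⟩ ⟨_, c.2.2⟩) * .X
  have line_eval (t) : (fun c => (line c).eval t / (1 : Polynomial K).eval t) =
      (ofRep _ (graded t)).1 := by
    funext c
    have entry : x.1 c = toRep x (arrow c.1) ⟨_, c.2.1⟩ ⟨_, c.2.2⟩ :=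
      congrFun (coordsOfRep_repOfCoords x.1 _).symm c
    simp [line, ρ, ofRep, coordsOfRep, perturb_apply, entry, mul_comm t]
  have finite := finite_rational_curve_notMem hU (t₀ := 0) (q := 1) (p := line) (by simp)
    (by simpa [line] using hx)
  obtain ⟨t, ht⟩ := (finite.union (Set.finite_singleton 0)).exists_notMem
  rw [Set.mem_union, not_or, Set.mem_ofPred_eq, not_not, line_eval] at ht
  exact ⟨t, ht.2, ofRep _ (graded t), ht.1.2, fun a => DFunLike.congr_fun (toRep_ofRep _) a⟩

variable {s : ℕ} {D : Fin s → Fin Q.n → ℕ}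

lemma exists_finrank_intertwiners_lt_of_not_extVanishes {O : Set (GenV Q d K Rels)}
    (hO : IsOpen O) {x : GenV Q d K Rels} (hx : x ∈ O) {y : ∀ r, GenV Q (D r) K Rels}
    (hxy : RepEquiv (blockSum fun r => toRep (y r)) (toRep x)) {r u : Fin s} (hru : r ≠ u)
    (nonsplit : ¬ ExtVanishes vertex (toRep (y r)) (toRep (y u))) :
    ∃ z ∈ O, Module.finrank K (intertwiners (toRep z) (toRep z)) <
      Module.finrank K (intertwiners (toRep x) (toRep x)) := by
  obtain ⟨δ, hδ, sq, δ_vertex, finrank_lt⟩ :=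
    exists_isCocycle_finrank_lt_of_not_extVanishes hxy hru nonsplit
  obtain ⟨t, ht, z, hz, z_eq⟩ := exists_add_smul_mem_of_isOpen hO hx hδ sq δ_vertex
  exact ⟨z, hz, finrank_lt t _ ht z_eq⟩

theorem exists_extVanishes_of_closure_mem_irreducibleComponents
    {C : ∀ r, Set (GenV Q (D r) K Rels)}
    (h : closure {x : GenV Q d K Rels |
      x.1 ∈ DirectSumSet Q d K s D (fun r => Subtype.val '' C r)} ∈ irreducibleComponents _)
    {r u : Fin s} (hru : r ≠ u) :
    ∃ x ∈ C r, ∃ y ∈ C u, ExtVanishes vertex (toRep x) (toRep y) := by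
  by_contra! nonsplit
  set S := {x : GenV Q d K Rels | x.1 ∈ DirectSumSet Q d K s D (fun r => Subtype.val '' C r)}
  have := noetherianSpace_genV (Q := Q) (d := d) (K := K) (Rels := Rels)
  obtain ⟨O, hO, ⟨x₀, hx₀⟩, hOS⟩ :=
    TopologicalSpace.NoetherianSpace.exists_isOpen_nonempty_subset_irreducibleComponent _ h
  let endDim (x : GenV Q d K Rels) := Module.finrank K (intertwiners (toRep x) (toRep x))
  obtain ⟨x, ⟨hxS, hxO⟩, minimal⟩ := exists_minimalFor_of_wellFoundedLT (· ∈ S ∩ O) endDim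
    (Set.inter_comm O S ▸ mem_closure_iff.1 (hOS hx₀) O hO hx₀)
  obtain ⟨y, hy, hxy⟩ := mem_directSumSet_iff.1 hxS
  obtain ⟨z, hz, z_lt⟩ := exists_finrank_intertwiners_lt_of_not_extVanishes hO hxO hxy hru
    (nonsplit _ (hy r trivial) _ (hy u trivial))
  obtain ⟨x', ⟨hx'z, hx'O⟩, hx'S⟩ := mem_closure_iff.1 (hOS hz) _
    ((isOpen_finrank_intertwiners_le (endDim z)).inter hO) ⟨le_refl (endDim z), hz⟩
  exact (minimal ⟨hx'S, hx'O⟩ (hx'z.trans z_lt.le)).not_gt (hx'z.trans_lt z_lt)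

end GenericExtensions

/-! ### Deformations of direct sums over Artinian algebras -/

section Lifting

variable {K Λ R : Type*} [Field K] [Ring Λ] [Algebra K Λ] [Fintype R] [DecidableEq R]
  {X : R → Type*} [∀ r, Fintype (X r)] [∀ r, DecidableEq (X r)]
  {ρ₀ : ∀ r, Λ →ₐ[K] Matrix (X r) (X r) K}

lemma exists_inner_of_isCocycle_blockSum {S : Type*} {e : S → Λ}
    (hext : ∀ r u, r ≠ u → ExtVanishes e (ρ₀ r) (ρ₀ u))
    {δ : Λ →ₗ[K] Matrix (Σ r, X r) (Σ r, X r) K} (hδ : IsCocycle (blockSum ρ₀) (blockSum ρ₀) δ)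
    (δ_e : ∀ i, δ (e i) = 0) (δ_diag : ∀ a p q, p.1 = q.1 → δ a p q = 0) :
    ∃ H, ∀ a, δ a = blockSum ρ₀ a * H - H * blockSum ρ₀ a := by
  have inner (u r : R) : ∃ H : Matrix (X u) (X r) K, ∀ a,
      sandwich (blockProj K X u) (blockIncl K X r) δ a = ρ₀ u a * H - H * ρ₀ r a := by
    by_cases hru : r = u
    · subst hru
      refine ⟨0, fun a => ?_⟩
      ext k j
      simp [sandwich_apply, mul_blockIncl, blockProj_mul, δ_diag]
    · exact hext r u hru _ (isCocycle_sandwich hδ (blockProj_mem_intertwiners ρ₀ u)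
        (blockIncl_mem_intertwiners ρ₀ r)) fun i => by simp [sandwich_apply, δ_e]
  choose H hH using inner
  let total : Matrix (Σ r, X r) (Σ r, X r) K := fun p q => H p.1 q.1 p.2 q.2
  have block (u r) : blockProj K X u * total * blockIncl K X r = H u r := by
    rw [blockProj_mul, mul_blockIncl]
    rfl
  refine ⟨total, fun a => ?_⟩
  ext ⟨u, k⟩ ⟨r, j⟩
  suffices blockProj K X u * δ a * blockIncl K X r =
      blockProj K X u * (blockSum ρ₀ a * total - total * blockSum ρ₀ a) * blockIncl K X r by
    rw [blockProj_mul, blockProj_mul, mul_blockIncl, mul_blockIncl] at this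
    exact congrFun₂ this k j
  rw [Matrix.mul_sub, Matrix.sub_mul, ← Matrix.mul_assoc, ← blockProj_mem_intertwiners,
    ← Matrix.mul_assoc, Matrix.mul_assoc _ (blockSum ρ₀ a), blockIncl_mem_intertwiners,
    Matrix.mul_assoc (ρ₀ u a), Matrix.mul_assoc (ρ₀ u a), ← Matrix.mul_assoc _ _ (ρ₀ r a), block]
  exact hH u r a

variable {A : Type*} [CommRing A] [Algebra K A] {ε : A →ₐ[K] K} {J : Ideal A}
  {l : A →ₗ[K] K} {ρ : Λ →ₐ[K] Matrix (Σ r, X r) (Σ r, X r) A}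

lemma map_mul_eq_augmentation_mul (hl : ∀ x ∈ RingHom.ker ε * J, l x = 0) (x : A) {y : A}
    (hy : y ∈ J) : l (x * y) = ε x * l y := by
  have vanish : l ((x - algebraMap K A (ε x)) * y) = 0 :=
    hl _ (Ideal.mul_mem_mul (by simp [RingHom.mem_ker]) hy)
  rwa [sub_mul, map_sub, ← Algebra.smul_def, map_smul, smul_eq_mul, sub_eq_zero] at vanish

/-- The image under `l` of the entries of `ρ` outside the diagonal blocks. -/
def offDiagonal (l : A →ₗ[K] K) (ρ : Λ →ₐ[K] Matrix (Σ r, X r) (Σ r, X r) A) :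
    Λ →ₗ[K] Matrix (Σ r, X r) (Σ r, X r) K where
  toFun a := Matrix.of fun p q => if p.1 = q.1 then 0 else l (ρ a p q)
  map_add' a b := by
    ext p q
    by_cases h : p.1 = q.1 <;> simp [h]
  map_smul' t a := by
    ext p q
    by_cases h : p.1 = q.1 <;> simp [h]

lemma offDiagonal_of_eq {a : Λ} {p q : Σ r, X r} (h : p.1 = q.1) : offDiagonal l ρ a p q = 0 :=
  if_pos h

lemma offDiagonal_of_ne {a : Λ} {p q : Σ r, X r} (h : p.1 ≠ q.1) :
    offDiagonal l ρ a p q = l (ρ a p q) :=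
  if_neg h

lemma isCocycle_offDiagonal (hε : ∀ a, (ρ a).map ε = blockSum ρ₀ a)
    (hJ : ∀ a p q, p.1 ≠ q.1 → ρ a p q ∈ J) (hl : ∀ x ∈ RingHom.ker ε * J, l x = 0) :
    IsCocycle (blockSum ρ₀) (blockSum ρ₀) (offDiagonal l ρ) := fun a b => by
  ext p q
  have ε_apply (a p q) : ε (ρ a p q) = blockSum ρ₀ a p q := congrFun₂ (hε a) p q
  rw [Matrix.add_apply, Matrix.mul_apply, Matrix.mul_apply, ← Finset.sum_add_distrib]
  by_cases hpq : p.1 = q.1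
  · rw [offDiagonal_of_eq hpq]
    refine (Finset.sum_eq_zero fun w _ => ?_).symm
    by_cases hpw : p.1 = w.1
    · rw [offDiagonal_of_eq hpw, offDiagonal_of_eq (hpw ▸ hpq), mul_zero, zero_mul, add_zero]
    · rw [blockSum_apply_of_ne _ _ hpw, blockSum_apply_of_ne _ _ (hpq ▸ Ne.symm hpw), mul_zero,
        zero_mul, add_zero]
  · rw [offDiagonal_of_ne hpq, map_mul, Matrix.mul_apply, map_sum]
    refine Finset.sum_congr rfl fun w _ => ?_
    by_cases hwq : w.1 = q.1
    · have hpw : p.1 ≠ w.1 := hwq ▸ hpq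
      rw [mul_comm, map_mul_eq_augmentation_mul hl _ (hJ a _ _ hpw), offDiagonal_of_eq hwq,
        offDiagonal_of_ne hpw, ε_apply, mul_zero, zero_add, mul_comm]
    · rw [map_mul_eq_augmentation_mul hl _ (hJ b _ _ hwq), offDiagonal_of_ne hwq, ε_apply,
        blockSum_apply_of_ne _ _ hwq, mul_zero, add_zero]

lemma exists_dual_eq_zero_of_ne_bot (nilpotent : IsNilpotent (RingHom.ker ε)) (hJ : J ≠ ⊥) :
    ∃ t ∈ J, ∃ l : A →ₗ[K] K, l t = 1 ∧ ∀ x ∈ RingHom.ker ε * J, l x = 0 := by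
  have not_le : ¬ J ≤ RingHom.ker ε * J := by
    intro h
    obtain ⟨n, hn⟩ := nilpotent
    have le_pow (n : ℕ) : J ≤ RingHom.ker ε ^ n * J := by
      induction n with
      | zero => simp
      | succ n ih =>
        rw [pow_succ, mul_assoc]
        exact ih.trans (Ideal.mul_mono_right h)
    exact hJ (le_bot_iff.1 ((le_pow n).trans (by simp [hn])))
  obtain ⟨t, ht, ht'⟩ := Set.not_subset.1 not_le
  obtain ⟨l, lt, hl⟩ := Submodule.exists_dual_map_eq_bot_of_notMem
    (p := (RingHom.ker ε * J).restrictScalars K) ht' inferInstance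
  refine ⟨t, ht, (l t)⁻¹ • l, inv_mul_cancel₀ lt, fun x hx => ?_⟩
  have lx : l x ∈ ((RingHom.ker ε * J).restrictScalars K).map l := Submodule.mem_map_of_mem hx
  rw [hl, Submodule.mem_bot] at lx
  rw [LinearMap.smul_apply, lx, smul_zero]

lemma exists_isGradedIso_one_add {M V : Type*} [Fintype M] [DecidableEq M] [DecidableEq V]
    {v : M → V} {H : Matrix M M K} (hH : PreservesGrading v v H) {t : A} (ht : IsNilpotent t) :
    ∃ P', IsGradedIso v v (1 + t • H.map (algebraMap K A)) P' := by
  have unit : IsUnit (1 + t • H.map (algebraMap K A)) := by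
    refine IsNilpotent.isUnit_one_add ?_
    obtain ⟨n, hn⟩ := ht
    exact ⟨n, by rw [smul_pow, hn, zero_smul]⟩
  obtain ⟨P, hP⟩ := unit
  refine ⟨(P⁻¹ : (Matrix M M A)ˣ), ?_, ?_, fun i => ?_⟩
  · rw [← hP, Units.mul_inv]
  · rw [← hP, Units.inv_mul]
  · have graded : vertexMatrix A v i * H.map (algebraMap K A) =
        H.map (algebraMap K A) * vertexMatrix A v i := by
      have := congrArg (Algebra.ofId K A).mapMatrix (hH i)
      rwa [map_mul, map_mul, vertexMatrix_map] at this
    rw [mul_add, add_mul, mul_one, one_mul, mul_smul_comm, smul_mul_assoc, graded]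

end Lifting

section Rigidity

variable {K A : Type*} [Field K] [CommRing A] [Algebra K A] {ε : A →ₐ[K] K} {J : Ideal A}

lemma exists_lt_of_dual {l : A →ₗ[K] K} (hl : ∀ x ∈ RingHom.ker ε * J, l x = 0) {t : A}
    (ht : t ∈ J) (lt : l t ≠ 0) : ∃ J' < J, ∀ x ∈ J, l x = 0 → x ∈ J' := by
  let J' : Ideal A :=
    { carrier := {x | x ∈ J ∧ l x = 0}
      add_mem' := fun hx hy => ⟨J.add_mem hx.1 hy.1, by rw [map_add, hx.2, hy.2, add_zero]⟩
      zero_mem' := ⟨J.zero_mem, map_zero l⟩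
      smul_mem' := fun c x hx => ⟨J.mul_mem_left c hx.1, by
        rw [smul_eq_mul, map_mul_eq_augmentation_mul hl c hx.1, hx.2, mul_zero]⟩ }
  exact ⟨J', lt_of_le_of_ne (fun x hx => hx.1) fun h => lt (h.ge ht).2, fun x hx lx => ⟨hx, lx⟩⟩

lemma conjRep_one_add_apply {Λ M V : Type*} [Ring Λ] [Algebra K Λ] [Fintype M] [DecidableEq M]
    [DecidableEq V] {v : M → V} {H P' : Matrix M M A} {t : A}
    (hP : IsGradedIso v v (1 + t • H) P') (ρ : Λ →ₐ[K] Matrix M M A) (a : Λ) :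
    conjRep hP ρ a = ρ a + t • (H * ρ a - conjRep hP ρ a * H) := by
  have intertwine : conjRep hP ρ a * (1 + t • H) = (1 + t • H) * ρ a := by
    rw [conjRep_apply, mul_assoc, hP.inv_mul, mul_one]
  rw [mul_add, mul_one, mul_smul_comm, add_mul, one_mul, smul_mul_assoc,
    ← eq_sub_iff_add_eq] at intertwine
  rw [smul_sub, ← add_sub_assoc]
  exact intertwine

end Rigidity

section RigidityGraded

variable {Q : QuiverData} {K : Type} [Field K]
  {Rels : Set (FreeAlgebra K (Fin Q.n ⊕ Fin Q.numArrows))}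
  {R : Type*} [Fintype R] [DecidableEq R] {X : R → Type*} [∀ r, Fintype (X r)]
  [∀ r, DecidableEq (X r)] {ρ₀ : ∀ r, BoundAlgebra Q K Rels →ₐ[K] Matrix (X r) (X r) K}
  {A : Type*} [CommRing A] [Algebra K A] {ε : A →ₐ[K] K} {J : Ideal A}
  {ρ : BoundAlgebra Q K Rels →ₐ[K] Matrix (Σ r, X r) (Σ r, X r) A} {v : (Σ r, X r) → Fin Q.n}

lemma exists_preservesGrading_inner (hext : ∀ r u, r ≠ u → ExtVanishes vertex (ρ₀ r) (ρ₀ u))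
    (graded : IsGraded v ρ) (hε : ∀ a, (ρ a).map ε = blockSum ρ₀ a)
    (hJ : ∀ a p q, p.1 ≠ q.1 → ρ a p q ∈ J) {l : A →ₗ[K] K}
    (hl : ∀ x ∈ RingHom.ker ε * J, l x = 0) :
    ∃ H, PreservesGrading v v H ∧
      ∀ a, offDiagonal l ρ a = blockSum ρ₀ a * H - H * blockSum ρ₀ a := by
  have vertex_eq_zero (i) : offDiagonal l ρ (vertex i) = 0 := by
    ext p q
    by_cases hpq : p.1 = q.1
    · exact offDiagonal_of_eq hpq
    · rw [offDiagonal_of_ne hpq, graded, vertexMatrix,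
        Matrix.diagonal_apply_ne _ fun h => hpq (congrArg Sigma.fst h), map_zero]
      rfl
  obtain ⟨H, hH⟩ := exists_inner_of_isCocycle_blockSum hext (isCocycle_offDiagonal hε hJ hl)
    vertex_eq_zero fun _ _ _ => offDiagonal_of_eq
  refine ⟨H, fun i => ?_, hH⟩
  have reduced : blockSum ρ₀ (vertex i) = vertexMatrix K v i := by
    rw [← hε, graded, ← AlgHom.mapMatrix_apply, vertexMatrix_map]
  rw [← reduced, ← sub_eq_zero, ← hH, vertex_eq_zero]

lemma exists_conjRep_offDiagonal_mem_lt
    (hext : ∀ r u, r ≠ u → ExtVanishes vertex (ρ₀ r) (ρ₀ u))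
    (nilpotent : IsNilpotent (RingHom.ker ε)) (graded : IsGraded v ρ)
    (hε : ∀ a, (ρ a).map ε = blockSum ρ₀ a) (hJ : ∀ a p q, p.1 ≠ q.1 → ρ a p q ∈ J)
    (J_le : J ≤ RingHom.ker ε) (J_ne : J ≠ ⊥) :
    ∃ (P P' : _) (hP : IsGradedIso v v P P'), (∀ a, (conjRep hP ρ a).map ε = blockSum ρ₀ a) ∧
      ∃ J' < J, ∀ a p q, p.1 ≠ q.1 → conjRep hP ρ a p q ∈ J' := by
  obtain ⟨t, ht, l, lt, hl⟩ := exists_dual_eq_zero_of_ne_bot nilpotent J_ne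
  obtain ⟨H, hH, inner⟩ := exists_preservesGrading_inner hext graded hε hJ hl
  have ht_nilpotent : IsNilpotent t := by
    obtain ⟨n, hn⟩ := nilpotent
    have := Ideal.pow_mem_pow (J_le ht) n
    rw [hn] at this
    exact ⟨n, this⟩
  obtain ⟨P', hP⟩ := exists_isGradedIso_one_add hH ht_nilpotent
  obtain ⟨J', J'_lt, hJ'⟩ := exists_lt_of_dual hl ht (lt ▸ one_ne_zero)
  let H' : Matrix (Σ r, X r) (Σ r, X r) A := H.map (algebraMap K A)
  let correction (a : BoundAlgebra Q K Rels) := H' * ρ a - conjRep hP ρ a * H'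
  have conj (a p q) : conjRep hP ρ a p q = ρ a p q + correction a p q * t := by
    rw [mul_comm]
    exact congrFun₂ (conjRep_one_add_apply hP ρ a) p q
  have conj_ε (a) : (conjRep hP ρ a).map ε = blockSum ρ₀ a := by
    rw [← hε]
    ext p q
    rw [Matrix.map_apply, conj, map_add, map_mul, show ε t = 0 from J_le ht, mul_zero, add_zero]
    rfl
  have correction_ε (a) : (correction a).map ε = -offDiagonal l ρ a := by
    have H'_ε : H'.map ε = H := by ext; simp [H']
    rw [Matrix.map_sub _ (map_sub ε), Matrix.map_mul, Matrix.map_mul, hε, conj_ε, H'_ε, inner,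
      neg_sub]
  refine ⟨_, P', hP, conj_ε, J', J'_lt, fun a p q hpq => hJ' _ ?_ ?_⟩ <;> rw [conj]
  · exact J.add_mem (hJ a p q hpq) (J.mul_mem_left _ ht)
  · have := congrFun₂ (correction_ε a) p q
    rw [map_add, map_mul_eq_augmentation_mul hl _ ht, lt, mul_one, ← Matrix.map_apply (f := ε),
      this, Matrix.neg_apply, offDiagonal_of_ne hpq, add_neg_cancel]

end RigidityGraded

section DiagonalBlocks

variable {K Λ R A : Type*} [Field K] [Ring Λ] [Algebra K Λ] [Fintype R] [DecidableEq R]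
  {X : R → Type*} [∀ r, Fintype (X r)] [∀ r, DecidableEq (X r)] [CommRing A] [Algebra K A]

lemma exists_eq_blockSum {ρ : Λ →ₐ[K] Matrix (Σ r, X r) (Σ r, X r) A}
    (h : ∀ a p q, p.1 ≠ q.1 → ρ a p q = 0) :
    ∃ σ : ∀ r, Λ →ₐ[K] Matrix (X r) (X r) A, ρ = blockSum σ := by
  have eq_blockDiagonal (a) : ρ a = Matrix.blockDiagonal' (Matrix.blockDiag' (ρ a)) := by
    ext ⟨r, i⟩ ⟨u, j⟩
    by_cases hru : r = u
    · subst hru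
      rw [Matrix.blockDiagonal'_apply_eq, Matrix.blockDiag'_apply]
    · rw [Matrix.blockDiagonal'_apply_ne _ _ _ hru, h _ _ _ hru]
  let σ (r : R) : Λ →ₐ[K] Matrix (X r) (X r) A :=
    AlgHom.ofLinearMap
      { toFun := fun a => Matrix.blockDiag' (ρ a) r
        map_add' := fun a b => by simp
        map_smul' := fun c a => by simp }
      (by simp)
      fun a b => by
        change Matrix.blockDiag' (ρ (a * b)) r = _
        rw [map_mul, eq_blockDiagonal a, eq_blockDiagonal b, ← Matrix.blockDiagonal'_mul]
        simp only [Matrix.blockDiag'_blockDiagonal', LinearMap.coe_mk, AddHom.coe_mk]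
  exact ⟨σ, AlgHom.ext eq_blockDiagonal⟩

end DiagonalBlocks

section Diagonalization

variable {Q : QuiverData} {K : Type} [Field K]
  {Rels : Set (FreeAlgebra K (Fin Q.n ⊕ Fin Q.numArrows))}
  {R : Type*} [Fintype R] [DecidableEq R] {X : R → Type*} [∀ r, Fintype (X r)]
  [∀ r, DecidableEq (X r)] {ρ₀ : ∀ r, BoundAlgebra Q K Rels →ₐ[K] Matrix (X r) (X r) K}
  {A : Type*} [CommRing A] [Algebra K A] {ε : A →ₐ[K] K}

lemma isGraded_of_isGraded_blockSum {v : ∀ r, X r → Fin Q.n}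
    {σ : ∀ r, BoundAlgebra Q K Rels →ₐ[K] Matrix (X r) (X r) A}
    (h : IsGraded (fun k : Σ r, X r => v k.1 k.2) (blockSum σ)) (r : R) : IsGraded (v r) (σ r) :=
  fun i => by
    ext j k
    have := congrFun₂ (h i) ⟨r, j⟩ ⟨r, k⟩
    rw [blockSum_apply, Matrix.blockDiagonal'_apply_eq] at this
    simpa [vertexMatrix, Matrix.diagonal_apply] using this

lemma exists_conjRep_offDiagonal_eq_zero [IsArtinianRing A]
    (hext : ∀ r u, r ≠ u → ExtVanishes vertex (ρ₀ r) (ρ₀ u))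
    (nilpotent : IsNilpotent (RingHom.ker ε)) {J : Ideal A} (J_le : J ≤ RingHom.ker ε)
    {v : (Σ r, X r) → Fin Q.n} {ρ : BoundAlgebra Q K Rels →ₐ[K] Matrix (Σ r, X r) (Σ r, X r) A}
    (graded : IsGraded v ρ) (hε : ∀ a, (ρ a).map ε = blockSum ρ₀ a)
    (hJ : ∀ a p q, p.1 ≠ q.1 → ρ a p q ∈ J) :
    ∃ (P P' : _) (hP : IsGradedIso v v P P'), (∀ a, (conjRep hP ρ a).map ε = blockSum ρ₀ a) ∧
      ∀ a p q, p.1 ≠ q.1 → conjRep hP ρ a p q = 0 := by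
  induction J using WellFoundedLT.induction generalizing ρ with
  | ind J ih =>
    rcases eq_or_ne J ⊥ with rfl | J_ne
    · have identity : IsGradedIso v v (1 : Matrix (Σ r, X r) (Σ r, X r) A) 1 :=
        ⟨mul_one 1, mul_one 1, fun i => by rw [mul_one, one_mul]⟩
      have conj_one (a) : conjRep identity ρ a = ρ a := by
        rw [conjRep_apply, one_mul, mul_one]
      exact ⟨1, 1, identity, fun a => conj_one a ▸ hε a, fun a p q hpq => by
        rw [conj_one]
        exact hJ a p q hpq⟩
    · obtain ⟨P, P', hP, hPε, J', J'_lt, hPJ'⟩ :=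
        exists_conjRep_offDiagonal_mem_lt hext nilpotent graded hε hJ J_le J_ne
      obtain ⟨R, R', hR, hRP⟩ :=
        ih J' J'_lt (J'_lt.le.trans J_le) (isGraded_conjRep hP graded) hPε hPJ'
      rw [conjRep_conjRep] at hRP
      exact ⟨_, _, hR.trans hP, hRP⟩

lemma exists_conjRep_eq_blockSum [IsArtinianRing A]
    (hext : ∀ r u, r ≠ u → ExtVanishes vertex (ρ₀ r) (ρ₀ u))
    (nilpotent : IsNilpotent (RingHom.ker ε)) {v : ∀ r, X r → Fin Q.n}
    {ρ : BoundAlgebra Q K Rels →ₐ[K] Matrix (Σ r, X r) (Σ r, X r) A}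
    (graded : IsGraded (fun k : Σ r, X r => v k.1 k.2) ρ)
    (hε : ∀ a, (ρ a).map ε = blockSum ρ₀ a) :
    ∃ (P P' : _) (hP : IsGradedIso (fun k : Σ r, X r => v k.1 k.2) (fun k => v k.1 k.2) P P')
      (σ : ∀ r, BoundAlgebra Q K Rels →ₐ[K] Matrix (X r) (X r) A), conjRep hP ρ = blockSum σ ∧
      (∀ r, IsGraded (v r) (σ r)) ∧ ∀ r a, (σ r a).map ε = ρ₀ r a := by
  have mem_ker (a p q) (hpq : p.1 ≠ q.1) : ρ a p q ∈ RingHom.ker ε :=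
    (congrFun₂ (hε a) p q).trans (blockSum_apply_of_ne ρ₀ a hpq)
  obtain ⟨P, P', hP, hPε, diagonal⟩ :=
    exists_conjRep_offDiagonal_eq_zero hext nilpotent le_rfl graded hε mem_ker
  obtain ⟨σ, hσ⟩ := exists_eq_blockSum diagonal
  refine ⟨P, P', hP, σ, hσ, isGraded_of_isGraded_blockSum (hσ ▸ isGraded_conjRep hP graded),
    fun r a => ?_⟩
  ext i j
  have := congrFun₂ (hPε a) ⟨r, i⟩ ⟨r, j⟩
  rwa [hσ, Matrix.map_apply, blockSum_apply, blockSum_apply, Matrix.blockDiagonal'_apply_eq,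
    Matrix.blockDiagonal'_apply_eq] at this

end Diagonalization

section Krull

variable {R : Type*} [CommRing R] [IsNoetherianRing R]

lemma mem_of_forall_mem_sup_pow {𝔭 𝔪 : Ideal R} [𝔭.IsPrime] (ne_top : 𝔭 ⊔ 𝔪 ≠ ⊤) {f : R}
    (hf : ∀ n, f ∈ 𝔭 ⊔ 𝔪 ^ n) : f ∈ 𝔭 := by
  let 𝔫 := 𝔪.map (Ideal.Quotient.mk 𝔭)
  have 𝔫_ne_top : 𝔫 ≠ ⊤ := fun h => ne_top <| by
    rw [← Ideal.comap_map_quotientMk, show 𝔪.map (Ideal.Quotient.mk 𝔭) = ⊤ from h, Ideal.comap_top]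
  rw [← Ideal.Quotient.eq_zero_iff_mem, ← Ideal.mem_bot,
    ← Ideal.iInf_pow_eq_bot_of_isDomain 𝔫 𝔫_ne_top, Ideal.mem_iInf]
  intro n
  rw [← Ideal.map_pow, ← Ideal.mem_comap, Ideal.comap_map_quotientMk]
  exact hf n

variable {K : Type*} [Field K] [Algebra K R] {ε : R →ₐ[K] K}

lemma isArtinianRing_of_isNilpotent_ker (h : IsNilpotent (RingHom.ker ε)) : IsArtinianRing R := by
  have maximal : (RingHom.ker ε).IsMaximal := RingHom.ker_isMaximal_of_surjective ε
    fun c => ⟨algebraMap K R c, ε.commutes c⟩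
  obtain ⟨n, hn⟩ := h
  have := Ring.KrullDimLE.mk₀ fun 𝔭 (h𝔭 : 𝔭.IsPrime) => by
    have le : RingHom.ker ε ≤ 𝔭 := h𝔭.le_of_pow_le (hn.trans_le bot_le)
    exact maximal.eq_of_le h𝔭.ne_top le ▸ maximal
  exact isArtinianRing_iff_isNoetherianRing_krullDimLE_zero.2 ⟨inferInstance, this⟩

lemma mem_of_forall_artinian_quotient {𝔭 : Ideal R} [𝔭.IsPrime] (hε : 𝔭 ≤ RingHom.ker ε) {f : R}
    (h : ∀ I, 𝔭 ≤ I → IsArtinianRing (R ⧸ I) → ∀ hI : I ≤ RingHom.ker ε,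
      IsNilpotent (RingHom.ker (Ideal.Quotient.liftₐ I ε hI)) → f ∈ I) : f ∈ 𝔭 := by
  refine mem_of_forall_mem_sup_pow (𝔪 := RingHom.ker ε)
    (by rw [sup_eq_right.2 hε]; exact RingHom.ker_ne_top _) fun n => ?_
  have le_pow : 𝔭 ⊔ RingHom.ker ε ^ (n + 1) ≤ 𝔭 ⊔ RingHom.ker ε ^ n :=
    sup_le_sup_left (Ideal.pow_le_pow_right n.le_succ) 𝔭
  refine le_pow ?_
  have le_ker : 𝔭 ⊔ RingHom.ker ε ^ (n + 1) ≤ RingHom.ker ε :=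
    sup_le hε (Ideal.pow_le_self n.succ_ne_zero)
  let ε' := Ideal.Quotient.liftₐ _ ε le_ker
  have nilpotent : IsNilpotent (RingHom.ker ε') := by
    refine ⟨n + 1, ?_⟩
    have ker_eq : RingHom.ker ε' = (RingHom.ker ε).map (Ideal.Quotient.mk _) :=
      Ideal.ker_quotient_lift ε.toRingHom le_ker
    rw [ker_eq, ← Ideal.map_pow, Ideal.zero_eq_bot, Ideal.map_eq_bot_iff_le_ker, Ideal.mk_ker]
    exact le_sup_right
  exact h _ le_sup_left (isArtinianRing_of_isNilpotent_ker nilpotent) le_ker nilpotent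

end Krull

/-! ### Framed direct sums -/

section FramedSums

variable (Q : QuiverData) {s : ℕ} (d : Fin Q.n → ℕ) (D : Fin s → Fin Q.n → ℕ)

/-- The coordinates of a framed direct sum: the entries of an isomorphism and of its inverse, and
the coordinates of the summands. -/
abbrev FramedIndex : Type :=
  ((Σ i, Fin (d i)) × Σ r, Σ i, Fin (D r i)) ⊕
    ((Σ r, Σ i, Fin (D r i)) × Σ i, Fin (d i)) ⊕ Σ r, Coords Q (D r)

variable {Q d D} {A B : Type*}

/-- The isomorphism of a framed direct sum. -/
def frame (z : FramedIndex Q d D → A) : Matrix (Σ i, Fin (d i)) (Σ r, Σ i, Fin (D r i)) A :=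
  .of fun j k => z (.inl (j, k))

/-- The inverse of the isomorphism of a framed direct sum. -/
def coframe (z : FramedIndex Q d D → A) : Matrix (Σ r, Σ i, Fin (D r i)) (Σ i, Fin (d i)) A :=
  .of fun k j => z (.inr (.inl (k, j)))

/-- The coordinates of a summand of a framed direct sum. -/
def summandCoords (z : FramedIndex Q d D → A) (r : Fin s) : Coords Q (D r) → A :=
  fun c => z (.inr (.inr ⟨r, c⟩))

variable [CommRing A] [CommRing B]

/-- The coordinates of the representation of dimension `d` obtained by transporting the direct sum
of the summands along the frame. -/
def framedSum (z : FramedIndex Q d D → A) : Coords Q d → A := fun c =>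
  (frame z * Matrix.blockDiagonal' (fun r => arrowMatrix (summandCoords z r) c.1) * coframe z)
    ⟨_, c.2.1⟩ ⟨_, c.2.2⟩

variable {K : Type} [Field K] (Rels : Set (FreeAlgebra K (Fin Q.n ⊕ Fin Q.numArrows)))
  [Algebra K A] [Algebra K B]

/-- The frame and the coframe are mutually inverse graded isomorphisms, and the summands are
representations of `Λ`. -/
structure IsFramed (z : FramedIndex Q d D → A) : Prop where
  isGradedIso : IsGradedIso (sumGrading D) Sigma.fst (frame z) (coframe z)
  evalMatrix_eq_zero : ∀ r, ∀ rel ∈ Rels, evalMatrix (summandCoords z r) rel = 0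

variable {Rels}

lemma frame_map (f : A →ₐ[K] B) (z : FramedIndex Q d D → A) :
    (frame z).map f = frame (f ∘ z) := rfl

lemma coframe_map (f : A →ₐ[K] B) (z : FramedIndex Q d D → A) :
    (coframe z).map f = coframe (f ∘ z) := rfl

lemma summandCoords_map (f : A →ₐ[K] B) (z : FramedIndex Q d D → A) (r : Fin s) :
    f ∘ summandCoords z r = summandCoords (f ∘ z) r := rfl

lemma framedSum_map (f : A →ₐ[K] B) (z : FramedIndex Q d D → A) :
    f ∘ framedSum z = framedSum (f ∘ z) := funext fun c => by
  change ((_ * Matrix.blockDiagonal' _ * _ : Matrix _ _ A).map f) _ _ = _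
  rw [Matrix.map_mul, Matrix.map_mul, Matrix.blockDiagonal'_map _ _ (map_zero f)]
  simp_rw [← AlgHom.mapMatrix_apply, arrowMatrix_map]
  rfl

lemma framedSum_eq_coordsOfRep {z : FramedIndex Q d D → A} (hz : IsFramed Rels z) :
    framedSum z = coordsOfRep (conjRep hz.isGradedIso
      (blockSum fun r => repOfCoords (summandCoords z r) (hz.evalMatrix_eq_zero r))) := by
  funext c
  simp only [coordsOfRep, conjRep_apply, blockSum_apply, repOfCoords_arrow, framedSum]

end FramedSums

open MvPolynomial

section FramedIdeal

variable {Q : QuiverData} {s : ℕ} {d : Fin Q.n → ℕ} {D : Fin s → Fin Q.n → ℕ} {K : Type} [Field K]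
  (Rels : Set (FreeAlgebra K (Fin Q.n ⊕ Fin Q.numArrows)))

/-- The ideal of the scheme of framed direct sums: the polynomials that vanish at its points in all
commutative algebras. -/
noncomputable def framedIdeal : Ideal (MvPolynomial (FramedIndex Q d D) K) where
  carrier := {p | ∀ (A : Type) [CommRing A] [Algebra K A] (z : FramedIndex Q d D → A),
    IsFramed Rels z → aeval z p = 0}
  zero_mem' _ _ _ _ _ := map_zero _
  add_mem' hp hq A _ _ z hz := by rw [map_add, hp A z hz, hq A z hz, add_zero]
  smul_mem' c p hp A _ _ z hz := by rw [smul_eq_mul, map_mul, hp A z hz, mul_zero]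

variable {Rels}

lemma matrix_eq_of_mem_zeroLocus {I J : Type*}
    {M N : ∀ (A : Type) [CommRing A] [Algebra K A], (FramedIndex Q d D → A) → Matrix I J A}
    (hM : ∀ (A : Type) [CommRing A] [Algebra K A] z, (M _ X).map (aeval (R := K) z) = M A z)
    (hN : ∀ (A : Type) [CommRing A] [Algebra K A] z, (N _ X).map (aeval (R := K) z) = N A z)
    (h : ∀ (A : Type) [CommRing A] [Algebra K A] z, IsFramed Rels z → M A z = N A z)
    {w : FramedIndex Q d D → K} (hw : w ∈ zeroLocus K (framedIdeal Rels)) : M K w = N K w := by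
  rw [← hM, ← hN]
  ext i j
  refine sub_eq_zero.1 ((map_sub (aeval (R := K) w) _ _).symm.trans (hw _ fun A _ _ z hz => ?_))
  rw [map_sub, sub_eq_zero]
  exact congrFun₂ ((hM A z).trans ((h A z hz).trans (hN A z).symm)) i j

lemma aeval_comp_X {σ A : Type*} [CommRing A] [Algebra K A] (z : σ → A) :
    aeval (R := K) z ∘ X = z :=
  funext (aeval_X z)

lemma isFramed_of_mem_zeroLocus {w : FramedIndex Q d D → K}
    (hw : w ∈ zeroLocus K (framedIdeal Rels)) : IsFramed Rels w where
  isGradedIso :=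
    { mul_inv := matrix_eq_of_mem_zeroLocus (M := fun A _ _ z => frame z * coframe z)
        (N := fun A _ _ _ => 1)
        (fun A _ _ z => by rw [Matrix.map_mul, frame_map, coframe_map, aeval_comp_X])
        (fun A _ _ z => Matrix.map_one _ (map_zero _) (map_one _))
        (fun A _ _ z hz => hz.isGradedIso.mul_inv) hw
      inv_mul := matrix_eq_of_mem_zeroLocus (M := fun A _ _ z => coframe z * frame z)
        (N := fun A _ _ _ => 1)
        (fun A _ _ z => by rw [Matrix.map_mul, frame_map, coframe_map, aeval_comp_X])
        (fun A _ _ z => Matrix.map_one _ (map_zero _) (map_one _))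
        (fun A _ _ z hz => hz.isGradedIso.inv_mul) hw
      graded := fun i => matrix_eq_of_mem_zeroLocus
        (M := fun A _ _ z => vertexMatrix A Sigma.fst i * frame z)
        (N := fun A _ _ z => frame z * vertexMatrix A (sumGrading D) i)
        (fun A _ _ z => by
          rw [Matrix.map_mul, frame_map, aeval_comp_X, ← AlgHom.mapMatrix_apply, vertexMatrix_map])
        (fun A _ _ z => by
          rw [Matrix.map_mul, frame_map, aeval_comp_X, ← AlgHom.mapMatrix_apply, vertexMatrix_map])
        (fun A _ _ z hz => hz.isGradedIso.graded i) hw }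
  evalMatrix_eq_zero r rel hrel := matrix_eq_of_mem_zeroLocus
    (M := fun A _ _ z => evalMatrix (summandCoords z r) rel) (N := fun A _ _ _ => 0)
    (fun A _ _ z => by rw [evalMatrix_map, summandCoords_map, aeval_comp_X])
    (fun A _ _ z => Matrix.map_zero _ (map_zero _))
    (fun A _ _ z hz => hz.evalMatrix_eq_zero r rel hrel) hw

end FramedIdeal

section Nilpotence

variable {Q : QuiverData} {s : ℕ} {d : Fin Q.n → ℕ} {D : Fin s → Fin Q.n → ℕ} {K : Type} [Field K]
  {Rels : Set (FreeAlgebra K (Fin Q.n ⊕ Fin Q.numArrows))}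

lemma exists_sumPoint_eq_framedSum {w : FramedIndex Q d D → K} (hw : IsFramed Rels w) :
    ∃ (P : _) (P' : _) (hP : IsGradedIso (sumGrading D) Sigma.fst P P')
      (y : ∀ r, GenV Q (D r) K Rels), (sumPoint hP y).1 = framedSum w ∧
        ∀ r, (y r).1 = summandCoords w r :=
  ⟨_, _, hw.isGradedIso, fun r => ⟨_, mem_repVar_iff.2 (hw.evalMatrix_eq_zero r)⟩,
    (framedSum_eq_coordsOfRep hw).symm, fun _ => rfl⟩

lemma exists_pow_aeval_framedSum_eq_zero [IsAlgClosed K] {f : MvPolynomial (Coords Q d) K}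
    {g : ∀ r, MvPolynomial (Coords Q (D r)) K} {C : ∀ r, Set (GenV Q (D r) K Rels)}
    (hg : ∀ r x, eval x.1 (g r) ≠ 0 → x ∈ C r)
    (hf : ∀ {P P'} (hP : IsGradedIso (sumGrading D) Sigma.fst P P'), ∀ y ∈ Set.univ.pi C,
      eval (sumPoint hP y).1 f = 0) :
    ∃ N, ∀ (A : Type) [CommRing A] [Algebra K A] (z : FramedIndex Q d D → A), IsFramed Rels z →
      (∀ r, IsUnit (aeval (summandCoords z r) (g r))) → aeval (framedSum z) f ^ N = 0 := by
  let X' : FramedIndex Q d D → MvPolynomial (FramedIndex Q d D) K := X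
  let G := aeval (framedSum X') f * ∏ r, aeval (summandCoords X' r) (g r)
  have aeval_G {A : Type} [CommRing A] [Algebra K A] (z : FramedIndex Q d D → A) : aeval z G =
      aeval (framedSum z) f * ∏ r, aeval (summandCoords z r) (g r) := by
    have framedSum_X' : aeval z ∘ framedSum X' = framedSum z := by
      rw [framedSum_map, aeval_comp_X]
    have summandCoords_X' (r) : aeval z ∘ summandCoords X' r = summandCoords z r := by
      rw [summandCoords_map, aeval_comp_X]
    simp only [G, map_mul, map_prod, ← AlgHom.comp_apply, comp_aeval, ← framedSum_X',
      ← summandCoords_X', Function.comp_def]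
  have mem_radical : G ∈ (framedIdeal Rels).radical := by
    rw [← vanishingIdeal_zeroLocus_eq_radical (K := K), mem_vanishingIdeal_iff]
    intro w hw
    obtain ⟨P, P', hP, y, sum_eq, summand_eq⟩ :=
      exists_sumPoint_eq_framedSum (isFramed_of_mem_zeroLocus hw)
    rw [aeval_G, ← sum_eq, mul_eq_zero, Finset.prod_eq_zero_iff]
    by_contra! ne_zero
    refine ne_zero.1 (hf hP y fun r _ => hg r _ ?_)
    rw [summand_eq]
    exact ne_zero.2 r (Finset.mem_univ r)
  obtain ⟨N, hN⟩ := mem_radical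
  refine ⟨N, fun A _ _ z hz units => ?_⟩
  have product_eq := hN A z hz
  rw [map_pow, aeval_G, mul_pow] at product_eq
  have unit := (IsUnit.prod_univ_iff.2 units).pow N
  exact unit.mul_left_eq_zero.1 product_eq

end Nilpotence

section LiftingFramedSums

variable {Q : QuiverData} {s : ℕ} {d : Fin Q.n → ℕ} {D : Fin s → Fin Q.n → ℕ} {K : Type} [Field K]
  {Rels : Set (FreeAlgebra K (Fin Q.n ⊕ Fin Q.numArrows))}
  {A : Type*} [CommRing A] [Algebra K A] {ε : A →ₐ[K] K}

lemma repOfCoords_map_eq_toRep {z : Coords Q d → A} {hz : ∀ rel ∈ Rels, evalMatrix z rel = 0}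
    {x : GenV Q d K Rels} (hx : ε ∘ z = x.1) (a : BoundAlgebra Q K Rels) :
    (repOfCoords z hz a).map ε = toRep x a := by
  obtain ⟨w, rfl⟩ := RingQuot.mkAlgHom_surjective K _ a
  rw [repOfCoords_ofFree, evalMatrix_map, hx, toRep_ofFree]

lemma conjRep_map_ofId_map {I L V : Type*} [Fintype I] [DecidableEq I] [Fintype L] [DecidableEq L]
    [DecidableEq V] {v : I → V} {w : L → V} {P : Matrix L I K} {P' : Matrix I L K}
    (hP : IsGradedIso v w P P') {Λ : Type*} [Ring Λ] [Algebra K Λ] {ρ : Λ →ₐ[K] Matrix I I A}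
    {ρ₀ : Λ →ₐ[K] Matrix I I K} (hρ : ∀ a, (ρ a).map ε = ρ₀ a) (a : Λ) :
    (conjRep (hP.map (Algebra.ofId K A)) ρ a).map ε = conjRep hP ρ₀ a := by
  have section_ε : ε ∘ Algebra.ofId K A = id := funext ε.commutes
  rw [conjRep_apply, Matrix.map_mul, Matrix.map_mul, Matrix.map_map, Matrix.map_map, section_ε,
    Matrix.map_id, Matrix.map_id, hρ, conjRep_apply]

lemma exists_isFramed_framedSum_eq [IsArtinianRing A] (nilpotent : IsNilpotent (RingHom.ker ε))
    {P : Matrix (Σ i, Fin (d i)) (Σ r, Σ i, Fin (D r i)) K} {P' : _}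
    (hP : IsGradedIso (sumGrading D) Sigma.fst P P') {y : ∀ r, GenV Q (D r) K Rels}
    (hext : ∀ r u, r ≠ u → ExtVanishes vertex (toRep (y r)) (toRep (y u))) {Z : Coords Q d → A}
    (hZ : ∀ rel ∈ Rels, evalMatrix Z rel = 0) (hε : ε ∘ Z = (sumPoint hP y).1) :
    ∃ z : FramedIndex Q d D → A, IsFramed Rels z ∧ framedSum z = Z ∧
      ∀ r, ε ∘ summandCoords z r = (y r).1 := by
  have hPA := hP.symm.map (Algebra.ofId K A)
  have graded := isGraded_conjRep hPA (isGraded_repOfCoords Z hZ)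
  have reduction (a) : (conjRep hPA (repOfCoords Z hZ) a).map ε =
      blockSum (fun r => toRep (y r)) a := by
    rw [conjRep_map_ofId_map hP.symm (repOfCoords_map_eq_toRep hε), toRep_sumPoint,
      conjRep_symm_conjRep]
  obtain ⟨R, R', hR, σ, σ_eq, σ_graded, σ_ε⟩ :=
    exists_conjRep_eq_blockSum hext nilpotent (v := fun r => Sigma.fst) graded reduction
  rw [conjRep_conjRep] at σ_eq
  let hF := (hR.trans hPA).symm
  let z : FramedIndex Q d D → A := Sum.elim (fun k => (P.map (Algebra.ofId K A) * R') k.1 k.2)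
    (Sum.elim (fun k => (R * P'.map (Algebra.ofId K A)) k.1 k.2) fun k => coordsOfRep (σ k.1) k.2)
  have hz : IsFramed Rels z :=
    ⟨hF, fun r rel hrel => evalMatrix_coordsOfRep_eq_zero (σ_graded r) hrel⟩
  have repOfCoords_summand (r) :
      repOfCoords (summandCoords z r) (hz.evalMatrix_eq_zero r) = σ r :=
    repOfCoords_coordsOfRep (σ_graded r)
  refine ⟨z, hz, ?_, fun r => ?_⟩
  · rw [framedSum_eq_coordsOfRep hz]
    simp_rw [repOfCoords_summand]
    rw [← σ_eq]
    exact (congrArg coordsOfRep (conjRep_symm_conjRep (hR.trans hPA) _)).trans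
      (coordsOfRep_repOfCoords Z hZ)
  · exact funext fun c => (congrFun₂ (σ_ε r (arrow c.1)) _ _).trans
      (congrFun (coordsOfRep_repOfCoords (y r).1 _) c)

end LiftingFramedSums

/-! ### Sufficiency of vanishing extensions -/

section Jets

variable {ι K : Type} [Field K] {V : Set (ι → K)}

lemma isPrime_vanishingIdeal (hV : @IsIrreducible _ (zariskiTopology ι K) V) :
    (vanishingIdeal K V).IsPrime := by
  let := zariskiTopology ι K
  refine Ideal.isPrime_iff.2 ⟨fun h => ?_, fun {p q} hpq => ?_⟩
  · obtain ⟨x, hx⟩ := hV.nonempty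
    exact one_ne_zero ((map_one (aeval x)).symm.trans
      (mem_vanishingIdeal_iff.1 ((Ideal.eq_top_iff_one _).1 h) x hx))
  · by_contra! hpq'
    simp only [mem_vanishingIdeal_iff, not_forall, aeval_eq_eval] at hpq hpq'
    obtain ⟨⟨x, hx, hpx⟩, ⟨y, hy, hqy⟩⟩ := hpq'
    obtain ⟨w, hw, hpw, hqw⟩ := hV.isPreirreducible {x | eval x p ≠ 0} {x | eval x q ≠ 0}
      (.basic _ ⟨p, rfl⟩) (.basic _ ⟨q, rfl⟩) ⟨x, hx, hpx⟩ ⟨y, hy, hqy⟩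
    exact mul_ne_zero hpw hqw ((map_mul (eval w) p q).symm.trans (hpq w hw))

lemma mem_vanishingIdeal_of_forall_artinian [Finite ι]
    (hV : @IsIrreducible _ (zariskiTopology ι K) V) {x : ι → K} (hx : x ∈ V) {f : MvPolynomial ι K}
    (h : ∀ (A : Type) [CommRing A] [Algebra K A] [IsArtinianRing A] (ε : A →ₐ[K] K) (Z : ι → A),
      IsNilpotent (RingHom.ker ε) → ε ∘ Z = x → (∀ p ∈ vanishingIdeal K V, aeval Z p = 0) →
        aeval Z f = 0) :
    f ∈ vanishingIdeal K V := by
  have := isPrime_vanishingIdeal hV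
  have le_ker : vanishingIdeal K V ≤ RingHom.ker (aeval (R := K) x) :=
    fun p hp => mem_vanishingIdeal_iff.1 hp x hx
  refine mem_of_forall_artinian_quotient le_ker fun I hVI _ hI nilpotent => ?_
  have aeval_mk (p : MvPolynomial ι K) :
      aeval (fun c => Ideal.Quotient.mkₐ K I (X c)) p = Ideal.Quotient.mkₐ K I p :=
    DFunLike.congr_fun (aeval_unique (Ideal.Quotient.mkₐ K I)).symm p
  refine Ideal.Quotient.eq_zero_iff_mem.1 ((aeval_mk f).symm.trans
    (h _ _ _ nilpotent (funext fun c => ?_) fun p hp => ?_))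
  · exact aeval_X x c
  · exact (aeval_mk p).trans (Ideal.Quotient.eq_zero_iff_mem.2 (hVI hp))

end Jets

section Components

variable {Q : QuiverData} {d : Fin Q.n → ℕ} {K : Type} [Field K]
  {Rels : Set (FreeAlgebra K (Fin Q.n ⊕ Fin Q.numArrows))}

lemma evalMatrix_eq_zero_of_forall_vanishingIdeal {A : Type*} [CommRing A] [Algebra K A]
    {V : Set (GenV Q d K Rels)} {Z : Coords Q d → A}
    (hZ : ∀ p ∈ vanishingIdeal K (Subtype.val '' V), aeval Z p = 0) :
    ∀ rel ∈ Rels, evalMatrix Z rel = 0 := by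
  intro rel hrel
  ext i j
  have entry_mem : evalMatrix (X (R := K)) rel i j ∈ vanishingIdeal K (Subtype.val '' V) := by
    rintro _ ⟨x, -, rfl⟩
    have := congrFun₂ (evalMatrix_map (aeval (R := K) x.1) X rel) i j
    rw [aeval_comp_X, mem_repVar_iff.1 x.2 rel hrel] at this
    exact this
  have := congrFun₂ (evalMatrix_map (aeval (R := K) Z) X rel) i j
  rw [aeval_comp_X] at this
  exact this.symm.trans (hZ _ entry_mem)

lemma exists_eval_ne_zero_of_mem_irreducibleComponents {C : Set (GenV Q d K Rels)}
    (hC : C ∈ irreducibleComponents (GenV Q d K Rels)) :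
    ∃ g : MvPolynomial (Coords Q d) K, (∃ x ∈ C, eval x.1 g ≠ 0) ∧
      ∀ x : GenV Q d K Rels, eval x.1 g ≠ 0 → x ∈ C := by
  have := noetherianSpace_genV (Q := Q) (d := d) (K := K) (Rels := Rels)
  obtain ⟨_, ⟨O, hO, rfl⟩, ⟨x, hx⟩, hOC⟩ :=
    TopologicalSpace.NoetherianSpace.exists_isOpen_nonempty_subset_irreducibleComponent _ hC
  obtain ⟨g, hgx, hg⟩ := exists_eval_ne_zero_of_isOpen hO hx
  exact ⟨g, ⟨x, hOC hx, hgx⟩, fun y hy => hOC (hg y.1 hy)⟩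

end Components

lemma isUnit_of_isNilpotent_ker {K A : Type*} [Field K] [CommRing A] [Algebra K A] {ε : A →ₐ[K] K}
    (nilpotent : IsNilpotent (RingHom.ker ε)) {a : A} (ha : ε a ≠ 0) : IsUnit a := by
  obtain ⟨N, hN⟩ := nilpotent
  have sub_mem : a - algebraMap K A (ε a) ∈ RingHom.ker ε := by
    rw [RingHom.mem_ker, map_sub, ε.commutes, Algebra.algebraMap_self, RingHom.id_apply, sub_self]
  have sub_nilpotent : IsNilpotent (a - algebraMap K A (ε a)) :=
    ⟨N, Ideal.mem_bot.1 (hN.le (Ideal.pow_mem_pow sub_mem N))⟩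
  rw [← sub_add_cancel a (algebraMap K A (ε a))]
  exact sub_nilpotent.isUnit_add_right_of_commute ((IsUnit.mk0 _ ha).map _) (.all _ _)

section GenericPoint

lemma exists_mem_forall_mem_of_isIrreducible {X ι : Type*} [TopologicalSpace X] [Finite ι]
    {S : Set X} (hS : IsIrreducible S) {U : ι → Set X} (hU : ∀ i, IsOpen (U i))
    (h : ∀ i, (S ∩ U i).Nonempty) : ∃ x ∈ S, ∀ i, x ∈ U i := by
  have range_finite := Set.finite_range U
  obtain ⟨x, hxS, hx⟩ := isIrreducible_iff_sInter.1 hS range_finite.toFinset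
    (by simpa using hU) (by simpa using h)
  exact ⟨x, hxS, fun i => hx _ (by simp)⟩

variable {Q : QuiverData} {s : ℕ} {D : Fin s → Fin Q.n → ℕ} {K : Type} [Field K]
  {Rels : Set (FreeAlgebra K (Fin Q.n ⊕ Fin Q.numArrows))}

lemma exists_mem_pi_extVanishes {C : ∀ r, Set (GenV Q (D r) K Rels)}
    (hC : ∀ r, IsIrreducible (C r)) {g : ∀ r, MvPolynomial (Coords Q (D r)) K}
    (hg : ∀ r, ∃ x ∈ C r, eval x.1 (g r) ≠ 0)
    (hext : ∀ r u, r ≠ u → ∃ x ∈ C r, ∃ y ∈ C u, ExtVanishes vertex (toRep x) (toRep y)) :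
    ∃ y ∈ Set.univ.pi C, (∀ r, eval (y r).1 (g r) ≠ 0) ∧
      ∀ r u, r ≠ u → ExtVanishes vertex (toRep (y r)) (toRep (y u)) := by
  let := crossTopology fun r => GenV Q (D r) K Rels
  have isOpen_ne_zero (r) : IsOpen {y : ∀ r, GenV Q (D r) K Rels | eval (y r).1 (g r) ≠ 0} := by
    intro y t
    rcases eq_or_ne r t with rfl | hrt
    · simp only [Set.preimage_ofPred_eq, Function.update_self]
      exact ⟨_, .basic _ ⟨g r, rfl⟩, rfl⟩
    · simp only [Set.preimage_ofPred_eq, Function.update_of_ne hrt]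
      exact isOpen_const
  let U : Fin s ⊕ {p : Fin s × Fin s // p.1 ≠ p.2} → Set (∀ r, GenV Q (D r) K Rels) :=
    Sum.elim (fun r => {y | eval (y r).1 (g r) ≠ 0})
      fun p => {y | ExtVanishes vertex (toRep (y p.1.1)) (toRep (y p.1.2))}
  have isOpen_U (i) : IsOpen (U i) :=
    i.rec isOpen_ne_zero fun p => isOpen_crossTopology_extVanishes p.1.1 p.1.2
  have irreducible_pi := isIrreducible_crossTopology hC
  have meets_U (i) : (Set.univ.pi C ∩ U i).Nonempty := by
    obtain ⟨y, hy⟩ := irreducible_pi.nonempty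
    rcases i with r | ⟨⟨r, u⟩, hru⟩
    · obtain ⟨x, hx, hgx⟩ := hg r
      refine ⟨Function.update y r x, (Set.update_mem_pi_iff_of_mem hy).2 fun _ => hx, ?_⟩
      simpa [U] using hgx
    · obtain ⟨x, hx, x', hx', hxx'⟩ := hext r u hru
      refine ⟨Function.update (Function.update y r x) u x', (Set.update_mem_pi_iff_of_mem
        ((Set.update_mem_pi_iff_of_mem hy).2 fun _ => hx)).2 fun _ => hx', ?_⟩
      simpa [U, Function.update_of_ne hru] using hxx'
  obtain ⟨y, hyC, hy⟩ := exists_mem_forall_mem_of_isIrreducible irreducible_pi isOpen_U meets_U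
  exact ⟨y, hyC, fun r => hy (.inl r), fun r u hru => hy (.inr ⟨(r, u), hru⟩)⟩

end GenericPoint

section GenericSums

variable {Q : QuiverData} {s : ℕ} {d : Fin Q.n → ℕ} {D : Fin s → Fin Q.n → ℕ} {K : Type} [Field K]
  [IsAlgClosed K] {Rels : Set (FreeAlgebra K (Fin Q.n ⊕ Fin Q.numArrows))}

lemma mem_vanishingIdeal_of_forall_sumPoint {C : ∀ r, Set (GenV Q (D r) K Rels)}
    {g : ∀ r, MvPolynomial (Coords Q (D r)) K} (hg : ∀ r x, eval x.1 (g r) ≠ 0 → x ∈ C r)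
    {y : ∀ r, GenV Q (D r) K Rels} (hgy : ∀ r, eval (y r).1 (g r) ≠ 0)
    (hext : ∀ r u, r ≠ u → ExtVanishes vertex (toRep (y r)) (toRep (y u)))
    {P P'} (hP : IsGradedIso (sumGrading D) Sigma.fst P P')
    {V : Set (GenV Q d K Rels)} (hV : IsIrreducible V) (hyV : sumPoint hP y ∈ V)
    {f : MvPolynomial (Coords Q d) K}
    (hf : ∀ {P P'} (hP : IsGradedIso (sumGrading D) Sigma.fst P P'), ∀ y ∈ Set.univ.pi C,
      eval (sumPoint hP y).1 f = 0) :
    f ∈ vanishingIdeal K (Subtype.val '' V) := by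
  have hV' := hV.image Subtype.val continuous_subtype_val.continuousOn
  obtain ⟨N, hN⟩ := exists_pow_aeval_framedSum_eq_zero hg hf
  refine (isPrime_vanishingIdeal hV').mem_of_pow_mem N
    (mem_vanishingIdeal_of_forall_artinian hV' ⟨_, hyV, rfl⟩ fun A _ _ _ ε Z nilpotent hZ hZV => ?_)
  obtain ⟨z, hz, rfl, hzy⟩ := exists_isFramed_framedSum_eq nilpotent hP hext
    (evalMatrix_eq_zero_of_forall_vanishingIdeal hZV) hZ
  rw [map_pow]
  refine hN A z hz fun r => isUnit_of_isNilpotent_ker nilpotent ?_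
  have aeval_summand : aeval (ε ∘ summandCoords z r) (g r) = ε (aeval (summandCoords z r) (g r)) :=
    (comp_aeval_apply _ ε (g r)).symm
  rw [← aeval_summand, hzy]
  exact hgy r

theorem closure_directSumSet_mem_irreducibleComponents (hsum : ∀ i, d i = ∑ r, D r i)
    {C : ∀ r, Set (GenV Q (D r) K Rels)} (hC : ∀ r, C r ∈ irreducibleComponents _)
    (hext : ∀ r u, r ≠ u → ∃ x ∈ C r, ∃ y ∈ C u, ExtVanishes vertex (toRep x) (toRep y)) :
    closure {x : GenV Q d K Rels | x.1 ∈ DirectSumSet Q d K s D (fun r => Subtype.val '' C r)} ∈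
      irreducibleComponents _ := by
  have irreducible_C (r) : IsIrreducible (C r) := (hC r).1
  choose g hg hgC using fun r => exists_eval_ne_zero_of_mem_irreducibleComponents (hC r)
  obtain ⟨y, hyC, hgy, hy⟩ := exists_mem_pi_extVanishes irreducible_C hg hext
  obtain ⟨P, P', hP⟩ := exists_isGradedIso_sigma (K := K) hsum
  set S := {x : GenV Q d K Rels | x.1 ∈ DirectSumSet Q d K s D (fun r => Subtype.val '' C r)}
  have sumPoint_mem {P P'} (hP : IsGradedIso (sumGrading D) Sigma.fst P P') {y}
      (hy : y ∈ Set.univ.pi C) : sumPoint hP y ∈ closure S :=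
    subset_closure (mem_directSumSet_iff_exists_sumPoint.2 ⟨P, P', hP, y, hy, rfl⟩)
  refine ⟨(isIrreducible_directSumSet hsum irreducible_C).closure, fun V hV hSV v hv => ?_⟩
  by_contra hvS
  obtain ⟨O, hO, hOS⟩ := (isClosed_closure (s := S)).isOpen_compl
  obtain ⟨f, hfv, hf⟩ := exists_eval_ne_zero_of_isOpen hO (hOS.ge hvS)
  refine hfv (mem_vanishingIdeal_iff.1 (mem_vanishingIdeal_of_forall_sumPoint hgC hgy hy hP hV
    (hSV (sumPoint_mem hP hyC)) fun hP' y' hy' => ?_) v.1 ⟨v, hv, rfl⟩)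
  by_contra hne
  exact hOS.le (hf _ hne) (sumPoint_mem hP' hy')

end GenericSums

end RepVariety

open QuiverData in
/-- Crawley-Boevey–Schröer. Given a decomposition `d = ∑ d^{(r)}` and
irreducible components `C_r` of `Rep_{d^{(r)}}(Λ)`, the closure of `C₁ ⊕ ⋯ ⊕ C_s` is an
irreducible component of `Rep_d(Λ)` if and only if `ext(C_i, C_j) = 0` for all `i ≠ j`;
here `ext(C_i, C_j)` is the generic (equivalently minimal) value of
`dim Ext¹(M_x, M_y)` on `C_i × C_j`, so its vanishing means that some pair
`(x, y) ∈ C_i × C_j` satisfies `Ext¹(M_x, M_y) = 0`. -/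
theorem statement_4 (K : Type) [Field K] [IsAlgClosed K]
    (Q : QuiverData) (d : Fin Q.n → ℕ)
    (Rels : Set (FreeAlgebra K (Fin Q.n ⊕ Fin Q.numArrows)))
    (s : ℕ) (D : Fin s → Fin Q.n → ℕ) (hsum : ∀ i, d i = ∑ r, D r i)
    (Cs : ∀ r : Fin s, Set (GenV Q (D r) K Rels))
    (hCs : ∀ r, Cs r ∈ irreducibleComponents (GenV Q (D r) K Rels)) :
    closure {x : GenV Q d K Rels |
        x.1 ∈ DirectSumSet Q d K s D (fun r => Subtype.val '' Cs r)}
      ∈ irreducibleComponents (GenV Q d K Rels)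
    ↔ ∀ r u, r ≠ u → ∃ x ∈ Cs r, ∃ y ∈ Cs u,
        Ext1Zero Q K (fun dv => RepVar Q dv K Rels) (D r) (D u) x.1 y.1 := by
  constructor
  · intro h r u hru
    obtain ⟨x, hx, y, hy, hxy⟩ :=
      RepVariety.exists_extVanishes_of_closure_mem_irreducibleComponents h hru
    exact ⟨x, hx, y, hy, RepVariety.ext1Zero_of_extVanishes hxy⟩
  · intro h
    refine RepVariety.closure_directSumSet_mem_irreducibleComponents hsum hCs fun r u hru => ?_
    obtain ⟨x, hx, y, hy, hxy⟩ := h r u hru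
    exact ⟨x, hx, y, hy, RepVariety.extVanishes_of_ext1Zero hxy⟩
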